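/- Let F be a field other than the two-element field (i.e. F contains an element x with x ≠ 0 and x ≠ 1), let V be a finite-dimensional F-vector space and V₀ ≤ V a subspace. Let A(V,V₀) be the subgroup of GL(V) consisting of automorphisms g with g(v) = v for all v ∈ V₀, and let A(V ⊕ F, V₀) be the analogous subgroup of GL(V ⊕ F), where V₀ is viewed inside V ⊕ F via the first summand. Then the homomorphism A(V,V₀) → A(V ⊕ F, V₀) extending an automorphism by the identity on the added F-summand induces an isomorphism on H_d(−; ℤ) for all d ≤ dim V − dim V₀ − 1 and a surjection for d = dim V − dim V₀. -/

import Mathlib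

/-! # Group homology via the inhomogeneous bar complex (trivial coefficients) -/

namespace GroupHomologyBar

variable (G : Type) [Group G] (A : Type) [AddCommGroup A]

/-- Inhomogeneous `n`-chains of `G` with coefficients in `A`. -/
abbrev chains (n : ℕ) : Type := (Fin n → G) →₀ A

/-- The differential of the inhomogeneous bar complex with trivial `G`-action on the
coefficients, sending `[g₁|…|g_{n+1}] ⊗ a` to
`[g₂|…|g_{n+1}] ⊗ a + ∑ⱼ (-1)^{j+1} [g₁|…|gⱼg_{j+1}|…|g_{n+1}] ⊗ a`
(the last summand of the sum being `(-1)^{n+1} [g₁|…|g_n] ⊗ a`). -/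
noncomputable def d (n : ℕ) : chains G A (n + 1) →ₗ[ℤ] chains G A n :=
  Finsupp.lsum ℤ fun g =>
    (Finsupp.lsingle (Fin.tail g) : A →ₗ[ℤ] chains G A n)
      + ∑ j : Fin (n + 1),
          ((-1 : ℤ) ^ ((j : ℕ) + 1)) • Finsupp.lsingle (Fin.contractNth j (· * ·) g)

/-- The `n`-cycles. -/
noncomputable def cycles : (n : ℕ) → Submodule ℤ (chains G A n)
  | 0 => ⊤
  | (n + 1) => LinearMap.ker (d G A n)

/-- The `n`-boundaries, viewed as a submodule of the `n`-cycles. -/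
noncomputable def boundaries (n : ℕ) : Submodule ℤ (cycles G A n) :=
  Submodule.comap (cycles G A n).subtype (LinearMap.range (d G A n))

/-- The group homology `H_n(G; A)` of `G` with trivial coefficients in `A`. -/
abbrev Homology (n : ℕ) : Type := cycles G A n ⧸ boundaries G A n

variable {G}
variable {G' : Type} [Group G']

/-- The map on chains induced by a group homomorphism. -/
noncomputable def chainsMap (φ : G →* G') (n : ℕ) : chains G A n →ₗ[ℤ] chains G' A n :=
  Finsupp.lmapDomain A ℤ fun v => φ ∘ v

lemma chainsMap_single (φ : G →* G') {n : ℕ} (v : Fin n → G) (a : A) :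
    chainsMap A φ n (Finsupp.single v a) = Finsupp.single (φ ∘ v) a := by
  simp [chainsMap, Finsupp.mapDomain_single]

lemma d_single {n : ℕ} (g : Fin (n + 1) → G) (a : A) :
    d G A n (Finsupp.single g a)
      = Finsupp.single (Fin.tail g) a
        + ∑ j : Fin (n + 1),
            ((-1 : ℤ) ^ ((j : ℕ) + 1)) • Finsupp.single (Fin.contractNth j (· * ·) g) a := by
  simp [d, Finsupp.lsum_single]

lemma d_chainsMap (φ : G →* G') (n : ℕ) :
    (d G' A n).comp (chainsMap A φ (n + 1)) = (chainsMap A φ n).comp (d G A n) := by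
  apply Finsupp.lhom_ext
  intro g a
  have hc : ∀ j : Fin (n + 1),
      φ ∘ Fin.contractNth j (· * ·) g = Fin.contractNth j (· * ·) (φ ∘ g) := by
    intro j
    funext k
    simp only [Function.comp_apply, Fin.contractNth]
    split_ifs <;> simp
  simp only [LinearMap.comp_apply, chainsMap_single, d_single, map_add, map_sum, map_smul,
    chainsMap_single, Fin.comp_tail, hc]

lemma chainsMap_mem_cycles (φ : G →* G') (n : ℕ) :
    ∀ x ∈ cycles G A n, chainsMap A φ n x ∈ cycles G' A n := by
  intro x hx
  cases n with
  | zero => trivial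
  | succ n =>
    simp only [cycles, LinearMap.mem_ker] at hx ⊢
    have := congrArg (fun L : chains G A (n + 1) →ₗ[ℤ] chains G' A n => L x) (d_chainsMap A φ n)
    simp only [LinearMap.comp_apply] at this
    rw [this, hx, map_zero]

/-- The map on cycles induced by a group homomorphism. -/
noncomputable def cyclesMap (φ : G →* G') (n : ℕ) : cycles G A n →ₗ[ℤ] cycles G' A n :=
  (chainsMap A φ n).restrict (chainsMap_mem_cycles A φ n)

/-- The map `H_n(G; A) → H_n(G'; A)` on group homology induced by a group
homomorphism `φ : G →* G'`. -/
noncomputable def inducedMap (φ : G →* G') (n : ℕ) :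
    Homology G A n →ₗ[ℤ] Homology G' A n :=
  Submodule.mapQ _ _ (cyclesMap A φ n) (by
    rintro ⟨x, hx⟩ hmem
    simp only [boundaries, Submodule.mem_comap, Submodule.subtype_apply,
      LinearMap.mem_range] at hmem ⊢
    obtain ⟨y, hy⟩ := hmem
    refine ⟨chainsMap A φ (n + 1) y, ?_⟩
    have := congrArg (fun L : chains G A (n + 1) →ₗ[ℤ] chains G' A n => L y) (d_chainsMap A φ n)
    simp only [LinearMap.comp_apply] at this
    rw [this, hy]
    rfl)

end GroupHomologyBar

/-- The subgroup `A(V, V₀) ≤ GL(V)` of automorphisms fixing the subspace `V₀` pointwise. -/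
def fixSubgroup (F V : Type) [Field F] [AddCommGroup V] [Module F V] (V₀ : Submodule F V) :
    Subgroup (V ≃ₗ[F] V) where
  carrier := {g | ∀ v ∈ V₀, g v = v}
  one_mem' := fun _ _ => rfl
  mul_mem' := fun {a b} ha hb v hv => by
    rw [show (a * b) v = a (b v) from rfl, hb v hv, ha v hv]
  inv_mem' := fun {a} ha v hv => by
    rw [show (a⁻¹ : V ≃ₗ[F] V) v = a.symm v from rfl]
    conv_lhs => rw [← ha v hv]
    exact a.symm_apply_apply v

/-- The subgroup `A(V ⊕ F, V₀) ≤ GL(V ⊕ F)` of automorphisms fixing pointwise the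
subspace `V₀`, viewed inside `V ⊕ F` via the first summand. -/
def fixSubgroupProd (F V : Type) [Field F] [AddCommGroup V] [Module F V] (V₀ : Submodule F V) :
    Subgroup ((V × F) ≃ₗ[F] (V × F)) where
  carrier := {g | ∀ v ∈ V₀, g (v, 0) = (v, 0)}
  one_mem' := fun _ _ => rfl
  mul_mem' := fun {a b} ha hb v hv => by
    rw [show (a * b) (v, (0 : F)) = a (b (v, 0)) from rfl, hb v hv, ha v hv]
  inv_mem' := fun {a} ha v hv => by
    rw [show (a⁻¹ : (V × F) ≃ₗ[F] (V × F)) (v, (0 : F)) = a.symm (v, 0) from rfl]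
    conv_lhs => rw [← ha v hv]
    exact a.symm_apply_apply (v, 0)

/-- The stabilization homomorphism `A(V, V₀) → A(V ⊕ F, V₀)` extending an automorphism
by the identity on the added summand `F`. -/
def fixStab (F V : Type) [Field F] [AddCommGroup V] [Module F V] (V₀ : Submodule F V) :
    fixSubgroup F V V₀ →* fixSubgroupProd F V V₀ where
  toFun g := ⟨g.1.prodCongr (LinearEquiv.refl F F), fun v hv => by
    rw [LinearEquiv.prodCongr_apply]
    simp [g.2 v hv]⟩
  map_one' := Subtype.ext (LinearEquiv.ext fun x => rfl)
  map_mul' g h := Subtype.ext (LinearEquiv.ext fun x => rfl)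


namespace FSH

open FreeAbelianGroup (of)

/-- Free abelian group on a type. -/
abbrev Z (T : Type) : Type := FreeAbelianGroup T

/-- Linear extension. -/
def lin {T M : Type} [AddCommGroup M] (f : T → M) : Z T →+ M := FreeAbelianGroup.lift f

@[simp] lemma lin_of {T M : Type} [AddCommGroup M] (f : T → M) (x : T) : lin f (of x) = f x :=
  FreeAbelianGroup.lift_apply_of f x

lemma hext {T M : Type} [AddCommGroup M] {f g : Z T →+ M} (h : ∀ x, f (of x) = g (of x)) :
    f = g := FreeAbelianGroup.lift_ext f g h

lemma heq {T M : Type} [AddCommGroup M] (f g : Z T →+ M) (h : ∀ x, f (of x) = g (of x)) (z : Z T) :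
    f z = g z := by rw [hext h]

lemma Z.ind {T : Type} {motive : Z T → Prop} (zero : motive 0) (of : ∀ x, motive (of x))
    (sub : ∀ x y, motive x → motive y → motive (x - y)) (z : Z T) : motive z := by
  induction z using FreeAbelianGroup.induction_on with
  | zero => exact zero
  | of x => exact of x
  | neg x hx => simpa using sub 0 _ zero hx
  | add x y hx hy => simpa using sub x (0 - y) hx (sub 0 _ zero hy)

/-- Push-forward. -/
def push {T S : Type} (f : T → S) : Z T →+ Z S := lin fun x => of (f x)

@[simp] lemma push_of {T S : Type} (f : T → S) (x : T) : push f (of x) = of (f x) := lin_of _ _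

lemma push_push {T S R : Type} (f : T → S) (g : S → R) (z : Z T) :
    push g (push f z) = push (fun x => g (f x)) z := by
  refine heq ((push g).comp (push f)) _ (fun x => ?_) z
  simp

lemma push_id {T : Type} (f : T → T) (hf : ∀ x, f x = x) (z : Z T) : push f z = z := by
  refine heq (push f) (AddMonoidHom.id _) (fun x => ?_) z
  simp [hf]

/-- Tuples. -/
def Tup (E : Type) : ℕ → Type
  | 0 => PUnit
  | n + 1 => E × Tup E n

def Tup.cons {E : Type} {n : ℕ} (e : E) (x : Tup E n) : Tup E (n + 1) := (e, x)
def Tup.hd {E : Type} {n : ℕ} (x : Tup E (n + 1)) : E := x.1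
def Tup.tl {E : Type} {n : ℕ} (x : Tup E (n + 1)) : Tup E n := x.2

def Tup.nil {E : Type} : Tup E 0 := PUnit.unit

lemma Tup.eq_nil {E : Type} (x : Tup E 0) : x = Tup.nil := rfl

lemma Tup.eq_cons {E : Type} {n : ℕ} (x : Tup E (n + 1)) : x = Tup.cons x.hd x.tl := rfl

@[simp] lemma Tup.hd_cons {E : Type} {n : ℕ} (e : E) (x : Tup E n) : (Tup.cons e x).hd = e := rfl
@[simp] lemma Tup.tl_cons {E : Type} {n : ℕ} (e : E) (x : Tup E n) : (Tup.cons e x).tl = x := rfl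

lemma Tup.ind {E : Type} {motive : ∀ n, Tup E n → Prop} (nil : motive 0 Tup.nil)
    (cons : ∀ n e x, motive n x → motive (n + 1) (Tup.cons e x)) : ∀ n x, motive n x
  | 0, _ => nil
  | n + 1, x => cons n x.hd x.tl (Tup.ind nil cons n x.tl)

def Tup.map {E E' : Type} (f : E → E') : ∀ {n : ℕ}, Tup E n → Tup E' n
  | 0, _ => Tup.nil
  | _ + 1, x => Tup.cons (f x.hd) (Tup.map f x.tl)

@[simp] lemma Tup.map_nil {E E' : Type} (f : E → E') (x : Tup E 0) :
    Tup.map f x = Tup.nil := rfl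
@[simp] lemma Tup.map_cons {E E' : Type} (f : E → E') {n : ℕ} (e : E) (x : Tup E n) :
    Tup.map f (Tup.cons e x) = Tup.cons (f e) (Tup.map f x) := rfl

lemma Tup.map_map {E E' E'' : Type} (f : E → E') (g : E' → E'') (n : ℕ) (x : Tup E n) :
    Tup.map g (Tup.map f x) = Tup.map (fun e => g (f e)) x := by
  induction n, x using Tup.ind with
  | nil => rfl
  | cons n e x ih => simp [ih]

lemma Tup.map_id {E : Type} (f : E → E) (hf : ∀ e, f e = e) (n : ℕ) (x : Tup E n) :
    Tup.map f x = x := by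
  induction n, x using Tup.ind with
  | nil => rfl
  | cons n e x ih => simp [ih, hf]

/-- Membership. -/
def Tup.All {E : Type} (p : E → Prop) : ∀ {n : ℕ}, Tup E n → Prop
  | 0, _ => True
  | _ + 1, x => p x.hd ∧ Tup.All p x.tl

@[simp] lemma Tup.all_nil {E : Type} (p : E → Prop) (x : Tup E 0) : Tup.All p x := trivial
@[simp] lemma Tup.all_cons {E : Type} (p : E → Prop) {n : ℕ} (e : E) (x : Tup E n) :
    Tup.All p (Tup.cons e x) ↔ p e ∧ Tup.All p x := Iff.rfl

lemma Tup.All.imp {E : Type} {p q : E → Prop} (h : ∀ e, p e → q e) {n : ℕ} {x : Tup E n}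
    (hx : Tup.All p x) : Tup.All q x := by
  induction n, x using Tup.ind with
  | nil => trivial
  | cons n e x ih => exact ⟨h _ hx.1, ih hx.2⟩

lemma Tup.map_congr {E E' : Type} (f g : E → E') (n : ℕ) (x : Tup E n)
    (h : Tup.All (fun e => f e = g e) x) : Tup.map f x = Tup.map g x := by
  induction n, x using Tup.ind with
  | nil => rfl
  | cons n e x ih => exact congrArg₂ Tup.cons h.1 (ih h.2)

instance {S E : Type} [SMul S E] {n : ℕ} : SMul S (Tup E n) := ⟨fun s x => Tup.map (s • ·) x⟩

@[simp] lemma Tup.smul_cons {S E : Type} [SMul S E] {n : ℕ} (s : S) (e : E) (x : Tup E n) :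
    s • Tup.cons e x = Tup.cons (s • e) (s • x) := rfl
@[simp] lemma Tup.smul_nil {S E : Type} [SMul S E] (s : S) (x : Tup E 0) :
    s • x = Tup.nil := rfl
lemma Tup.smul_def {S E : Type} [SMul S E] {n : ℕ} (s : S) (x : Tup E n) :
    s • x = Tup.map (s • ·) x := rfl

instance {S E : Type} [Monoid S] [MulAction S E] {n : ℕ} : MulAction S (Tup E n) where
  one_smul x := Tup.map_id _ (one_smul S) n x
  mul_smul s t x := by
    simp only [Tup.smul_def, Tup.map_map]
    congr 1; funext e; exact mul_smul s t e

lemma Tup.map_smul {S S' E E' : Type} [SMul S E] [SMul S' E'] (f : E → E') (s : S) (s' : S')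
    (h : ∀ e, f (s • e) = s' • f e) (n : ℕ) (x : Tup E n) :
    Tup.map f (s • x) = s' • Tup.map f x := by
  simp only [Tup.smul_def, Tup.map_map, h]

/-- Cons with a fixed head. -/
abbrev cn {E : Type} {n : ℕ} (e : E) : Z (Tup E n) →+ Z (Tup E (n + 1)) := push (Tup.cons e)

/-- Simplicial boundary on a tuple (augmented). -/
def bdt {E : Type} : ∀ n : ℕ, Tup E (n + 1) → Z (Tup E n)
  | 0, _ => of Tup.nil
  | n + 1, x => of x.tl - cn x.hd (bdt n x.tl)

def bd {E : Type} (n : ℕ) : Z (Tup E (n + 1)) →+ Z (Tup E n) := lin (bdt n)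

@[simp] lemma bd_zero {E : Type} (x : Tup E 1) : bd 0 (of x) = of Tup.nil := by simp [bd, bdt]
@[simp] lemma bd_succ {E : Type} (n : ℕ) (e : E) (x : Tup E (n + 1)) :
    bd (n + 1) (of (Tup.cons e x)) = of x - cn e (bd n (of x)) := by simp [bd, bdt]

lemma bd_cn_zero {E : Type} (e : E) (z : Z (Tup E 0)) : bd 0 (cn e z) = z := by
  refine heq ((bd 0).comp (cn e)) (AddMonoidHom.id _) (fun x => ?_) z
  simp [Tup.eq_nil x]

lemma bd_cn {E : Type} (n : ℕ) (e : E) (z : Z (Tup E (n + 1))) :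
    bd (n + 1) (cn e z) = z - cn e (bd n z) := by
  refine heq ((bd (n + 1)).comp (cn e)) (AddMonoidHom.id _ - (cn e).comp (bd n)) (fun x => ?_) z
  simp

lemma bd_bd {E : Type} (n : ℕ) (z : Z (Tup E (n + 2))) : bd n (bd (n + 1) z) = 0 := by
  suffices h : (bd (E := E) n).comp (bd (n + 1)) = 0 from DFunLike.congr_fun h z
  apply hext
  intro x
  clear z
  induction n with
  | zero =>
    rw [Tup.eq_cons x]
    simp only [AddMonoidHom.comp_apply, bd_succ, map_sub, bd_cn_zero, bd_zero]
    simp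
  | succ n ih =>
    rw [Tup.eq_cons x]
    have := ih x.tl
    simp only [AddMonoidHom.comp_apply, AddMonoidHom.zero_apply] at this
    simp only [AddMonoidHom.comp_apply, bd_succ, map_sub, bd_cn, this]
    simp

lemma push_cn {E E' : Type} (f : E → E') (n : ℕ) (e : E) (z : Z (Tup E n)) :
    push (Tup.map f) (cn e z) = cn (f e) (push (Tup.map f) z) := by
  simp only [push_push, Tup.map_cons]

lemma bd_map {E E' : Type} (f : E → E') (n : ℕ) (z : Z (Tup E (n + 1))) :
    bd n (push (Tup.map f) z) = push (Tup.map f) (bd n z) := by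
  refine heq ((bd n).comp (push (Tup.map f))) ((push (Tup.map f)).comp (bd n)) (fun x => ?_) z
  simp only [AddMonoidHom.comp_apply]
  clear z
  induction n with
  | zero => simp
  | succ n ih =>
    rw [Tup.eq_cons x]
    have := ih x.tl
    simp only [push_of] at this
    simp only [push_of, Tup.map_cons, bd_succ, map_sub, push_cn, this]

/-- Prism operator. -/
def prt {E E' : Type} (f g : E → E') : ∀ n : ℕ, Tup E n → Z (Tup E' (n + 1))
  | 0, _ => 0
  | n + 1, x => of (Tup.cons (f x.hd) (Tup.map g x)) - cn (f x.hd) (prt f g n x.tl)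

def pr {E E' : Type} (f g : E → E') (n : ℕ) : Z (Tup E n) →+ Z (Tup E' (n + 1)) := lin (prt f g n)

@[simp] lemma pr_zero {E E' : Type} (f g : E → E') (z : Z (Tup E 0)) : pr f g 0 z = 0 := by
  refine heq (pr f g 0) 0 (fun x => ?_) z
  simp [pr, prt]

@[simp] lemma pr_succ {E E' : Type} (f g : E → E') (n : ℕ) (e : E) (x : Tup E n) :
    pr f g (n + 1) (of (Tup.cons e x)) =
      of (Tup.cons (f e) (Tup.cons (g e) (Tup.map g x))) - cn (f e) (pr f g n (of x)) := by
  simp [pr, prt]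

lemma pr_cn {E E' : Type} (f g : E → E') (n : ℕ) (e : E) (z : Z (Tup E n)) :
    pr f g (n + 1) (cn e z) =
      cn (f e) (cn (g e) (push (Tup.map g) z)) - cn (f e) (pr f g n z) := by
  refine heq ((pr f g (n + 1)).comp (cn e))
    (((cn (f e)).comp ((cn (g e)).comp (push (Tup.map g)))) - (cn (f e)).comp (pr f g n))
    (fun x => ?_) z
  simp

lemma bd_pr {E E' : Type} (f g : E → E') (n : ℕ) (z : Z (Tup E (n + 1))) :
    bd (n + 1) (pr f g (n + 1) z) + pr f g n (bd n z)
      = push (Tup.map g) z - push (Tup.map f) z := by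
  refine heq ((bd (n + 1)).comp (pr f g (n + 1)) + (pr f g n).comp (bd n))
    (push (Tup.map g) - push (Tup.map f)) (fun x => ?_) z
  simp only [AddMonoidHom.comp_apply, AddMonoidHom.add_apply, AddMonoidHom.sub_apply]
  clear z
  induction n with
  | zero =>
    rw [Tup.eq_cons x]
    simp
  | succ n ih =>
    rw [Tup.eq_cons x]
    have := ih x.tl
    rw [← eq_sub_iff_add_eq] at this
    simp only [pr_succ, bd_succ, map_sub, bd_cn, this, pr_cn]
    have hb : bd n (of (Tup.map g x.tl)) = push (Tup.map g) (bd n (of x.tl)) := by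
      rw [← push_of, bd_map]
    simp only [push_of, Tup.map_cons, hb, map_sub]
    abel

lemma pr_smul {S S' E E' : Type} [SMul S E] [SMul S' E'] (f g : E → E') (s : S) (s' : S')
    (hf : ∀ e, f (s • e) = s' • f e) (hg : ∀ e, g (s • e) = s' • g e) (n : ℕ) (x : Tup E n) :
    pr f g n (of (s • x)) = push (s' • ·) (pr f g n (of x)) := by
  induction n, x using Tup.ind with
  | nil => simp
  | cons n e x ih =>
    simp only [Tup.smul_cons, pr_succ, map_sub, push_of, hf, hg, ih, Tup.map_smul g s s' hg,
      push_push]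

lemma bd_smul {S E : Type} [SMul S E] (s : S) (n : ℕ) (z : Z (Tup E (n + 1))) :
    bd n (push (s • ·) z) = push (s • ·) (bd n z) := bd_map _ n z

/-- Faces: `bd` of a tuple lies in the subgroup generated by tuples satisfying the same
entrywise predicate. -/
lemma bd_mem {E : Type} (p : E → Prop) (n : ℕ) (x : Tup E (n + 1)) (hx : Tup.All p x) :
    bd n (of x) ∈ AddSubgroup.closure {z | ∃ y : Tup E n, Tup.All p y ∧ z = of y} := by
  induction n with
  | zero =>
    rw [bd_zero]
    exact AddSubgroup.subset_closure ⟨_, trivial, rfl⟩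
  | succ n ih =>
    rw [Tup.eq_cons x, bd_succ]
    refine sub_mem (AddSubgroup.subset_closure ⟨_, hx.2, rfl⟩) ?_
    have h := AddSubgroup.mem_map_of_mem (cn x.hd) (ih x.tl hx.2)
    rw [AddMonoidHom.map_closure] at h
    refine AddSubgroup.closure_mono ?_ h
    rintro _ ⟨_, ⟨y, hy, rfl⟩, rfl⟩
    exact ⟨Tup.cons x.hd y, ⟨hx.1, hy⟩, by simp⟩

end FSH

namespace FSH

/-- Nonnegatively graded chain complexes. -/
structure Cx where
  X : ℕ → Type
  inst : ∀ n, AddCommGroup (X n)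
  d : ∀ n, X (n + 1) →+ X n
  dd : ∀ n x, d n (d (n + 1) x) = 0

attribute [instance] Cx.inst

structure CHom (A B : Cx) where
  f : ∀ n, A.X n →+ B.X n
  comm : ∀ n x, B.d n (f (n + 1) x) = f n (A.d n x)

namespace Cx

/-- Cycles. -/
def cyc (C : Cx) : ∀ n, AddSubgroup (C.X n)
  | 0 => ⊤
  | n + 1 => (C.d n).ker

/-- Boundaries. -/
def bdy (C : Cx) (n : ℕ) : AddSubgroup (C.X n) := (C.d n).range

lemma mem_cyc_succ {C : Cx} {n : ℕ} {x : C.X (n + 1)} : x ∈ C.cyc (n + 1) ↔ C.d n x = 0 := Iff.rfl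

lemma mem_cyc_zero {C : Cx} (x : C.X 0) : x ∈ C.cyc 0 := trivial

lemma mem_bdy {C : Cx} {n : ℕ} {x : C.X n} : x ∈ C.bdy n ↔ ∃ y, C.d n y = x := Iff.rfl

lemma d_mem_bdy (C : Cx) {n : ℕ} (x : C.X (n + 1)) : C.d n x ∈ C.bdy n := ⟨x, rfl⟩

lemma bdy_le_cyc (C : Cx) (n : ℕ) : C.bdy n ≤ C.cyc n := by
  rintro _ ⟨y, rfl⟩
  cases n with
  | zero => trivial
  | succ n => exact C.dd n y

end Cx

lemma CHom.cyc {A B : Cx} (φ : CHom A B) {n : ℕ} {x : A.X n} (hx : x ∈ A.cyc n) :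
    φ.f n x ∈ B.cyc n := by
  cases n with
  | zero => trivial
  | succ n => rw [Cx.mem_cyc_succ] at *; rw [φ.comm, hx, map_zero]

lemma CHom.bdy {A B : Cx} (φ : CHom A B) {n : ℕ} {x : A.X n} (hx : x ∈ A.bdy n) :
    φ.f n x ∈ B.bdy n := by
  obtain ⟨y, rfl⟩ := hx
  exact ⟨φ.f _ y, φ.comm n y⟩

/-- Underlying groups of the mapping cone. -/
def coneX (A B : Cx) : ℕ → Type
  | 0 => B.X 0
  | n + 1 => B.X (n + 1) × A.X n

instance coneInst (A B : Cx) : ∀ n, AddCommGroup (coneX A B n)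
  | 0 => inferInstanceAs (AddCommGroup (B.X 0))
  | n + 1 => inferInstanceAs (AddCommGroup (B.X (n + 1) × A.X n))

def coneD {A B : Cx} (φ : CHom A B) : ∀ n, coneX A B (n + 1) →+ coneX A B n
  | 0 => ((B.d 0).comp (AddMonoidHom.fst (B.X 1) (A.X 0)) -
      (φ.f 0).comp (AddMonoidHom.snd (B.X 1) (A.X 0)) : B.X 1 × A.X 0 →+ B.X 0)
  | n + 1 => (((B.d (n + 1)).comp (AddMonoidHom.fst (B.X (n + 2)) (A.X (n + 1))) -
      (φ.f (n + 1)).comp (AddMonoidHom.snd (B.X (n + 2)) (A.X (n + 1)))).prod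
      (-(A.d n).comp (AddMonoidHom.snd (B.X (n + 2)) (A.X (n + 1)))) :
        B.X (n + 2) × A.X (n + 1) →+ B.X (n + 1) × A.X n)

/-- The mapping cone. -/
def cone {A B : Cx} (φ : CHom A B) : Cx where
  X := coneX A B
  inst := coneInst A B
  d := coneD φ
  dd n x := by
    cases n with
    | zero =>
      change B.d 0 (B.d 1 x.1 - φ.f 1 x.2) - φ.f 0 (-(A.d 0 x.2)) = 0
      rw [map_sub, B.dd, φ.comm, map_neg]; abel
    | succ n =>
      change (B.d (n + 1) (B.d (n + 2) x.1 - φ.f (n + 2) x.2) - φ.f (n + 1) (-(A.d (n + 1) x.2)),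
        -(A.d n (-(A.d (n + 1) x.2)))) = ((0 : B.X (n + 1)), (0 : A.X n))
      rw [map_sub, B.dd, φ.comm, map_neg, map_neg, A.dd]
      simp

/-- Elements of the cone. -/
def cz {A B : Cx} (φ : CHom A B) (b : B.X 0) : (cone φ).X 0 := b
def cp {A B : Cx} (φ : CHom A B) {n : ℕ} (b : B.X (n + 1)) (a : A.X n) : (cone φ).X (n + 1) := (b, a)

section
variable {A B : Cx} (φ : CHom A B)

lemma cp_surj {n : ℕ} (x : (cone φ).X (n + 1)) : ∃ b a, x = cp φ b a := ⟨x.1, x.2, rfl⟩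

lemma cp_inj {n : ℕ} {b b' : B.X (n + 1)} {a a' : A.X n} :
    cp φ b a = cp φ b' a' ↔ b = b' ∧ a = a' := Prod.mk_inj

lemma cp_sub {n : ℕ} (b b' : B.X (n + 1)) (a a' : A.X n) :
    cp φ b a - cp φ b' a' = cp φ (b - b') (a - a') := rfl
lemma cp_add {n : ℕ} (b b' : B.X (n + 1)) (a a' : A.X n) :
    cp φ b a + cp φ b' a' = cp φ (b + b') (a + a') := rfl
lemma cp_zero {n : ℕ} : cp φ (0 : B.X (n + 1)) (0 : A.X n) = 0 := rfl

lemma cone_d_zero (b : B.X 1) (a : A.X 0) :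
    (cone φ).d 0 (cp φ b a) = cz φ (B.d 0 b - φ.f 0 a) := rfl

lemma cone_d_succ {n : ℕ} (b : B.X (n + 2)) (a : A.X (n + 1)) :
    (cone φ).d (n + 1) (cp φ b a) = cp φ (B.d (n + 1) b - φ.f (n + 1) a) (-A.d n a) := rfl

lemma cone_cyc {n : ℕ} (b : B.X (n + 1)) (a : A.X n) :
    cp φ b a ∈ (cone φ).cyc (n + 1) ↔ B.d n b = φ.f n a ∧ a ∈ A.cyc n := by
  rw [Cx.mem_cyc_succ]
  cases n with
  | zero =>
    rw [cone_d_zero]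
    change B.d 0 b - φ.f 0 a = 0 ↔ _
    rw [sub_eq_zero]
    exact ⟨fun h => ⟨h, trivial⟩, fun h => h.1⟩
  | succ n =>
    rw [cone_d_succ, ← cp_zero, cp_inj, sub_eq_zero, neg_eq_zero]
    rfl

/-- Zeroth chains of the target become elements of the cone. -/
def coneIn : CHom B (cone φ) where
  f
    | 0 => AddMonoidHom.id (B.X 0)
    | n + 1 => (AddMonoidHom.inl (B.X (n + 1)) (A.X n) : B.X (n + 1) →+ B.X (n + 1) × A.X n)
  comm n x := by
    cases n with
    | zero => change B.d 0 x - φ.f 0 0 = B.d 0 x; simp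
    | succ n =>
      change (B.d (n + 1) x - φ.f (n + 1) 0, - A.d n 0) = (B.d (n + 1) x, (0 : A.X n))
      simp

end

section
variable {A B A' B' : Cx} {φ : CHom A B} {φ' : CHom A' B'} (fa : CHom A A') (fb : CHom B B')
  (sq : ∀ n x, fb.f n (φ.f n x) = φ'.f n (fa.f n x))

def coneMap : CHom (cone φ) (cone φ') where
  f
    | 0 => fb.f 0
    | n + 1 => (AddMonoidHom.prodMap (fb.f (n + 1)) (fa.f n) :
        B.X (n + 1) × A.X n →+ B'.X (n + 1) × A'.X n)
  comm n x := by
    cases n with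
    | zero =>
      change B'.d 0 (fb.f 1 x.1) - φ'.f 0 (fa.f 0 x.2) = fb.f 0 (B.d 0 x.1 - φ.f 0 x.2)
      rw [map_sub, fb.comm, sq]
    | succ n =>
      change (B'.d (n + 1) (fb.f (n + 2) x.1) - φ'.f (n + 1) (fa.f (n + 1) x.2),
        -(A'.d n (fa.f (n + 1) x.2))) = (fb.f (n + 1) (B.d (n + 1) x.1 - φ.f (n + 1) x.2),
          fa.f n (-(A.d n x.2)))
      rw [map_sub, fb.comm, sq, map_neg, fa.comm]

lemma coneMap_zero (b : B.X 0) : (coneMap fa fb sq).f 0 (cz φ b) = cz φ' (fb.f 0 b) := rfl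
lemma coneMap_cp {n : ℕ} (b : B.X (n + 1)) (a : A.X n) :
    (coneMap fa fb sq).f (n + 1) (cp φ b a) = cp φ' (fb.f (n + 1) b) (fa.f n a) := rfl

end

/-- Chain homotopies from `f` to `g`. -/
structure Hty {A B : Cx} (f g : CHom A B) where
  h : ∀ n, A.X n →+ B.X (n + 1)
  h0 : ∀ x, B.d 0 (h 0 x) = g.f 0 x - f.f 0 x
  hs : ∀ n x, B.d (n + 1) (h (n + 1) x) + h n (A.d n x) = g.f (n + 1) x - f.f (n + 1) x

lemma Hty.cyc {A B : Cx} {f g : CHom A B} (H : Hty f g) {n : ℕ} {x : A.X n} (hx : x ∈ A.cyc n) :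
    g.f n x - f.f n x = B.d n (H.h n x) := by
  cases n with
  | zero => rw [H.h0]
  | succ n => rw [← H.hs, Cx.mem_cyc_succ.1 hx, map_zero, add_zero]

lemma coneHty {A B A' B' : Cx} {φ : CHom A B} {φ' : CHom A' B'} {fa ga : CHom A A'}
    {fb gb : CHom B B'} (sf : ∀ n x, fb.f n (φ.f n x) = φ'.f n (fa.f n x))
    (sg : ∀ n x, gb.f n (φ.f n x) = φ'.f n (ga.f n x)) (HA : Hty fa ga) (HB : Hty fb gb)
    (hc : ∀ n x, HB.h n (φ.f n x) = φ'.f (n + 1) (HA.h n x)) {n : ℕ} {x : (cone φ).X n}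
    (hx : x ∈ (cone φ).cyc n) :
    (coneMap ga gb sg).f n x - (coneMap fa fb sf).f n x ∈ (cone φ').bdy n := by
  cases n with
  | zero =>
    refine ⟨cp φ' (HB.h 0 x) 0, ?_⟩
    rw [cone_d_zero, map_zero, sub_zero]
    exact HB.h0 x
  | succ n =>
    obtain ⟨b, a, rfl⟩ := cp_surj φ x
    rw [cone_cyc] at hx
    refine ⟨cp φ' (HB.h (n + 1) b) (-HA.h n a), ?_⟩
    rw [cone_d_succ, coneMap_cp, coneMap_cp, cp_sub, cp_inj]
    constructor
    · rw [← HB.hs, hx.1, hc, map_neg]; abel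
    · rw [HA.cyc hx.2, map_neg, neg_neg]

/-- Devissage in a double complex with exact rows. -/
lemma devissage (M : ℕ → Cx) (dh : ∀ p, CHom (M (p + 1)) (M p))
    (dhdh : ∀ p q x, (dh p).f q ((dh (p + 1)).f q x) = 0)
    (ex0 : ∀ q x, ∃ y, (dh 0).f q y = x)
    (ex : ∀ p q x, (dh p).f q x = 0 → ∃ y, (dh (p + 1)).f q y = x) (n : ℕ)
    (hZ : ∀ p q, p + q + 1 = n → ∀ a ∈ (M (p + 2)).cyc q,
      ∃ b, ∃ e ∈ (M (p + 3)).cyc q, a = (M (p + 2)).d q b + (dh (p + 2)).f q e)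
    (x : (M 0).X n) (hx : x ∈ (M 0).cyc n) : ∃ e ∈ (M 1).cyc n, (dh 0).f n e = x := by
  have key : ∀ q p, p + q = n → ∀ x : (M (p + 1)).X q, (dh p).f q x ∈ (M p).cyc q →
      ∃ x', (dh p).f q x' = (dh p).f q x ∧ x' ∈ (M (p + 1)).cyc q := by
    intro q
    induction q with
    | zero => intro p _ x _; exact ⟨x, rfl, trivial⟩
    | succ q ih =>
      intro p hp x hx
      rw [Cx.mem_cyc_succ, (dh p).comm] at hx
      obtain ⟨w, hw⟩ := ex _ _ _ hx
      obtain ⟨w', hw', hc⟩ := ih (p + 1) (by omega) w (by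
        rw [hw]; exact Cx.bdy_le_cyc _ _ (Cx.d_mem_bdy _ _))
      obtain ⟨b, e, he, hbe⟩ := hZ p q (by omega) w' hc
      refine ⟨x - (dh (p + 1)).f _ b, ?_, ?_⟩
      · rw [map_sub, dhdh, sub_zero]
      · rw [Cx.mem_cyc_succ, map_sub, (dh (p + 1)).comm, ← hw, ← hw', hbe, map_add, dhdh]
        simp
  obtain ⟨y, rfl⟩ := ex0 n x
  obtain ⟨x', h1, h2⟩ := key n 0 (by omega) y hx
  exact ⟨x', h2, h1⟩

end FSH

namespace FSH
open FreeAbelianGroup (of)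

/-- A subgroup together with a set it acts on. -/
structure GS (G : Type) [Group G] where
  H : Subgroup G
  Y : Type
  act : MulAction H Y

attribute [instance] GS.act

namespace GS
variable {G : Type} [Group G]

def rel (S : GS G) (n : ℕ) (a b : Tup G n × S.Y) : Prop := ∃ h : S.H, a = (h • b.1, h • b.2)

/-- Orbits of tuples with a decoration. -/
def Q (S : GS G) (n : ℕ) : Type := Quot (S.rel n)

def q (S : GS G) {n : ℕ} (t : Tup G n) (y : S.Y) : S.Q n := Quot.mk _ (t, y)

lemma q_smul (S : GS G) {n : ℕ} (h : S.H) (t : Tup G n) (y : S.Y) :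
    S.q (h • t) (h • y) = S.q t y := Quot.sound ⟨h, rfl⟩

lemma q_surj (S : GS G) {n : ℕ} (q : S.Q n) : ∃ t y, q = S.q t y := by
  induction q using Quot.ind with
  | mk a => exact ⟨a.1, a.2, rfl⟩

/-- The bilinear map to decorated orbit chains. -/
def B (S : GS G) {n : ℕ} : Z (Tup G n) →+ Z S.Y →+ Z (S.Q n) :=
  lin fun t => lin fun y => of (S.q t y)

@[simp] lemma B_of (S : GS G) {n : ℕ} (t : Tup G n) (y : S.Y) :
    S.B (of t) (of y) = of (S.q t y) := by simp [B]

lemma hext2 {T U M : Type} [AddCommGroup M] {f g : Z T →+ Z U →+ M}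
    (h : ∀ x y, f (of x) (of y) = g (of x) (of y)) : f = g :=
  hext fun x => hext fun y => h x y

lemma B_smul (S : GS G) {n : ℕ} (h : S.H) (u : Z (Tup G n)) (w : Z S.Y) :
    S.B (push (h • ·) u) (push (h • ·) w) = S.B u w := by
  have : (AddMonoidHom.compl₂ (S.B.comp (push (h • ·))) (push (h • ·)) :
      Z (Tup G n) →+ Z S.Y →+ Z (S.Q n)) = S.B := by
    apply hext2
    intro x y
    simp [AddMonoidHom.compl₂_apply, q_smul]
  exact DFunLike.congr_fun (DFunLike.congr_fun this u) w

lemma Qext {S : GS G} {n : ℕ} {M : Type} [AddCommGroup M] {f g : Z (S.Q n) →+ M}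
    (h : ∀ t y, f (S.B (of t) (of y)) = g (S.B (of t) (of y))) : f = g := by
  apply hext
  intro q
  obtain ⟨t, y, rfl⟩ := S.q_surj q
  simpa using h t y

lemma Qeq {S : GS G} {n : ℕ} {M : Type} [AddCommGroup M] (f g : Z (S.Q n) →+ M)
    (h : ∀ t y, f (S.B (of t) (of y)) = g (S.B (of t) (of y))) (x : Z (S.Q n)) : f x = g x := by
  rw [Qext h]

/-- Maps out of decorated orbit chains. -/
def out (S : GS G) {n : ℕ} {M : Type} [AddCommGroup M] (φ : Tup G n → S.Y → M)
    (hφ : ∀ (h : S.H) t y, φ (h • t) (h • y) = φ t y) : Z (S.Q n) →+ M :=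
  lin (Quot.lift (fun p => φ p.1 p.2) (by
    rintro _ b ⟨h, rfl⟩
    exact hφ h b.1 b.2))

@[simp] lemma out_of (S : GS G) {n : ℕ} {M : Type} [AddCommGroup M] (φ : Tup G n → S.Y → M)
    (hφ : ∀ (h : S.H) t y, φ (h • t) (h • y) = φ t y) (t : Tup G n) (y : S.Y) :
    S.out φ hφ (of (S.q t y)) = φ t y := lin_of _ _

/-- Operators induced by equivariant operators on both factors. -/
def op (S T : GS G) {n m : ℕ} (θ : S.H → T.H) (Θ : Z (Tup G n) →+ Z (Tup G m))
    (Ω : Z S.Y →+ Z T.Y) (hΘ : ∀ h t, Θ (of (h • t)) = push (θ h • ·) (Θ (of t)))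
    (hΩ : ∀ h y, Ω (of (h • y)) = push (θ h • ·) (Ω (of y))) : Z (S.Q n) →+ Z (T.Q m) :=
  S.out (fun t y => T.B (Θ (of t)) (Ω (of y))) (by
    intro h t y
    rw [hΘ, hΩ, B_smul])

lemma op_B (S T : GS G) {n m : ℕ} (θ : S.H → T.H) (Θ : Z (Tup G n) →+ Z (Tup G m))
    (Ω : Z S.Y →+ Z T.Y) (hΘ : ∀ h t, Θ (of (h • t)) = push (θ h • ·) (Θ (of t)))
    (hΩ : ∀ h y, Ω (of (h • y)) = push (θ h • ·) (Ω (of y))) (u : Z (Tup G n)) (w : Z S.Y) :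
    op S T θ Θ Ω hΘ hΩ (S.B u w) = T.B (Θ u) (Ω w) := by
  have : (AddMonoidHom.compr₂ S.B (op S T θ Θ Ω hΘ hΩ) : Z (Tup G n) →+ Z S.Y →+ Z (T.Q m)) =
      AddMonoidHom.compl₂ (T.B.comp Θ) Ω := by
    apply hext2
    intro x y
    simp [AddMonoidHom.compl₂_apply, op]
  exact DFunLike.congr_fun (DFunLike.congr_fun this u) w

def dS (S : GS G) (n : ℕ) : Z (S.Q (n + 1)) →+ Z (S.Q n) :=
  op S S id (bd n) (AddMonoidHom.id _)
    (fun h t => by rw [← push_of, bd_smul]; rfl) (fun h y => by simp)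

@[simp] lemma dS_B (S : GS G) (n : ℕ) (u : Z (Tup G (n + 1))) (w : Z S.Y) :
    S.dS n (S.B u w) = S.B (bd n u) w := op_B _ _ _ _ _ _ _ _ _

/-- Chains of `H` with coefficients in the permutation module of `Y`. -/
abbrev Ch (S : GS G) : Cx where
  X n := Z (S.Q (n + 1))
  inst n := inferInstance
  d n := S.dS (n + 1)
  dd n x := by
    refine Qeq ((S.dS (n + 1)).comp (S.dS (n + 2))) 0 (fun t y => ?_) x
    simp only [AddMonoidHom.comp_apply, dS_B, bd_bd]
    simp

/-- Every chain with trivial decoration set, or generally, is a sum of elementary ones. -/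
lemma B_unit_surj {S : GS G} (y : S.Y) (hy : ∀ y', y' = y) {n : ℕ} (x : Z (S.Q n)) :
    ∃ u, x = S.B u (of y) := by
  induction x using Z.ind with
  | zero => exact ⟨0, by simp⟩
  | of s =>
    obtain ⟨t, y', rfl⟩ := S.q_surj s
    exact ⟨of t, by simp [hy y']⟩
  | sub a b ha hb =>
    obtain ⟨u, rfl⟩ := ha
    obtain ⟨v, rfl⟩ := hb
    exact ⟨u - v, by simp⟩

/-- The group with trivial decoration. -/
abbrev pt (H : Subgroup G) : GS G where
  H := H
  Y := PUnit
  act :=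
    { smul := fun _ y => y
      one_smul := fun _ => rfl
      mul_smul := fun _ _ _ => rfl }

/-- Powers of an `H`-set. -/
abbrev pw (H : Subgroup G) (X : Type) (a : MulAction H X) (p : ℕ) : GS G := ⟨H, Tup X p, inferInstance⟩

end GS

open GS

/-- Morphisms. -/
structure Mor {G : Type} [Group G] (S T : GS G) where
  g : G
  hg : ∀ h ∈ S.H, g * h * g⁻¹ ∈ T.H
  Ω : Z S.Y →+ Z T.Y
  hΩ : ∀ (h : S.H) y, Ω (of (h • y)) = push ((⟨g * h * g⁻¹, hg h h.2⟩ : T.H) • ·) (Ω (of y))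

namespace Mor
variable {G : Type} [Group G] {S T U : GS G}

lemma smul_conj (φ : Mor S T) (h : S.H) (n : ℕ) (t : Tup G n) :
    φ.g • (h • t) = (⟨φ.g * h * φ.g⁻¹, φ.hg h h.2⟩ : T.H) • (φ.g • t) := by
  change φ.g • ((h : G) • t) = (φ.g * (h : G) * φ.g⁻¹) • (φ.g • t)
  rw [smul_smul, smul_smul]; simp

def op (φ : Mor S T) (n : ℕ) : Z (S.Q n) →+ Z (T.Q n) :=
  GS.op S T (fun h => ⟨φ.g * h * φ.g⁻¹, φ.hg h h.2⟩) (push (φ.g • ·)) φ.Ω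
    (fun h t => by simp [φ.smul_conj]) φ.hΩ

@[simp] lemma op_B (φ : Mor S T) (n : ℕ) (u : Z (Tup G n)) (w : Z S.Y) :
    φ.op n (S.B u w) = T.B (push (φ.g • ·) u) (φ.Ω w) := GS.op_B _ _ _ _ _ _ _ _ _

/-- Induced chain map. -/
def ch (φ : Mor S T) : CHom S.Ch T.Ch where
  f n := φ.op (n + 1)
  comm n x := by
    refine Qeq ((T.dS (n + 1)).comp (φ.op (n + 2))) ((φ.op (n + 1)).comp (S.dS (n + 1)))
      (fun t y => ?_) x
    simp only [AddMonoidHom.comp_apply, dS_B, op_B, bd_smul]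

lemma ch_B (φ : Mor S T) (n : ℕ) (u : Z (Tup G (n + 1))) (w : Z S.Y) :
    φ.ch.f n (S.B u w) = T.B (push (φ.g • ·) u) (φ.Ω w) := φ.op_B _ _ _

lemma push_smul_smul (g k : G) (n : ℕ) (u : Z (Tup G n)) :
    push (g • ·) (push (k • ·) u) = push ((g * k) • ·) u := by
  rw [push_push]; simp only [smul_smul]

/-- Commuting squares. -/
lemma sq {S' T' : GS G} (φ : Mor S T) (φ' : Mor S' T') (a : Mor S S') (b : Mor T T')
    (hg : b.g * φ.g = φ'.g * a.g) (hw : ∀ y, b.Ω (φ.Ω (of y)) = φ'.Ω (a.Ω (of y)))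
    (n : ℕ) (x : S.Ch.X n) : b.ch.f n (φ.ch.f n x) = φ'.ch.f n (a.ch.f n x) := by
  refine Qeq ((b.op (n + 1)).comp (φ.op (n + 1))) ((φ'.op (n + 1)).comp (a.op (n + 1)))
      (fun t y => ?_) x
  simp only [AddMonoidHom.comp_apply, op_B, hw, push_smul_smul, hg]

/-- Equality of chain maps: composite. -/
lemma comp_eq (φ : Mor S T) (ψ : Mor T U) (χ : Mor S U) (hg : ψ.g * φ.g = χ.g)
    (hw : ∀ y, ψ.Ω (φ.Ω (of y)) = χ.Ω (of y)) (n : ℕ) (x : S.Ch.X n) :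
    ψ.ch.f n (φ.ch.f n x) = χ.ch.f n x := by
  refine Qeq ((ψ.op (n + 1)).comp (φ.op (n + 1))) (χ.op (n + 1)) (fun t y => ?_) x
  simp only [AddMonoidHom.comp_apply, op_B, hw, push_smul_smul, hg]

/-- Two morphisms agree strictly when they differ by an element of the target group. -/
lemma conj_eq (φ ψ : Mor S T) (k : T.H) (hg : ψ.g = k * φ.g)
    (hw : ∀ y, ψ.Ω (of y) = push (k • ·) (φ.Ω (of y))) (n : ℕ) (x : S.Ch.X n) :
    ψ.ch.f n x = φ.ch.f n x := by
  refine Qeq (ψ.op (n + 1)) (φ.op (n + 1)) (fun t y => ?_) x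
  simp only [op_B, hw, hg]
  rw [← push_smul_smul]
  exact T.B_smul k _ _

def prOp (φ ψ : Mor S T) (hc : ∀ h ∈ S.H, φ.g * h * φ.g⁻¹ = ψ.g * h * ψ.g⁻¹) (n : ℕ) :
    Z (S.Q n) →+ Z (T.Q (n + 1)) :=
  GS.op S T (fun h => ⟨φ.g * h * φ.g⁻¹, φ.hg h h.2⟩) (pr (φ.g * ·) (ψ.g * ·) n) φ.Ω
    (fun h t => pr_smul _ _ _ _ (fun e => by
        change φ.g * (h * e) = (φ.g * h * φ.g⁻¹) * (φ.g * e); group)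
      (fun e => by
        change ψ.g * (h * e) = (φ.g * h * φ.g⁻¹) * (ψ.g * e)
        rw [hc h h.2]; group) _ _) φ.hΩ

@[simp] lemma prOp_B (φ ψ : Mor S T) (hc : ∀ h ∈ S.H, φ.g * h * φ.g⁻¹ = ψ.g * h * ψ.g⁻¹) (n : ℕ)
    (u : Z (Tup G n)) (w : Z S.Y) :
    prOp φ ψ hc n (S.B u w) = T.B (pr (φ.g * ·) (ψ.g * ·) n u) (φ.Ω w) :=
  GS.op_B _ _ _ _ _ _ _ _ _

/-- The prism homotopy. -/
def prism (φ ψ : Mor S T) (hc : ∀ h ∈ S.H, φ.g * h * φ.g⁻¹ = ψ.g * h * ψ.g⁻¹)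
    (hw : ∀ y, φ.Ω (of y) = ψ.Ω (of y)) : Hty φ.ch ψ.ch where
  h n := prOp φ ψ hc (n + 1)
  h0 x := by
    refine Qeq ((T.dS 1).comp (prOp φ ψ hc 1)) (ψ.op 1 - φ.op 1) (fun t y => ?_) x
    have := bd_pr (φ.g * ·) (ψ.g * ·) 0 (of t)
    rw [pr_zero, add_zero] at this
    simp only [AddMonoidHom.comp_apply, AddMonoidHom.sub_apply, op_B, prOp_B, dS_B, ← hw, this]
    rw [map_sub]
    rfl
  hs n x := by
    refine Qeq ((T.dS (n + 2)).comp (prOp φ ψ hc (n + 2)) + (prOp φ ψ hc (n + 1)).comp (S.dS (n + 1)))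
      (ψ.op (n + 2) - φ.op (n + 2)) (fun t y => ?_) x
    have := bd_pr (φ.g * ·) (ψ.g * ·) (n + 1) (of t)
    simp only [AddMonoidHom.comp_apply, AddMonoidHom.sub_apply, AddMonoidHom.add_apply, op_B,
      prOp_B, dS_B, ← hw]
    rw [← AddMonoidHom.add_apply, ← map_add, this, map_sub]
    rfl

lemma prism_B (φ ψ : Mor S T) (hc : ∀ h ∈ S.H, φ.g * h * φ.g⁻¹ = ψ.g * h * ψ.g⁻¹)
    (hw : ∀ y, φ.Ω (of y) = ψ.Ω (of y)) (n : ℕ) (u : Z (Tup G (n + 1))) (w : Z S.Y) :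
    (prism φ ψ hc hw).h n (S.B u w) = T.B (pr (φ.g * ·) (ψ.g * ·) (n + 1) u) (φ.Ω w) :=
  prOp_B _ _ hc _ _ _

end Mor

section
variable {G : Type} [Group G]

/-- An equivariant retraction onto a subgroup. -/
lemma exists_rho (H : Subgroup G) : ∃ ρ : G → H, (∀ (h : H) s, ρ (h * s) = h * ρ s) ∧
    ∀ h : H, ρ h = h := by
  classical
  let rep : G → G := fun s => (Quotient.out (Quotient.mk (QuotientGroup.rightRel H) s))
  have hrep : ∀ s, s * (rep s)⁻¹ ∈ H := by
    intro s
    have := Quotient.mk_out (s := QuotientGroup.rightRel H) s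
    exact QuotientGroup.rightRel_apply.1 this
  have hrep2 : ∀ (h : H) s, rep (h * s) = rep s := by
    intro h s
    have : (Quotient.mk (QuotientGroup.rightRel H) (h * s)) =
      Quotient.mk (QuotientGroup.rightRel H) s := by
      apply Quotient.sound
      apply QuotientGroup.rightRel_apply.2
      simp
    simp only [rep, this]
  let ρ0 : G → H := fun s => ⟨s * (rep s)⁻¹, hrep s⟩
  have h0 : ∀ (h : H) s, ρ0 (h * s) = h * ρ0 s := by
    intro h s
    ext
    simp only [ρ0, hrep2, Subgroup.coe_mul, mul_assoc]
  refine ⟨fun s => ρ0 s * (ρ0 1)⁻¹, fun h s => by simp only [h0, mul_assoc], fun h => ?_⟩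
  have := h0 h 1
  rw [mul_one] at this
  simp [this]

/-- Face operator on powers. -/
def face (H : Subgroup G) (X : Type) (a : MulAction H X) (p : ℕ) :
    Mor (GS.pw H X a (p + 1)) (GS.pw H X a p) where
  g := 1
  hg h hh := by
    change 1 * h * 1⁻¹ ∈ H
    simpa using (show h ∈ H from hh)
  Ω := bd p
  hΩ h y := by
    rw [← push_of (h • ·), bd_smul]
    congr 2
    funext t
    change h • t = (⟨_, _⟩ : H) • t
    congr 1
    ext; simp

lemma push_one (n : ℕ) (u : Z (Tup G n)) : push ((1 : G) • ·) u = u :=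
  push_id _ (fun x => one_smul G x) u

lemma face_face (H : Subgroup G) (X : Type) (a : MulAction H X) (p n : ℕ)
    (x : (GS.pw H X a (p + 2)).Ch.X n) :
    (face H X a p).ch.f n ((face H X a (p + 1)).ch.f n x) = 0 := by
  refine Qeq (((face H X a p).op (n + 1)).comp ((face H X a (p + 1)).op (n + 1))) 0
    (fun t y => ?_) x
  simp only [AddMonoidHom.comp_apply, AddMonoidHom.zero_apply]
  rw [Mor.op_B, Mor.op_B]
  rw [show (face H X a p).Ω ((face H X a (p + 1)).Ω (of y)) = 0 from bd_bd p _, map_zero]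

section
variable (H : Subgroup G) (X : Type) (a : MulAction H X)

def contr (ξ : G → X) (hξ : ∀ (h : H) s, ξ (h * s) = h • ξ s) (p n : ℕ) : Z ((GS.pw H X a p).Q (n + 1)) →+ Z ((GS.pw H X a (p + 1)).Q (n + 1)) :=
  (GS.pw H X a p).out (fun t y => of ((GS.pw H X a (p + 1)).q t (Tup.cons (ξ t.hd) y))) (by
    intro h t y
    congr 1
    rw [← (GS.pw H X a (p + 1)).q_smul h t]
    congr 1
    change Tup.cons (ξ (h * t.hd)) (h • y) = _
    rw [hξ]
    rfl)

lemma contr_B (ξ : G → X) (hξ : ∀ (h : H) s, ξ (h * s) = h • ξ s) (p n : ℕ) (t : Tup G (n + 1)) (w : Z (Tup X p)) :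
    contr H X a ξ hξ p n ((GS.pw H X a p).B (of t) w) =
      (GS.pw H X a (p + 1)).B (of t) (cn (ξ t.hd) w) := by
  refine heq ((contr H X a ξ hξ p n).comp ((GS.pw H X a p).B (of t)))
    (((GS.pw H X a (p + 1)).B (of t)).comp (cn (ξ t.hd))) (fun y => ?_) w
  simp only [AddMonoidHom.comp_apply]
  rw [push_of, B_of, B_of, contr, out_of]

lemma face_ex0 (ξ : G → X) (hξ : ∀ (h : H) s, ξ (h * s) = h • ξ s) (n : ℕ) (x : (GS.pw H X a 0).Ch.X n) :
    ∃ y, (face H X a 0).ch.f n y = x := by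
  refine ⟨contr H X a ξ hξ 0 n x, ?_⟩
  refine Qeq (((face H X a 0).op (n + 1)).comp (contr H X a ξ hξ 0 n)) (AddMonoidHom.id _)
    (fun t y => ?_) x
  simp only [AddMonoidHom.comp_apply, AddMonoidHom.id_apply]
  rw [contr_B, Mor.op_B]
  simp only [face]
  rw [push_one, bd_cn_zero]

lemma face_ex (ξ : G → X) (hξ : ∀ (h : H) s, ξ (h * s) = h • ξ s) (p n : ℕ) (x : (GS.pw H X a (p + 1)).Ch.X n) (hx : (face H X a p).ch.f n x = 0) :
    ∃ y, (face H X a (p + 1)).ch.f n y = x := by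
  refine ⟨contr H X a ξ hξ (p + 1) n x, ?_⟩
  have := Qeq (((face H X a (p + 1)).op (n + 1)).comp (contr H X a ξ hξ (p + 1) n))
    (AddMonoidHom.id _ - (contr H X a ξ hξ p n).comp ((face H X a p).op (n + 1)))
    (fun t y => by
      simp only [AddMonoidHom.comp_apply, AddMonoidHom.id_apply, AddMonoidHom.sub_apply]
      rw [contr_B, Mor.op_B, Mor.op_B]
      simp only [face]
      rw [push_one, contr_B, bd_cn, map_sub]) x
  simp only [AddMonoidHom.comp_apply, AddMonoidHom.id_apply, AddMonoidHom.sub_apply] at this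
  refine this.trans ?_
  erw [hx]
  simp

end

end

end FSH

namespace FSH
open FreeAbelianGroup (of)
open GS

/-- A pair of groups with compatible decorations. -/
structure Pr (G : Type) [Group G] where
  S : GS G
  T : GS G
  hle : S.H ≤ T.H
  ι : S.Y → T.Y
  hι : ∀ (h : S.H) y, ι (h • y) = (⟨h, hle h.2⟩ : T.H) • ι y

section
variable {G : Type} [Group G]

/-- The morphism given by conjugation by `g` and a decoration map. -/
abbrev mor (S T : GS G) (g : G) (hg : ∀ h ∈ S.H, g * h * g⁻¹ ∈ T.H) (f : S.Y → T.Y)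
    (hf : ∀ (h : S.H) y, f (h • y) = (⟨g * h * g⁻¹, hg h h.2⟩ : T.H) • f y) : Mor S T where
  g := g
  hg := hg
  Ω := push f
  hΩ h y := by simp [hf]

abbrev mor1 (S T : GS G) (hle : S.H ≤ T.H) (f : S.Y → T.Y)
    (hf : ∀ (h : S.H) y, f (h • y) = (⟨h, hle h.2⟩ : T.H) • f y) : Mor S T :=
  mor S T 1 (fun h hh => by simpa using hle hh) f (fun h y => by
    rw [hf]; congr 1; ext; simp)

abbrev Pr.φ (P : Pr G) : Mor P.S P.T := mor1 P.S P.T P.hle P.ι P.hι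

/-- The relative complex. -/
def Pr.Rel (P : Pr G) : Cx := cone P.φ.ch

/-- Morphisms of pairs. -/
structure PMor (P P' : Pr G) where
  a : Mor P.S P'.S
  b : Mor P.T P'.T
  hg : b.g = a.g
  hw : ∀ y, b.Ω (of (P.ι y)) = push P'.ι (a.Ω (of y))

lemma PMor.sq {P P' : Pr G} (f : PMor P P') (n : ℕ) (x : P.S.Ch.X n) :
    f.b.ch.f n (P.φ.ch.f n x) = P'.φ.ch.f n (f.a.ch.f n x) :=
  Mor.sq P.φ P'.φ f.a f.b (by simp [f.hg]) (fun y => by simpa using f.hw y) n x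

/-- Induced map of relative complexes. -/
def PMor.rel {P P' : Pr G} (f : PMor P P') : CHom P.Rel P'.Rel := coneMap f.a.ch f.b.ch f.sq

/-- Elements. -/
def Pr.z0 (P : Pr G) (b : P.T.Ch.X 0) : P.Rel.X 0 := cz P.φ.ch b
def Pr.mk2 (P : Pr G) {n : ℕ} (b : P.T.Ch.X (n + 1)) (a : P.S.Ch.X n) : P.Rel.X (n + 1) :=
  cp P.φ.ch b a

lemma PMor.rel_z0 {P P' : Pr G} (f : PMor P P') (b : P.T.Ch.X 0) :
    f.rel.f 0 (P.z0 b) = P'.z0 (f.b.ch.f 0 b) := rfl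
lemma PMor.rel_mk2 {P P' : Pr G} (f : PMor P P') {n : ℕ} (b : P.T.Ch.X (n + 1)) (a : P.S.Ch.X n) :
    f.rel.f (n + 1) (P.mk2 b a) = P'.mk2 (f.b.ch.f (n + 1) b) (f.a.ch.f n a) := rfl

lemma Mor.sqk {S T1 T2 U : GS G} (φ1 : Mor S T1) (ψ1 : Mor T1 U) (φ2 : Mor S T2) (ψ2 : Mor T2 U)
    (k : U.H) (hg : ψ2.g * φ2.g = k * (ψ1.g * φ1.g))
    (hw : ∀ y, ψ2.Ω (φ2.Ω (of y)) = push (k • ·) (ψ1.Ω (φ1.Ω (of y)))) (n : ℕ) (x : S.Ch.X n) :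
    ψ2.ch.f n (φ2.ch.f n x) = ψ1.ch.f n (φ1.ch.f n x) := by
  refine Qeq ((ψ2.op (n + 1)).comp (φ2.op (n + 1))) ((ψ1.op (n + 1)).comp (φ1.op (n + 1)))
      (fun t y => ?_) x
  simp only [AddMonoidHom.comp_apply, Mor.op_B, hw, Mor.push_smul_smul, hg]
  rw [← Mor.push_smul_smul (k : G)]
  exact U.B_smul k _ _

/-- Strict equality of composites up to an inner conjugation. -/
lemma PMor.sqk {P P1 P2 Q : Pr G} (φ1 : PMor P P1) (ψ1 : PMor P1 Q) (φ2 : PMor P P2)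
    (ψ2 : PMor P2 Q) (k : Q.S.H) (hg : ψ2.a.g * φ2.a.g = k * (ψ1.a.g * φ1.a.g))
    (hwa : ∀ y, ψ2.a.Ω (φ2.a.Ω (of y)) = push (k • ·) (ψ1.a.Ω (φ1.a.Ω (of y))))
    (hwb : ∀ y, ψ2.b.Ω (φ2.b.Ω (of y)) =
      push ((⟨k, Q.hle k.2⟩ : Q.T.H) • ·) (ψ1.b.Ω (φ1.b.Ω (of y)))) (n : ℕ) (x : P.Rel.X n) :
    ψ2.rel.f n (φ2.rel.f n x) = ψ1.rel.f n (φ1.rel.f n x) := by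
  have hb := Mor.sqk φ1.b ψ1.b φ2.b ψ2.b ⟨k, Q.hle k.2⟩
    (by rw [φ1.hg, φ2.hg, ψ1.hg, ψ2.hg]; exact hg) hwb
  have ha := Mor.sqk φ1.a ψ1.a φ2.a ψ2.a k hg hwa
  cases n with
  | zero => exact hb 0 x
  | succ n => exact (cp_inj _).2 ⟨hb (n + 1) x.1, ha n x.2⟩

lemma PMor.comp_eq {P P1 Q : Pr G} (φ : PMor P P1) (ψ : PMor P1 Q) (χ : PMor P Q)
    (hg : ψ.a.g * φ.a.g = χ.a.g)
    (hwa : ∀ y, ψ.a.Ω (φ.a.Ω (of y)) = χ.a.Ω (of y))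
    (hwb : ∀ y, ψ.b.Ω (φ.b.Ω (of y)) = χ.b.Ω (of y)) (n : ℕ) (x : P.Rel.X n) :
    ψ.rel.f n (φ.rel.f n x) = χ.rel.f n x := by
  have hb := Mor.comp_eq φ.b ψ.b χ.b (by rw [φ.hg, ψ.hg, χ.hg]; exact hg) hwb
  have ha := Mor.comp_eq φ.a ψ.a χ.a hg hwa
  cases n with
  | zero => exact hb 0 x
  | succ n => exact (cp_inj _).2 ⟨hb (n + 1) x.1, ha n x.2⟩

/-- Prism homotopy on relative cycles. -/
lemma PMor.prism {P Q : Pr G} (f f' : PMor P Q)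
    (hc : ∀ h ∈ P.T.H, f.a.g * h * (f.a.g)⁻¹ = f'.a.g * h * (f'.a.g)⁻¹)
    (hwa : ∀ y, f.a.Ω (of y) = f'.a.Ω (of y)) (hwb : ∀ y, f.b.Ω (of y) = f'.b.Ω (of y))
    {n : ℕ} {x : P.Rel.X n} (hx : x ∈ P.Rel.cyc n) : f'.rel.f n x - f.rel.f n x ∈ Q.Rel.bdy n := by
  have ha : ∀ h ∈ P.S.H, f.a.g * h * (f.a.g)⁻¹ = f'.a.g * h * (f'.a.g)⁻¹ :=
    fun h hh => hc h (P.hle hh)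
  have hb : ∀ h ∈ P.T.H, f.b.g * h * (f.b.g)⁻¹ = f'.b.g * h * (f'.b.g)⁻¹ :=
    fun h hh => by rw [f.hg, f'.hg]; exact hc h hh
  refine coneHty f.sq f'.sq (Mor.prism f.a f'.a ha hwa) (Mor.prism f.b f'.b hb hwb) ?_ hx
  intro n x
  refine Qeq ((Mor.prOp f.b f'.b hb (n + 1)).comp (P.φ.op (n + 1)))
    ((Q.φ.op (n + 2)).comp (Mor.prOp f.a f'.a ha (n + 1))) (fun t y => ?_) x
  simp only [AddMonoidHom.comp_apply, Mor.op_B, Mor.prOp_B, push_of, f.hw, f.hg, f'.hg, one_smul]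
  rw [push_id (fun x => x) (fun _ => rfl)]

/-- Undecorated pair. -/
abbrev ptP (H H' : Subgroup G) (h : H ≤ H') : Pr G where
  S := pt H
  T := pt H'
  hle := h
  ι := id
  hι _ _ := rfl

/-- Conjugation morphism of undecorated groups. -/
abbrev ptM (H K : Subgroup G) (g : G) (hg : ∀ h ∈ H, g * h * g⁻¹ ∈ K) : Mor (pt H) (pt K) :=
  mor (pt H) (pt K) g hg id (fun _ _ => rfl)

abbrev ptPM {H H' K K' : Subgroup G} (h : H ≤ H') (k : K ≤ K') (g : G)
    (hg : ∀ h ∈ H, g * h * g⁻¹ ∈ K) (hg' : ∀ h ∈ H', g * h * g⁻¹ ∈ K') :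
    PMor (ptP H H' h) (ptP K K' k) where
  a := ptM H K g hg
  b := ptM H' K' g hg'
  hg := rfl
  hw y := by simp

/-- Inclusion morphism. -/
abbrev ptI {H H' K K' : Subgroup G} (h : H ≤ H') (k : K ≤ K') (l : H ≤ K) (l' : H' ≤ K') :
    PMor (ptP H H' h) (ptP K K' k) :=
  ptPM h k 1 (fun x hx => by simpa using l hx) (fun x hx => by simpa using l' hx)

/-- Vanishing of relative homology. -/
def VanP (H H' : Subgroup G) (n : ℕ) : Prop :=
  ∀ h : H ≤ H', ∀ z ∈ (ptP H H' h).Rel.cyc n, z ∈ (ptP H H' h).Rel.bdy n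

/-- Surjectivity on relative homology. -/
def SurP (K K' H H' : Subgroup G) (n : ℕ) : Prop :=
  ∀ (k : K ≤ K') (h : H ≤ H') (l : K ≤ H) (l' : K' ≤ H'), ∀ z ∈ (ptP H H' h).Rel.cyc n,
    ∃ w ∈ (ptP K K' k).Rel.cyc n, z - (ptI k h l l').rel.f n w ∈ (ptP H H' h).Rel.bdy n

/-- The morphism from the pair of stabilizers of a decoration. -/
abbrev iy (P : Pr G) {K K' : Subgroup G} (k : K ≤ K') (y : P.S.Y)
    (hK : ∀ h ∈ K, ∃ hh : h ∈ P.S.H, (⟨h, hh⟩ : P.S.H) • y = y)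
    (hK' : ∀ h ∈ K', ∃ hh : h ∈ P.T.H, (⟨h, hh⟩ : P.T.H) • P.ι y = P.ι y) :
    PMor (ptP K K' k) P where
  a := mor1 (pt K) P.S (fun h hh => (hK h hh).1) (fun _ => y) (fun h _ => (hK h h.2).2.symm)
  b := mor1 (pt K') P.T (fun h hh => (hK' h hh).1) (fun _ => P.ι y) (fun h _ => (hK' h h.2).2.symm)
  hg := rfl
  hw _ := by simp

end

section ret
variable {G : Type} [Group G] (S : GS G) (o : S.Y) (K : Subgroup G)

open Classical in
/-- Retraction onto the chains of a stabilizer. -/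
noncomputable def ret (hK : ∀ h, h ∈ K ↔ ∃ hh : h ∈ S.H, (⟨h, hh⟩ : S.H) • o = o) (n : ℕ) :
    Z (S.Q n) →+ Z ((pt K).Q n) :=
  S.out (fun t y => if h : ∃ h : S.H, y = h • o then of ((pt K).q (h.choose⁻¹ • t) PUnit.unit) else 0)
  (by
    intro h t y
    by_cases hy : ∃ k : S.H, y = k • o
    · have hy2 : ∃ k : S.H, h • y = k • o := by
        obtain ⟨k, hk⟩ := hy
        exact ⟨h * k, by rw [hk, mul_smul]⟩
      rw [dif_pos hy, dif_pos hy2]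
      have e1 := hy.choose_spec
      have e2 := hy2.choose_spec
      set k1 := hy.choose
      set k2 := hy2.choose
      have hm : ((k2⁻¹ * h * k1 : S.H) : G) ∈ K := by
        rw [hK]
        refine ⟨(k2⁻¹ * h * k1 : S.H).2, ?_⟩
        change (k2⁻¹ * h * k1) • o = o
        rw [mul_smul, ← e1, mul_smul, e2, inv_smul_smul]
      have := (pt K).q_smul ⟨_, hm⟩ (k1⁻¹ • t) PUnit.unit
      rw [← this]
      congr 2
      change k2⁻¹ • h • t = (k2⁻¹ * h * k1) • k1⁻¹ • t
      simp only [smul_smul]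
      congr 1
      group
    · have hy2 : ¬ ∃ k : S.H, h • y = k • o := by
        rintro ⟨k, hk⟩
        exact hy ⟨h⁻¹ * k, by rw [mul_smul, ← hk, inv_smul_smul]⟩
      rw [dif_neg hy, dif_neg hy2])

variable {S o K} (hK : ∀ h, h ∈ K ↔ ∃ hh : h ∈ S.H, (⟨h, hh⟩ : S.H) • o = o)

lemma ret_neg {y : S.Y} (hy : ¬ ∃ k : S.H, y = k • o) (n : ℕ) (u : Z (Tup G n)) :
    ret S o K hK n (S.B u (of y)) = 0 := by
  refine heq ((ret S o K hK n).comp ((AddMonoidHom.flip S.B) (of y))) 0 (fun t => ?_) u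
  simp [ret, hy]

lemma ret_pos (h : S.H) (n : ℕ) (u : Z (Tup G n)) :
    ret S o K hK n (S.B u (of (h • o))) = (pt K).B (push (h⁻¹ • ·) u) (of PUnit.unit) := by
  have h1 : S.B u (of (h • o)) = S.B (push (h⁻¹ • ·) u) (of o) := by
    conv_rhs => rw [← S.B_smul h]
    rw [push_push, push_of]
    congr 2
    refine (heq (push _) (AddMonoidHom.id _) (fun t => ?_) u).symm
    simp only [push_of, smul_inv_smul]
    rfl
  rw [h1]
  generalize push (h⁻¹ • ·) u = v
  refine heq ((ret S o K hK n).comp ((AddMonoidHom.flip S.B) (of o)))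
    ((AddMonoidHom.flip (pt K).B) (of PUnit.unit)) (fun t => ?_) v
  have he : ∃ k : S.H, o = k • o := ⟨1, by simp⟩
  simp only [AddMonoidHom.comp_apply, AddMonoidHom.flip_apply, B_of, ret, out_of]
  rw [dif_pos he]
  have e1 := he.choose_spec
  set k1 := he.choose
  have hm : ((k1 : S.H) : G) ∈ K := by
    rw [hK]
    exact ⟨k1.2, e1.symm⟩
  have := (pt K).q_smul ⟨_, hm⟩ (k1⁻¹ • t) PUnit.unit
  rw [← this]
  change of ((pt K).q (k1 • k1⁻¹ • t) PUnit.unit) = _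
  rw [smul_inv_smul, B_of]

/-- The retraction as a chain map. -/
noncomputable def retC : CHom S.Ch (pt K).Ch where
  f n := ret S o K hK (n + 1)
  comm n x := by
    refine Qeq (((pt K).dS (n + 1)).comp (ret S o K hK (n + 2)))
      ((ret S o K hK (n + 1)).comp (S.dS (n + 1))) (fun t y => ?_) x
    simp only [AddMonoidHom.comp_apply, dS_B]
    by_cases hy : ∃ k : S.H, y = k • o
    · obtain ⟨k, rfl⟩ := hy
      rw [ret_pos, ret_pos, dS_B, bd_smul]
    · rw [ret_neg hK hy, ret_neg hK hy, map_zero]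

end ret

section decomp
variable {G : Type} [Group G]

/-- Finite decomposition along orbit representatives. -/
lemma ret_sum (S : GS G) {I : Type} (rep : I → S.Y) (K : I → Subgroup G)
    (hK : ∀ o h, h ∈ K o ↔ ∃ hh : h ∈ S.H, (⟨h, hh⟩ : S.H) • rep o = rep o)
    (ex : ∀ y, ∃ o, ∃ h : S.H, y = h • rep o)
    (un : ∀ o o' (h h' : S.H), h • rep o = h' • rep o' → o = o')
    (i : ∀ o, Mor (pt (K o)) S) (hi : ∀ o, (i o).g = 1)
    (hi2 : ∀ o, (i o).Ω (of PUnit.unit) = of (rep o)) (n : ℕ)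
    (c : S.Ch.X n) : ∃ O : Finset I, ∀ O', O ⊆ O' →
      ∑ o ∈ O', (i o).ch.f n ((retC (hK o)).f n c) = c := by
  classical
  change Z (S.Q (n + 1)) at c
  induction c using Z.ind with
  | zero => exact ⟨∅, fun O' _ => by simp⟩
  | sub a b ha hb =>
    obtain ⟨O1, h1⟩ := ha
    obtain ⟨O2, h2⟩ := hb
    refine ⟨O1 ∪ O2, fun O' hO => ?_⟩
    have e1 := h1 O' (Finset.union_subset_left hO)
    have e2 := h2 O' (Finset.union_subset_right hO)
    simp only [map_sub, Finset.sum_sub_distrib]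
    rw [e1, e2]
  | of s =>
    obtain ⟨t, y, rfl⟩ := S.q_surj s
    obtain ⟨o, h, rfl⟩ := ex y
    refine ⟨{o}, fun O' hO => ?_⟩
    rw [Finset.sum_eq_single_of_mem o (by simpa using hO)]
    · change (i o).op (n + 1) (ret S (rep o) (K o) (hK o) (n + 1) (of (S.q t (h • rep o)))) = _
      rw [← B_of, ret_pos, Mor.op_B, hi, hi2, push_one, ← S.B_smul h]
      simp
    · intro o' _ hne
      change (i o').op (n + 1) (ret S (rep o') (K o') (hK o') (n + 1) (of (S.q t (h • rep o)))) = _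
      rw [← B_of, ret_neg, map_zero]
      rintro ⟨k, hk⟩
      exact hne (un _ _ _ _ hk.symm)

/-- Every relative cycle is a sum of cycles coming from stabilizers. -/
lemma decomp (P : Pr G) (K K' : P.S.Y → Subgroup G) (hKK : ∀ y, K y ≤ K' y)
    (hK : ∀ y h, h ∈ K y ↔ ∃ hh : h ∈ P.S.H, (⟨h, hh⟩ : P.S.H) • y = y)
    (hK' : ∀ y h, h ∈ K' y ↔ ∃ hh : h ∈ P.T.H, (⟨h, hh⟩ : P.T.H) • P.ι y = P.ι y)
    (ex : ∀ y', ∃ y, ∃ h : P.T.H, y' = h • P.ι y)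
    (un : ∀ y1 y2 (h : P.T.H), P.ι y1 = h • P.ι y2 → ∃ h : P.S.H, y1 = h • y2)
    (n : ℕ) (z : P.Rel.X n) (hz : z ∈ P.Rel.cyc n) :
    z ∈ AddSubgroup.closure {x | ∃ y, ∃ w ∈ (ptP (K y) (K' y) (hKK y)).Rel.cyc n,
      x = (iy P (hKK y) y (fun h => (hK y h).1) (fun h => (hK' y h).1)).rel.f n w} := by
  classical
  let I := MulAction.orbitRel.Quotient P.S.H P.S.Y
  let rep : I → P.S.Y := Quotient.out
  have ex1 : ∀ y, ∃ o, ∃ h : P.S.H, y = h • rep o := by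
    intro y
    refine ⟨Quotient.mk (MulAction.orbitRel P.S.H P.S.Y) y, ?_⟩
    have := Quotient.mk_out (s := MulAction.orbitRel P.S.H P.S.Y) y
    obtain ⟨h, hh⟩ := (MulAction.orbitRel_apply.1 ((MulAction.orbitRel P.S.H P.S.Y).symm this))
    exact ⟨h, hh.symm⟩
  have un1 : ∀ o o' (h h' : P.S.H), h • rep o = h' • rep o' → o = o' := by
    intro o o' h h' e
    rw [← Quotient.out_eq o, ← Quotient.out_eq o']
    apply Quotient.sound
    apply MulAction.orbitRel_apply.2
    refine ⟨h⁻¹ * h', ?_⟩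
    change (h⁻¹ * h') • rep o' = rep o
    rw [mul_smul, ← e, inv_smul_smul]
  have ex2 : ∀ y', ∃ o, ∃ h : P.T.H, y' = h • P.ι (rep o) := by
    intro y'
    obtain ⟨y, h, rfl⟩ := ex y'
    obtain ⟨o, k, rfl⟩ := ex1 y
    exact ⟨o, h * ⟨k, P.hle k.2⟩, by rw [P.hι, mul_smul]⟩
  have un2 : ∀ o o' (h h' : P.T.H), h • P.ι (rep o) = h' • P.ι (rep o') → o = o' := by
    intro o o' h h' e
    obtain ⟨k, hk⟩ := un (rep o) (rep o') (h⁻¹ * h') (by rw [mul_smul, ← e, inv_smul_smul])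
    exact un1 o o' 1 k (by rw [one_smul, hk])
  let i := fun o : I => iy P (hKK (rep o)) (rep o) (fun h => (hK _ h).1) (fun h => (hK' _ h).1)
  have sqr : ∀ o n x, (retC (hK' (rep o))).f n (P.φ.ch.f n x) =
      (ptP (K (rep o)) (K' (rep o)) (hKK _)).φ.ch.f n ((retC (hK (rep o))).f n x) := by
    intro o n x
    refine Qeq ((ret P.T _ _ (hK' (rep o)) (n + 1)).comp (P.φ.op (n + 1)))
      (((ptP (K (rep o)) (K' (rep o)) (hKK _)).φ.op (n + 1)).comp
        (ret P.S _ _ (hK (rep o)) (n + 1))) (fun t y => ?_) x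
    simp only [AddMonoidHom.comp_apply, Mor.op_B, push_of]
    by_cases hy : ∃ k : P.S.H, y = k • rep o
    · obtain ⟨k, rfl⟩ := hy
      rw [P.hι, ret_pos, ret_pos, Mor.op_B]
      simp
      rfl
    · rw [ret_neg _ hy, ret_neg, map_zero]
      rintro ⟨k, hk⟩
      exact hy (un _ _ _ hk)
  let r := fun o : I => coneMap (φ := P.φ.ch)
    (φ' := (ptP (K (rep o)) (K' (rep o)) (hKK _)).φ.ch) (retC (hK (rep o)))
    (retC (hK' (rep o))) (sqr o)
  have key : ∃ O : Finset I, ∑ o ∈ O, (i o).rel.f n ((r o).f n z) = z := by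
    have hb := fun (n : ℕ) (c : P.T.Ch.X n) => ret_sum P.T (fun o => P.ι (rep o))
      (fun o => K' (rep o)) (fun o => hK' (rep o)) ex2
      un2 (fun o => (i o).b) (fun o => rfl) (fun o => by simp [i]) n c
    have ha := fun (n : ℕ) (c : P.S.Ch.X n) => ret_sum P.S rep (fun o => K (rep o))
      (fun o => hK (rep o)) ex1 un1 (fun o => (i o).a) (fun o => rfl) (fun o => by simp [i]) n c
    cases n with
    | zero =>
      obtain ⟨O, hO⟩ := hb 0 z
      exact ⟨O, hO O subset_rfl⟩
    | succ n =>
      obtain ⟨O1, hO1⟩ := hb (n + 1) z.1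
      obtain ⟨O2, hO2⟩ := ha n z.2
      refine ⟨O1 ∪ O2, ?_⟩
      have e1 := hO1 _ (Finset.subset_union_left (s₂ := O2))
      have e2 := hO2 _ (Finset.subset_union_right (s₁ := O1))
      have : ∀ O : Finset I, ∑ o ∈ O, (i o).rel.f (n + 1) ((r o).f (n + 1) z) =
        P.mk2 (∑ o ∈ O, (i o).b.ch.f (n + 1) ((retC (hK' (rep o))).f (n + 1) z.1))
          (∑ o ∈ O, (i o).a.ch.f n ((retC (hK (rep o))).f n z.2)) := by
        intro O
        induction O using Finset.induction_on with
        | empty => rfl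
        | insert a s ha ih =>
          rw [Finset.sum_insert ha, Finset.sum_insert ha, Finset.sum_insert ha, ih]
          rfl
      rw [this, e1, e2]
      rfl
  obtain ⟨O, hO⟩ := key
  rw [← hO]
  refine sum_mem fun o _ => AddSubgroup.subset_closure ⟨rep o, (r o).f n z, (r o).cyc hz, rfl⟩

end decomp

end FSH

namespace FSH
open FreeAbelianGroup (of)
open GS

section
variable {G : Type} [Group G]

/-- Chain maps depend only on the conjugating element and the decoration map. -/
lemma PMor.rel_ext {P Q : Pr G} (f f' : PMor P Q) (hg : f.a.g = f'.a.g)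
    (hwa : ∀ y, f.a.Ω (of y) = f'.a.Ω (of y)) (hwb : ∀ y, f.b.Ω (of y) = f'.b.Ω (of y))
    (n : ℕ) (x : P.Rel.X n) : f.rel.f n x = f'.rel.f n x := by
  have hb : ∀ n (x : P.T.Ch.X n), f.b.ch.f n x = f'.b.ch.f n x := fun n x => by
    refine Qeq (f.b.op (n + 1)) (f'.b.op (n + 1)) (fun t y => ?_) x
    rw [Mor.op_B, Mor.op_B, hwb, f.hg, f'.hg, hg]
  have ha : ∀ n (x : P.S.Ch.X n), f.a.ch.f n x = f'.a.ch.f n x := fun n x => by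
    refine Qeq (f.a.op (n + 1)) (f'.a.op (n + 1)) (fun t y => ?_) x
    rw [Mor.op_B, Mor.op_B, hwa, hg]
  cases n with
  | zero => exact hb 0 x
  | succ n => exact (cp_inj _).2 ⟨hb (n + 1) x.1, ha n x.2⟩

/-- Additivity of the chain maps in the decoration map. -/
lemma PMor.rel_sub {P Q : Pr G} (f f' f'' : PMor P Q) (hg : f.a.g = f''.a.g) (hg' : f'.a.g = f''.a.g)
    (hwa : ∀ y, f.a.Ω (of y) - f'.a.Ω (of y) = f''.a.Ω (of y))
    (hwb : ∀ y, f.b.Ω (of y) - f'.b.Ω (of y) = f''.b.Ω (of y))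
    (n : ℕ) (x : P.Rel.X n) : f.rel.f n x - f'.rel.f n x = f''.rel.f n x := by
  have hb : ∀ n (x : P.T.Ch.X n), f.b.ch.f n x - f'.b.ch.f n x = f''.b.ch.f n x := fun n x => by
    refine Qeq (f.b.op (n + 1) - f'.b.op (n + 1)) (f''.b.op (n + 1)) (fun t y => ?_) x
    rw [AddMonoidHom.sub_apply, Mor.op_B, Mor.op_B, Mor.op_B, ← hwb, f.hg, f'.hg, f''.hg, hg, hg',
      map_sub]
  have ha : ∀ n (x : P.S.Ch.X n), f.a.ch.f n x - f'.a.ch.f n x = f''.a.ch.f n x := fun n x => by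
    refine Qeq (f.a.op (n + 1) - f'.a.op (n + 1)) (f''.a.op (n + 1)) (fun t y => ?_) x
    rw [AddMonoidHom.sub_apply, Mor.op_B, Mor.op_B, Mor.op_B, ← hwa, hg, hg', map_sub]
  cases n with
  | zero => exact hb 0 x
  | succ n => exact (cp_inj _).2 ⟨hb (n + 1) x.1, ha n x.2⟩

/-- Invariance of a chain of decorations. -/
def Inv (P : Pr G) {K K' : Subgroup G} (lK : K ≤ P.S.H) (lK' : K' ≤ P.T.H) (w : Z P.S.Y) : Prop :=
  (∀ h (hh : h ∈ K), push ((⟨h, lK hh⟩ : P.S.H) • ·) w = w) ∧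
  (∀ h (hh : h ∈ K'), push ((⟨h, lK' hh⟩ : P.T.H) • ·) (push P.ι w) = push P.ι w)

/-- The morphism attached to an invariant chain of decorations. -/
def iw (P : Pr G) {K K' : Subgroup G} (k : K ≤ K') {lK : K ≤ P.S.H} {lK' : K' ≤ P.T.H}
    {w : Z P.S.Y} (hw : Inv P lK lK' w) : PMor (ptP K K' k) P where
  a :=
    { g := 1
      hg := fun h hh => by simpa using lK hh
      Ω := lin fun _ => w
      hΩ := fun h y => by
        rw [lin_of]
        conv_lhs => rw [← hw.1 h h.2]
        congr 2
        funext y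
        congr 1
        ext; simp }
  b :=
    { g := 1
      hg := fun h hh => by simpa using lK' hh
      Ω := lin fun _ => push P.ι w
      hΩ := fun h y => by
        rw [lin_of]
        conv_lhs => rw [← hw.2 h h.2]
        congr 2
        funext y
        congr 1
        ext; simp }
  hg := rfl
  hw y := by simp

/-- The invariant chains on which a given cycle lands in a given subgroup. -/
def IB (P : Pr G) {K K' : Subgroup G} (k : K ≤ K') (lK : K ≤ P.S.H) (lK' : K' ≤ P.T.H) {n : ℕ}
    (z : (ptP K K' k).Rel.X n) (R : AddSubgroup (P.Rel.X n)) : AddSubgroup (Z P.S.Y) :=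
  AddSubgroup.ofSub {w | ∃ h : Inv P lK lK' w, (iw P k h).rel.f n z ∈ R}
    ⟨0, ⟨fun h hh => by simp, fun h hh => by simp⟩, by
      have h0 : Inv P lK lK' (0 : Z P.S.Y) := ⟨fun h hh => by simp, fun h hh => by simp⟩
      have := PMor.rel_sub (iw P k h0) (iw P k h0) (iw P k h0) rfl rfl (fun y => by simp [iw])
        (fun y => by simp [iw]) n z
      rw [sub_self] at this
      rw [← this]; exact R.zero_mem⟩
    (by
      rintro w1 ⟨h1, r1⟩ w2 ⟨h2, r2⟩
      have h3 : Inv P lK lK' (w1 - w2) := ⟨fun h hh => by rw [map_sub, h1.1 h hh, h2.1 h hh],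
        fun h hh => by rw [map_sub, map_sub, h1.2 h hh, h2.2 h hh]⟩
      rw [← sub_eq_add_neg]
      refine ⟨h3, ?_⟩
      rw [← PMor.rel_sub (iw P k h1) (iw P k h2) (iw P k h3) rfl rfl (fun y => by simp [iw])
        (fun y => by simp [iw]) n z]
      exact R.sub_mem r1 r2)

lemma mem_IB (P : Pr G) {K K' : Subgroup G} (k : K ≤ K') (lK : K ≤ P.S.H) (lK' : K' ≤ P.T.H)
    {n : ℕ} (z : (ptP K K' k).Rel.X n) (R : AddSubgroup (P.Rel.X n)) (w : Z P.S.Y) :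
    w ∈ IB P k lK lK' z R ↔ ∃ h : Inv P lK lK' w, (iw P k h).rel.f n z ∈ R := Iff.rfl

lemma IB_of (P : Pr G) {K K' : Subgroup G} (k : K ≤ K') (lK : K ≤ P.S.H) (lK' : K' ≤ P.T.H)
    {n : ℕ} (z : (ptP K K' k).Rel.X n) (R : AddSubgroup (P.Rel.X n)) (y : P.S.Y)
    (hK : ∀ h ∈ K, ∃ hh : h ∈ P.S.H, (⟨h, hh⟩ : P.S.H) • y = y)
    (hK' : ∀ h ∈ K', ∃ hh : h ∈ P.T.H, (⟨h, hh⟩ : P.T.H) • P.ι y = P.ι y) :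
    of y ∈ IB P k lK lK' z R ↔ (iy P k y hK hK').rel.f n z ∈ R := by
  have hi : Inv P lK lK' (of y) := ⟨fun h hh => by rw [push_of]; congr 1; exact (hK h hh).2,
    fun h hh => by rw [push_of, push_of]; congr 1; exact (hK' h hh).2⟩
  have := PMor.rel_ext (iy P k y hK hK') (iw P k hi) rfl (fun y => by simp [iw])
    (fun y => by simp [iw]) n z
  rw [mem_IB, this]
  exact ⟨fun ⟨_, h⟩ => h, fun h => ⟨hi, h⟩⟩

end

/-- Tuples with prescribed head. -/
def Hd {E : Type} (e : E) (pd : E → Prop) : ∀ {p : ℕ}, Tup E p → Prop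
  | 0, _ => False
  | _ + 1, y => y.hd = e ∧ Tup.All pd y.tl

lemma mu {E : Type} (pd : E → Prop) {p : ℕ} (v1 v2 vt : E) (x : Tup E p) (hx : Tup.All pd x)
    (S : AddSubgroup (Z (Tup E (p + 2))))
    (h0 : bd (p + 2) (of (Tup.cons v1 (Tup.cons v2 (Tup.cons vt x)))) ∈ S)
    (h1 : of (Tup.cons v2 (Tup.cons vt x)) - of (Tup.cons v1 (Tup.cons v2 x)) ∈ S)
    (h2 : of (Tup.cons v1 (Tup.cons vt x)) - of (Tup.cons v1 (Tup.cons v2 x)) ∈ S)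
    (h3 : ∀ y : Tup E p, Hd vt pd y → of (Tup.cons v1 (Tup.cons v2 y)) ∈ S) :
    of (Tup.cons v1 (Tup.cons v2 x)) ∈ S := by
  have key : bd p (of (Tup.cons vt x)) - of x ∈ (S.comap ((cn v1).comp (cn v2))) := by
    cases p with
    | zero =>
      rw [bd_zero, show x = Tup.nil from rfl, sub_self]; exact zero_mem _
    | succ p =>
      rw [bd_succ, sub_sub_cancel_left]
      apply neg_mem
      have h4 := bd_mem pd p x hx
      have : AddSubgroup.closure {z | ∃ y, Tup.All pd y ∧ z = of y} ≤
          ((S.comap ((cn v1).comp (cn v2))).comap (cn vt)) := by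
        rw [AddSubgroup.closure_le]
        rintro _ ⟨y, hy, rfl⟩
        simpa using h3 (Tup.cons vt y) ⟨rfl, hy⟩
      exact this h4
  rw [AddSubgroup.mem_comap, map_sub] at key
  rw [bd_succ, bd_succ] at h0
  simp only [AddMonoidHom.comp_apply, map_sub, push_of] at key h0
  have := S.sub_mem (S.sub_mem (S.add_mem (S.sub_mem h0 h1) h2) key) (zero_mem S)
  convert this using 1
  abel

/-- Pairs of groups acting on nested subsets. -/
structure XP (G : Type) [Group G] where
  H : Subgroup G
  H' : Subgroup G
  hle : H ≤ H'
  E : Type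
  act : MulAction G E
  X : Set E
  X' : Set E
  hX : X ⊆ X'
  sX : ∀ h ∈ H, ∀ x ∈ X, h • x ∈ X
  sX' : ∀ h ∈ H', ∀ x ∈ X', h • x ∈ X'

namespace XP
variable {G : Type} [Group G] (T : XP G)

attribute [instance] XP.act

instance aX : MulAction T.H T.X where
  smul h x := ⟨(h : G) • x.1, T.sX h h.2 x x.2⟩
  one_smul x := Subtype.ext (one_smul G x.1)
  mul_smul h k x := Subtype.ext (mul_smul (h : G) (k : G) x.1)

instance aX' : MulAction T.H' T.X' where
  smul h x := ⟨(h : G) • x.1, T.sX' h h.2 x x.2⟩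
  one_smul x := Subtype.ext (one_smul G x.1)
  mul_smul h k x := Subtype.ext (mul_smul (h : G) (k : G) x.1)

/-- The pair of powers. -/
abbrev P (p : ℕ) : Pr G where
  S := pw T.H T.X T.aX p
  T := pw T.H' T.X' T.aX' p
  hle := T.hle
  ι := Tup.map (Set.inclusion T.hX)
  hι h y := Tup.map_smul (Set.inclusion T.hX) h (⟨h, T.hle h.2⟩ : T.H') (fun _ => rfl) _ y

/-- The face morphism. -/
def fP (p : ℕ) : PMor (T.P (p + 1)) (T.P p) where
  a := face T.H T.X T.aX p
  b := face T.H' T.X' T.aX' p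
  hg := rfl
  hw y := by
    change bd p (of (Tup.map _ y)) = push (Tup.map _) (bd p (of y))
    rw [← bd_map, push_of]

lemma fP_fP (p n : ℕ) (x : (T.P (p + 2)).Rel.X n) :
    (T.fP p).rel.f n ((T.fP (p + 1)).rel.f n x) = 0 := by
  cases n with
  | zero => exact face_face T.H' T.X' T.aX' p 0 x
  | succ n => exact (cp_inj _).2 ⟨face_face T.H' T.X' T.aX' p (n + 1) x.1,
      face_face T.H T.X T.aX p n x.2⟩

lemma fP_ex0 (x0 : T.X) (n : ℕ) (x : (T.P 0).Rel.X n) : ∃ y, (T.fP 0).rel.f n y = x := by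
  obtain ⟨ρ, hρ, -⟩ := exists_rho T.H
  obtain ⟨ρ', hρ', -⟩ := exists_rho T.H'
  have ha := face_ex0 T.H T.X T.aX (fun s => ρ s • x0) (fun h s => by rw [hρ, mul_smul])
  have hb := face_ex0 T.H' T.X' T.aX' (fun s => ρ' s • (Set.inclusion T.hX x0))
    (fun h s => by rw [hρ', mul_smul])
  cases n with
  | zero => exact hb 0 x
  | succ n =>
    obtain ⟨b, a, rfl⟩ := cp_surj _ x
    obtain ⟨b', rfl⟩ := hb _ b
    obtain ⟨a', rfl⟩ := ha _ a
    exact ⟨(T.P 1).mk2 b' a', rfl⟩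

lemma fP_ex (x0 : T.X) (p n : ℕ) (x : (T.P (p + 1)).Rel.X n) (hx : (T.fP p).rel.f n x = 0) :
    ∃ y, (T.fP (p + 1)).rel.f n y = x := by
  obtain ⟨ρ, hρ, -⟩ := exists_rho T.H
  obtain ⟨ρ', hρ', -⟩ := exists_rho T.H'
  have ha := face_ex T.H T.X T.aX (fun s => ρ s • x0) (fun h s => by rw [hρ, mul_smul])
  have hb := face_ex T.H' T.X' T.aX' (fun s => ρ' s • (Set.inclusion T.hX x0))
    (fun h s => by rw [hρ', mul_smul])
  cases n with
  | zero => exact hb p 0 x hx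
  | succ n =>
    obtain ⟨b, a, rfl⟩ := cp_surj _ x
    have hx' := (cp_inj (T.P p).φ.ch (b := (T.fP p).b.ch.f (n + 1) b)
      (a := (T.fP p).a.ch.f n a) (b' := 0) (a' := 0)).1 hx
    obtain ⟨b', rfl⟩ := hb p _ b hx'.1
    obtain ⟨a', rfl⟩ := ha p _ a hx'.2
    exact ⟨(T.P (p + 2)).mk2 b' a', rfl⟩

/-- Boundaries plus images of cycles under the face map. -/
def R (p q : ℕ) : AddSubgroup ((T.P p).Rel.X q) :=
  (T.P p).Rel.bdy q ⊔ ((T.P (p + 1)).Rel.cyc q).map ((T.fP p).rel.f q)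

/-- The devissage for the pair. -/
lemma devis (x0 : T.X) (n : ℕ)
    (hZ : ∀ p q, p + q + 1 = n → ∀ a ∈ (T.P (p + 2)).Rel.cyc q, a ∈ T.R (p + 2) q)
    (x : (T.P 0).Rel.X n) (hx : x ∈ (T.P 0).Rel.cyc n) :
    ∃ e ∈ (T.P 1).Rel.cyc n, (T.fP 0).rel.f n e = x := by
  refine devissage (fun p => (T.P p).Rel) (fun p => (T.fP p).rel) (T.fP_fP) (T.fP_ex0 x0)
    (T.fP_ex x0) n ?_ x hx
  intro p q hpq a ha
  obtain ⟨y, ⟨b, rfl⟩, z, ⟨e, he, rfl⟩, h⟩ := AddSubgroup.mem_sup.1 (hZ p q hpq a ha)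
  exact ⟨b, e, he, h.symm⟩

/-- Undecorated version. -/
def toPt (p : ℕ) : PMor (T.P p) (ptP T.H T.H' T.hle) where
  a := mor1 _ _ (le_refl T.H) (fun _ => PUnit.unit) (fun _ _ => rfl)
  b := mor1 _ _ (le_refl T.H') (fun _ => PUnit.unit) (fun _ _ => rfl)
  hg := rfl
  hw _ := by simp

def ofPt : PMor (ptP T.H T.H' T.hle) (T.P 0) where
  a := mor1 _ _ (le_refl T.H) (fun _ => (Tup.nil : Tup T.X 0)) (fun _ _ => rfl)
  b := mor1 _ _ (le_refl T.H') (fun _ => (Tup.nil : Tup T.X' 0)) (fun _ _ => rfl)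
  hg := rfl
  hw _ := by simp

lemma devis1 (x0 : T.X) (n : ℕ)
    (hZ : ∀ p q, p + q + 1 = n → ∀ a ∈ (T.P (p + 2)).Rel.cyc q, a ∈ T.R (p + 2) q)
    (z : (ptP T.H T.H' T.hle).Rel.X n) (hz : z ∈ (ptP T.H T.H' T.hle).Rel.cyc n) :
    ∃ e ∈ (T.P 1).Rel.cyc n, (T.toPt 1).rel.f n e = z := by
  obtain ⟨e, he, h⟩ := T.devis x0 n hZ (T.ofPt.rel.f n z) (T.ofPt.rel.cyc hz)
  refine ⟨e, he, ?_⟩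
  have h1 := PMor.comp_eq (T.fP 0) (T.toPt 0) (T.toPt 1) (by simp [fP, toPt, face])
    (fun y => by
      change push _ (bd 0 (of y)) = push _ (of y)
      rw [bd_zero]; simp)
    (fun y => by
      change push _ (bd 0 (of y)) = push _ (of y)
      rw [bd_zero]; simp) n e
  rw [← h1, h, PMor.comp_eq T.ofPt (T.toPt 0) (ptI T.hle T.hle le_rfl le_rfl)
    (by simp [ofPt, toPt]) (fun y => by simp [ofPt, toPt]) (fun y => by simp [ofPt, toPt])]
  cases n with
  | zero =>
    refine Qeq (S := pt T.H') ((ptM T.H' T.H' 1 (fun x hx => by simpa using hx)).op 1)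
      (AddMonoidHom.id _) (fun t y => ?_) z
    rw [Mor.op_B]; simp
  | succ n =>
    refine (cp_inj _).2 ⟨?_, ?_⟩
    · refine Qeq (S := pt T.H') ((ptM T.H' T.H' 1 (fun x hx => by simpa using hx)).op (n + 2))
        (AddMonoidHom.id _) (fun t y => ?_) z.1
      rw [Mor.op_B]; simp
    · refine Qeq (S := pt T.H) ((ptM T.H T.H 1 (fun x hx => by simpa using hx)).op (n + 1))
        (AddMonoidHom.id _) (fun t y => ?_) z.2
      rw [Mor.op_B]; simp

end XP
end FSH

namespace FSH
open FreeAbelianGroup (of)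
open GS

/-- A pair of dually paired spaces with a group action rich in rank one perturbations. -/
structure Stg (F 𝔾 : Type) [Field F] [Group 𝔾] where
  A : Type
  B : Type
  iA : AddCommGroup A
  mA : Module F A
  iB : AddCommGroup B
  mB : Module F B
  pr : A →ₗ[F] B →ₗ[F] F
  ra : 𝔾 →* (A ≃ₗ[F] A)
  rb : 𝔾 →* (B ≃ₗ[F] B)
  inv : ∀ g a b, pr (ra g a) (rb g b) = pr a b
  sepA : ∀ (Φ : Submodule F A) (v : A), v ∉ Φ → ∃ b, (∀ a ∈ Φ, pr a b = 0) ∧ pr v b ≠ 0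
  sepB : ∀ (Ψ : Submodule F B) (v : B), v ∉ Ψ → ∃ a, (∀ b ∈ Ψ, pr a b = 0) ∧ pr a v ≠ 0
  surj : ∀ u ξ, 1 + pr u ξ ≠ 0 → ∃ g, ∀ a, ra g a = a + pr a ξ • u
  inj : ∀ g, (∀ a, ra g a = a) → g = 1

attribute [instance] Stg.iA Stg.mA Stg.iB Stg.mB

namespace Stg
variable {F 𝔾 : Type} [Field F] [Group 𝔾] (σ : Stg F 𝔾)

lemma ra_mul (g h : 𝔾) (a : σ.A) : σ.ra (g * h) a = σ.ra g (σ.ra h a) := by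
  rw [map_mul]; rfl
lemma rb_mul (g h : 𝔾) (a : σ.B) : σ.rb (g * h) a = σ.rb g (σ.rb h a) := by
  rw [map_mul]; rfl
@[simp] lemma ra_one (a : σ.A) : σ.ra 1 a = a := by rw [map_one]; rfl
@[simp] lemma rb_one (a : σ.B) : σ.rb 1 a = a := by rw [map_one]; rfl
@[simp] lemma ra_inv_ra (g : 𝔾) (a : σ.A) : σ.ra g⁻¹ (σ.ra g a) = a := by
  rw [← ra_mul]; simp
@[simp] lemma ra_ra_inv (g : 𝔾) (a : σ.A) : σ.ra g (σ.ra g⁻¹ a) = a := by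
  rw [← ra_mul]; simp
@[simp] lemma rb_inv_rb (g : 𝔾) (a : σ.B) : σ.rb g⁻¹ (σ.rb g a) = a := by
  rw [← rb_mul]; simp
@[simp] lemma rb_rb_inv (g : 𝔾) (a : σ.B) : σ.rb g (σ.rb g⁻¹ a) = a := by
  rw [← rb_mul]; simp

instance : MulAction 𝔾 σ.A where
  smul g a := σ.ra g a
  one_smul a := σ.ra_one a
  mul_smul g h a := σ.ra_mul g h a

lemma smul_eq (g : 𝔾) (a : σ.A) : g • a = σ.ra g a := rfl

lemma ndB {b : σ.B} (h : ∀ a, σ.pr a b = 0) : b = 0 := by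
  by_contra hb
  obtain ⟨a, -, ha⟩ := σ.sepB ⊥ b (by simpa using hb)
  exact ha (h a)

lemma ndA {a : σ.A} (h : ∀ b, σ.pr a b = 0) : a = 0 := by
  by_contra hb
  obtain ⟨b, -, hb⟩ := σ.sepA ⊥ a (by simpa using hb)
  exact hb (h b)

lemma pr_ra (g : 𝔾) (a : σ.A) (b : σ.B) : σ.pr (σ.ra g a) b = σ.pr a (σ.rb g⁻¹ b) := by
  rw [← σ.inv g a, rb_rb_inv]

lemma pr_rb (g : 𝔾) (a : σ.A) (b : σ.B) : σ.pr a (σ.rb g b) = σ.pr (σ.ra g⁻¹ a) b := by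
  rw [pr_ra, inv_inv]

lemma fixB {g : 𝔾} {b : σ.B} : σ.rb g b = b ↔ ∀ a, σ.pr (σ.ra g a) b = σ.pr a b := by
  constructor
  · intro h a
    conv_lhs => rw [← h, σ.inv]
  · intro h
    rw [← sub_eq_zero]
    apply σ.ndB
    intro a
    rw [map_sub, pr_rb, ← h (σ.ra g⁻¹ a), ra_ra_inv, sub_self]

/-- The subgroup fixing subspaces on both sides. -/
def G (Φ : Submodule F σ.A) (Ψ : Submodule F σ.B) : Subgroup 𝔾 where
  carrier := {g | (∀ a ∈ Φ, σ.ra g a = a) ∧ (∀ b ∈ Ψ, σ.rb g b = b)}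
  one_mem' := by simp
  mul_mem' := by
    rintro g h ⟨h1, h2⟩ ⟨h3, h4⟩
    exact ⟨fun a ha => by rw [ra_mul, h3 a ha, h1 a ha], fun b hb => by rw [rb_mul, h4 b hb, h2 b hb]⟩
  inv_mem' := by
    rintro g ⟨h1, h2⟩
    refine ⟨fun a ha => ?_, fun b hb => ?_⟩
    · conv_lhs => rw [← h1 a ha, ra_inv_ra]
    · conv_lhs => rw [← h2 b hb, rb_inv_rb]

lemma mem_G {Φ : Submodule F σ.A} {Ψ : Submodule F σ.B} {g : 𝔾} :
    g ∈ σ.G Φ Ψ ↔ (∀ a ∈ Φ, σ.ra g a = a) ∧ (∀ b ∈ Ψ, σ.rb g b = b) := Iff.rfl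

lemma G_mono {Φ Φ' : Submodule F σ.A} {Ψ Ψ' : Submodule F σ.B} (h : Φ ≤ Φ') (h' : Ψ ≤ Ψ') :
    σ.G Φ' Ψ' ≤ σ.G Φ Ψ := fun _ hg => ⟨fun a ha => hg.1 a (h ha), fun b hb => hg.2 b (h' hb)⟩

lemma mem_G_sup {Φ Φ' : Submodule F σ.A} {Ψ Ψ' : Submodule F σ.B} {g : 𝔾} :
    g ∈ σ.G (Φ ⊔ Φ') (Ψ ⊔ Ψ') ↔ g ∈ σ.G Φ Ψ ∧ g ∈ σ.G Φ' Ψ' := by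
  constructor
  · intro h
    exact ⟨σ.G_mono le_sup_left le_sup_left h, σ.G_mono le_sup_right le_sup_right h⟩
  · rintro ⟨⟨h1, h2⟩, h3, h4⟩
    refine ⟨fun a ha => ?_, fun b hb => ?_⟩
    · obtain ⟨x, hx, y, hy, rfl⟩ := Submodule.mem_sup.1 ha
      rw [map_add, h1 x hx, h3 y hy]
    · obtain ⟨x, hx, y, hy, rfl⟩ := Submodule.mem_sup.1 hb
      rw [map_add, h2 x hx, h4 y hy]

/-- The line spanned by a vector. -/
abbrev ln {M : Type} [AddCommGroup M] [Module F M] (v : M) : Submodule F M := Submodule.span F {v}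

lemma mem_G_A {Φ : Submodule F σ.A} {Ψ : Submodule F σ.B} {v : σ.A} {g : 𝔾} :
    g ∈ σ.G (Φ ⊔ ln v) Ψ ↔ g ∈ σ.G Φ Ψ ∧ σ.ra g v = v := by
  rw [← sup_bot_eq Ψ, mem_G_sup, sup_bot_eq]
  refine and_congr_right fun _ => ⟨fun h => h.1 v (Submodule.mem_span_singleton_self v), fun h =>
    ⟨fun a ha => ?_, fun b hb => ?_⟩⟩
  · obtain ⟨c, rfl⟩ := Submodule.mem_span_singleton.1 ha
    rw [map_smul, h]
  · rw [(Submodule.mem_bot F).1 hb, map_zero]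

lemma mem_G_B {Φ : Submodule F σ.A} {Ψ : Submodule F σ.B} {v : σ.B} {g : 𝔾} :
    g ∈ σ.G Φ (Ψ ⊔ ln v) ↔ g ∈ σ.G Φ Ψ ∧ σ.rb g v = v := by
  rw [← sup_bot_eq Φ, mem_G_sup, sup_bot_eq]
  refine and_congr_right fun _ => ⟨fun h => h.2 v (Submodule.mem_span_singleton_self v), fun h =>
    ⟨fun a ha => ?_, fun b hb => ?_⟩⟩
  · rw [(Submodule.mem_bot F).1 ha, map_zero]
  · obtain ⟨c, rfl⟩ := Submodule.mem_span_singleton.1 hb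
    rw [map_smul, h]

/-- The annihilator of `Ψ`. -/
def P (Ψ : Submodule F σ.B) : Submodule F σ.A where
  carrier := {a | ∀ b ∈ Ψ, σ.pr a b = 0}
  zero_mem' := by simp
  add_mem' := fun h1 h2 b hb => by rw [map_add, LinearMap.add_apply, h1 b hb, h2 b hb, add_zero]
  smul_mem' := fun c a h b hb => by rw [map_smul, LinearMap.smul_apply, h b hb, smul_zero]

lemma mem_P {Ψ : Submodule F σ.B} {a : σ.A} : a ∈ σ.P Ψ ↔ ∀ b ∈ Ψ, σ.pr a b = 0 := Iff.rfl

/-- The annihilator of `Φ`. -/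
def N (Φ : Submodule F σ.A) : Submodule F σ.B where
  carrier := {b | ∀ a ∈ Φ, σ.pr a b = 0}
  zero_mem' := by simp
  add_mem' := fun h1 h2 b hb => by rw [map_add, h1 b hb, h2 b hb, add_zero]
  smul_mem' := fun c a h b hb => by rw [map_smul, h b hb, smul_zero]

lemma mem_N {Φ : Submodule F σ.A} {b : σ.B} : b ∈ σ.N Φ ↔ ∀ a ∈ Φ, σ.pr a b = 0 := Iff.rfl

lemma mem_N_sup {Φ : Submodule F σ.A} {v : σ.A} {b : σ.B} :
    b ∈ σ.N (Φ ⊔ ln v) ↔ b ∈ σ.N Φ ∧ σ.pr v b = 0 := by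
  constructor
  · intro h
    exact ⟨fun a ha => h a (Submodule.mem_sup_left ha),
      h v (Submodule.mem_sup_right (Submodule.mem_span_singleton_self v))⟩
  · rintro ⟨h1, h2⟩ a ha
    obtain ⟨x, hx, y, hy, rfl⟩ := Submodule.mem_sup.1 ha
    obtain ⟨c, rfl⟩ := Submodule.mem_span_singleton.1 hy
    simp [h1 x hx, h2]

/-- Elements of `G Φ Ψ` move vectors within cosets of the annihilator of `Ψ`. -/
lemma sub_mem_P {Φ : Submodule F σ.A} {Ψ : Submodule F σ.B} {g : 𝔾} (hg : g ∈ σ.G Φ Ψ) (a : σ.A) :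
    σ.ra g a - a ∈ σ.P Ψ := by
  intro b hb
  rw [map_sub, LinearMap.sub_apply, (σ.fixB).1 (hg.2 b hb), sub_self]

/-- The rank one perturbation. -/
lemma exists_g {Φ : Submodule F σ.A} {Ψ : Submodule F σ.B} {u : σ.A} {ξ : σ.B}
    (hu : u ∈ σ.P Ψ) (hξ : ξ ∈ σ.N Φ) (h : 1 + σ.pr u ξ ≠ 0) :
    ∃ g ∈ σ.G Φ Ψ, ∀ a, σ.ra g a = a + σ.pr a ξ • u := by
  obtain ⟨g, hg⟩ := σ.surj u ξ h
  refine ⟨g, ⟨fun a ha => by rw [hg, hξ a ha, zero_smul, add_zero], fun b hb => ?_⟩, hg⟩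
  rw [fixB]
  intro a
  rw [hg, map_add, map_smul, LinearMap.add_apply, LinearMap.smul_apply, hu b hb, smul_zero, add_zero]

/-- A separating functional with value one. -/
lemma sep1 {Φ : Submodule F σ.A} {v : σ.A} (h : v ∉ Φ) : ∃ ξ ∈ σ.N Φ, σ.pr v ξ = 1 := by
  obtain ⟨b, hb, hv⟩ := σ.sepA Φ v h
  exact ⟨(σ.pr v b)⁻¹ • b, (σ.N Φ).smul_mem _ hb, by rw [map_smul, smul_eq_mul, inv_mul_cancel₀ hv]⟩

/-- The flipped setting. -/
def flip : Stg F 𝔾 where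
  A := σ.B
  B := σ.A
  iA := σ.iB
  mA := σ.mB
  iB := σ.iA
  mB := σ.mA
  pr := σ.pr.flip
  ra := σ.rb
  rb := σ.ra
  inv g a b := by simp only [LinearMap.flip_apply]; exact σ.inv g b a
  sepA := fun Φ v h => by simpa only [LinearMap.flip_apply] using σ.sepB Φ v h
  sepB := fun Φ v h => by simpa only [LinearMap.flip_apply] using σ.sepA Φ v h
  surj := fun u ξ h => by
    simp only [LinearMap.flip_apply] at h ⊢
    have e : 1 + σ.pr (-(1 + σ.pr ξ u)⁻¹ • ξ) u = (1 + σ.pr ξ u)⁻¹ := by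
      rw [map_smul, LinearMap.smul_apply, smul_eq_mul]; field_simp; ring
    obtain ⟨g, hg⟩ := σ.surj (-(1 + σ.pr ξ u)⁻¹ • ξ) u (by rw [e]; exact inv_ne_zero h)
    have hi : ∀ a, σ.ra g (a + σ.pr a u • ξ) = a := by
      intro a
      rw [hg]
      simp only [map_add, map_smul, LinearMap.add_apply, LinearMap.smul_apply, smul_eq_mul, smul_smul,
        add_assoc, ← add_smul]
      rw [show σ.pr a u + (σ.pr a u + σ.pr a u * σ.pr ξ u) * -(1 + σ.pr ξ u)⁻¹ = 0 by
        field_simp; ring, zero_smul, add_zero]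
    refine ⟨g, fun b => ?_⟩
    rw [← sub_eq_zero]
    apply σ.ndB
    intro a
    have e2 : σ.ra g⁻¹ a = a + σ.pr a u • ξ := by
      have := congrArg (σ.ra g⁻¹) (hi a)
      rw [ra_inv_ra] at this
      exact this.symm
    rw [map_sub, pr_rb, e2]
    simp only [map_add, map_smul, LinearMap.add_apply, LinearMap.smul_apply, smul_eq_mul]
    ring
  inj := fun g h => by
    apply σ.inj
    intro a
    rw [← sub_eq_zero]
    apply σ.ndA
    intro b
    rw [map_sub, LinearMap.sub_apply, ← h b, σ.inv, h b, sub_self]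

lemma flip_G (Φ : Submodule F σ.A) (Ψ : Submodule F σ.B) : σ.flip.G Ψ Φ = σ.G Φ Ψ := by
  ext g
  exact and_comm

end Stg
end FSH

namespace FSH
open FreeAbelianGroup (of)
open GS
namespace Stg
variable {F 𝔾 : Type} [Field F] [Group 𝔾] (σ : Stg F 𝔾)

lemma self_ln {M : Type} [AddCommGroup M] [Module F M] (v : M) : v ∈ ln (F := F) v :=
  Submodule.mem_span_singleton_self v

lemma mem_sup_ln {M : Type} [AddCommGroup M] [Module F M] {Φ : Submodule F M} {v a : M} :
    a ∈ Φ ⊔ ln v ↔ ∃ c : F, a - c • v ∈ Φ := by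
  constructor
  · intro h
    obtain ⟨x, hx, y, hy, rfl⟩ := Submodule.mem_sup.1 h
    obtain ⟨c, rfl⟩ := Submodule.mem_span_singleton.1 hy
    exact ⟨c, by simpa using hx⟩
  · rintro ⟨c, hc⟩
    rw [← sub_add_cancel a (c • v)]
    exact Submodule.add_mem _ (Submodule.mem_sup_left hc)
      (Submodule.mem_sup_right (Submodule.smul_mem _ _ (self_ln v)))

lemma mem_P_sup {Ψ : Submodule F σ.B} {v : σ.B} {a : σ.A} :
    a ∈ σ.P (Ψ ⊔ ln v) ↔ a ∈ σ.P Ψ ∧ σ.pr a v = 0 :=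
  σ.flip.mem_N_sup (Φ := Ψ) (v := v) (b := a)

lemma P_of_G {Φ : Submodule F σ.A} {Ψ : Submodule F σ.B} {g : 𝔾} (hg : g ∈ σ.G Φ Ψ) {a : σ.A}
    (ha : a ∈ σ.P Ψ) : σ.ra g a ∈ σ.P Ψ := by
  rw [← sub_add_cancel (σ.ra g a) a]
  exact Submodule.add_mem _ (σ.sub_mem_P hg a) ha

lemma notin_of_G {Φ : Submodule F σ.A} {Ψ : Submodule F σ.B} {g : 𝔾} (hg : g ∈ σ.G Φ Ψ) {a : σ.A}
    (ha : a ∉ Φ) : σ.ra g a ∉ Φ := by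
  intro h
  apply ha
  have := (inv_mem hg).1 _ h
  rw [ra_inv_ra] at this
  rw [this]; exact h

/-- Transitivity. -/
lemma trans {Φ : Submodule F σ.A} {Ψ : Submodule F σ.B} {v v' : σ.A} (h : v ∉ Φ) (h' : v' ∉ Φ)
    (hd : v' - v ∈ σ.P Ψ) : ∃ g ∈ σ.G Φ Ψ, σ.ra g v = v' := by
  have key : ∃ ξ ∈ σ.N Φ, σ.pr v ξ ≠ 0 ∧ σ.pr v' ξ ≠ 0 := by
    obtain ⟨ξ1, a1, b1⟩ := σ.sep1 h
    obtain ⟨ξ2, a2, b2⟩ := σ.sep1 h'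
    by_cases c1 : σ.pr v' ξ1 = 0
    · by_cases c2 : σ.pr v ξ2 = 0
      · exact ⟨ξ1 + ξ2, Submodule.add_mem _ a1 a2, by rw [map_add, b1, c2]; simp,
          by rw [map_add, b2, c1]; simp⟩
      · exact ⟨ξ2, a2, c2, by rw [b2]; simp⟩
    · exact ⟨ξ1, a1, by rw [b1]; simp, c1⟩
  obtain ⟨ξ, hξ, h1, h2⟩ := key
  obtain ⟨g, hg, e⟩ := σ.exists_g (Φ := Φ) (Ψ := Ψ) (u := v' - v) (ξ := (σ.pr v ξ)⁻¹ • ξ) hd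
    (Submodule.smul_mem _ _ hξ) (by
      rw [map_smul, map_sub, LinearMap.sub_apply, smul_eq_mul, mul_sub, inv_mul_cancel₀ h1,
        add_sub_cancel]
      exact mul_ne_zero (inv_ne_zero h1) h2)
  refine ⟨g, hg, ?_⟩
  rw [e, map_smul, smul_eq_mul, inv_mul_cancel₀ h1, one_smul, add_sub_cancel]

/-- Rank condition. -/
def rk (Φ : Submodule F σ.A) (Ψ : Submodule F σ.B) (n : ℕ) : Prop :=
  ∃ (f : Fin n → σ.A) (g : Fin n → σ.B), (∀ i, f i ∈ σ.P Ψ) ∧ (∀ i, g i ∈ σ.N Φ) ∧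
    ∀ i j, σ.pr (f i) (g j) = if i = j then 1 else 0

lemma rk_flip {Φ : Submodule F σ.A} {Ψ : Submodule F σ.B} {n : ℕ} (h : σ.rk Φ Ψ n) :
    σ.flip.rk Ψ Φ n := by
  obtain ⟨f, g, h1, h2, h3⟩ := h
  exact ⟨g, f, h2, h1, fun i j => (h3 j i).trans (by simp [eq_comm])⟩

lemma rk_pred {Φ : Submodule F σ.A} {Ψ : Submodule F σ.B} {n : ℕ} (h : σ.rk Φ Ψ (n + 1)) :
    σ.rk Φ Ψ n := by
  obtain ⟨f, g, h1, h2, h3⟩ := h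
  exact ⟨fun i => f i.succ, fun i => g i.succ, fun i => h1 _, fun i => h2 _,
    fun i j => by rw [h3]; simp⟩

lemma rk_le {Φ : Submodule F σ.A} {Ψ : Submodule F σ.B} {m n : ℕ} (hmn : m ≤ n) (h : σ.rk Φ Ψ n) :
    σ.rk Φ Ψ m := by
  induction n, hmn using Nat.le_induction with
  | base => exact h
  | succ n _ ih => exact ih (σ.rk_pred h)

lemma rk_add {Φ : Submodule F σ.A} {Ψ : Submodule F σ.B} {n : ℕ} (h : σ.rk Φ Ψ (n + 1)) (v : σ.A) :
    σ.rk (Φ ⊔ ln v) Ψ n := by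
  obtain ⟨f, g, h1, h2, h3⟩ := h
  by_cases hb : ∀ j, σ.pr v (g j) = 0
  · exact ⟨fun i => f i.succ, fun i => g i.succ, fun i => h1 _, fun i => (σ.mem_N_sup).2 ⟨h2 _, hb _⟩,
      fun i j => by rw [h3]; simp⟩
  · push Not at hb
    obtain ⟨j0, hj⟩ := hb
    refine ⟨fun i => f (j0.succAbove i), fun i => g (j0.succAbove i) -
      (σ.pr v (g (j0.succAbove i)) / σ.pr v (g j0)) • g j0, fun i => h1 _, fun i => ?_, fun i j => ?_⟩
    · refine (σ.mem_N_sup).2 ⟨Submodule.sub_mem _ (h2 _) (Submodule.smul_mem _ _ (h2 _)), ?_⟩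
      rw [map_sub, map_smul, smul_eq_mul, div_mul_cancel₀ _ hj, sub_self]
    · rw [map_sub, map_smul, h3, h3, if_neg (Fin.succAbove_ne j0 i), smul_zero, sub_zero]
      simp

lemma rk_addc {Φ : Submodule F σ.A} {Ψ : Submodule F σ.B} {n : ℕ} (h : σ.rk Φ Ψ n) {v : σ.A}
    (hv : v ∉ Φ ⊔ σ.P Ψ) : σ.rk (Φ ⊔ ln v) Ψ n := by
  obtain ⟨f, g, h1, h2, h3⟩ := h
  obtain ⟨ξ, hξ, e⟩ := σ.sep1 hv
  refine ⟨f, fun i => g i - σ.pr v (g i) • ξ, h1, fun i => (σ.mem_N_sup).2 ⟨Submodule.sub_mem _ (h2 i)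
    (Submodule.smul_mem _ _ fun a ha => hξ a (Submodule.mem_sup_left ha)), ?_⟩, fun i j => ?_⟩
  · rw [map_sub, map_smul, e, smul_eq_mul, mul_one, sub_self]
  · rw [map_sub, map_smul, h3, hξ _ (Submodule.mem_sup_right (h1 i)), smul_zero, sub_zero]

lemma rk_one {Φ : Submodule F σ.A} {Ψ : Submodule F σ.B} (h : σ.rk Φ Ψ 1) : ¬ σ.P Ψ ≤ Φ := by
  obtain ⟨f, g, h1, h2, h3⟩ := h
  intro hl
  have := h2 0 _ (hl (h1 0))
  rw [h3] at this
  simp at this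

lemma rk_two {Φ : Submodule F σ.A} {Ψ : Submodule F σ.B} (h : σ.rk Φ Ψ 2) (fs : σ.B) :
    ∃ v ∈ σ.P Ψ, σ.pr v fs = 0 ∧ v ∉ Φ := by
  have h1 := σ.flip.rk_add (σ.rk_flip h) fs
  have h2 := σ.rk_one (σ.flip.rk_flip h1)
  obtain ⟨v, hv, hn⟩ := Set.not_subset.1 h2
  exact ⟨v, ((σ.mem_P_sup).1 hv).1, ((σ.mem_P_sup).1 hv).2, hn⟩

/-- The span of a tuple together with `Φ`. -/
def Spn (Φ : Submodule F σ.A) : ∀ {p : ℕ}, Tup σ.A p → Submodule F σ.A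
  | 0, _ => Φ
  | _ + 1, x => Spn Φ x.tl ⊔ ln x.hd

@[simp] lemma Spn_nil (Φ : Submodule F σ.A) : σ.Spn Φ Tup.nil = Φ := rfl
@[simp] lemma Spn_cons (Φ : Submodule F σ.A) {p : ℕ} (e : σ.A) (x : Tup σ.A p) :
    σ.Spn Φ (Tup.cons e x) = σ.Spn Φ x ⊔ ln e := rfl

lemma le_Spn (Φ : Submodule F σ.A) {p : ℕ} (x : Tup σ.A p) : Φ ≤ σ.Spn Φ x := by
  induction p, x using Tup.ind with
  | nil => exact le_rfl
  | cons n e x ih => exact ih.trans le_sup_left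

lemma mem_G_Spn {Φ : Submodule F σ.A} {Ψ : Submodule F σ.B} {p : ℕ} (x : Tup σ.A p) {g : 𝔾} :
    g ∈ σ.G (σ.Spn Φ x) Ψ ↔ g ∈ σ.G Φ Ψ ∧ g • x = x := by
  induction p, x using Tup.ind with
  | nil => simp [Tup.smul_nil]
  | cons n e x ih =>
    rw [Spn_cons, mem_G_A, ih, Tup.smul_cons, and_assoc]
    refine and_congr_right fun _ => ?_
    constructor
    · rintro ⟨h1, h2⟩
      rw [h1, smul_eq, h2]
    · intro h
      exact ⟨congrArg Tup.tl h, congrArg Tup.hd h⟩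

lemma mem_N_Spn {Φ : Submodule F σ.A} {p : ℕ} (x : Tup σ.A p) {b : σ.B} :
    b ∈ σ.N (σ.Spn Φ x) ↔ b ∈ σ.N Φ ∧ Tup.All (fun e => σ.pr e b = 0) x := by
  induction p, x using Tup.ind with
  | nil => exact ⟨fun h => ⟨h, trivial⟩, fun h => h.1⟩
  | cons n e x ih =>
    rw [Spn_cons, mem_N_sup, ih, Tup.all_cons]
    tauto

lemma Spn_ra {Φ : Submodule F σ.A} {Ψ : Submodule F σ.B} {p : ℕ} (x : Tup σ.A p) {g : 𝔾}
    (hg : g ∈ σ.G Φ Ψ) {a : σ.A} (ha : a ∈ σ.Spn Φ x) : σ.ra g a ∈ σ.Spn Φ (g • x) := by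
  induction p, x using Tup.ind generalizing a with
  | nil => rw [hg.1 a ha]; exact ha
  | cons n e x ih =>
    rw [Tup.smul_cons, Spn_cons, mem_sup_ln]
    obtain ⟨c, hc⟩ := mem_sup_ln.1 ha
    refine ⟨c, ?_⟩
    rw [smul_eq, ← map_smul, ← map_sub]
    exact ih hc

lemma P_Spn {Φ : Submodule F σ.A} {Ψ : Submodule F σ.B} {p : ℕ} (x : Tup σ.A p) {g : 𝔾}
    (hg : g ∈ σ.G Φ Ψ) (h : σ.P Ψ ≤ σ.Spn Φ (g • x)) : σ.P Ψ ≤ σ.Spn Φ x := by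
  intro a ha
  have := σ.Spn_ra (g • x) (inv_mem hg) (h (σ.P_of_G hg ha))
  rwa [ra_inv_ra, inv_smul_smul] at this

variable {Φ : Submodule F σ.A} {Ψ : Submodule F σ.B} {f : σ.A} {fs : σ.B}

lemma ex_one (hf : f ∈ σ.P Ψ) (hs : fs ∈ σ.N Φ) (h1 : σ.pr f fs = 1) (e : σ.A)
    (hP : ¬ σ.P Ψ ≤ Φ ⊔ ln e) : ∃ h ∈ σ.G Φ Ψ, σ.pr (σ.ra h e) fs = 0 := by
  by_cases he : e ∈ Φ
  · exact ⟨1, one_mem _, by rw [ra_one]; exact hs e he⟩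
  by_cases he' : e - σ.pr e fs • f ∈ Φ
  · obtain ⟨u0, hu, hn⟩ := Set.not_subset.1 hP
    have h2 : (e - σ.pr e fs • f) + (u0 - σ.pr u0 fs • f) ∉ Φ := by
      intro h
      have h3 := (Submodule.add_mem_iff_right _ he').1 h
      apply hn
      have hc : σ.pr e fs ≠ 0 := by
        intro h0
        rw [h0, zero_smul, sub_zero] at he'
        exact he he'
      refine mem_sup_ln.2 ⟨σ.pr u0 fs / σ.pr e fs, ?_⟩
      have h4 := Submodule.sub_mem _ h3 (Submodule.smul_mem _ (σ.pr u0 fs / σ.pr e fs) he')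
      convert h4 using 1
      rw [smul_sub, smul_smul, div_mul_cancel₀ _ hc]
      abel
    obtain ⟨g, hg, hh⟩ := σ.trans (Ψ := Ψ) he h2 (by
      have : (e - σ.pr e fs • f) + (u0 - σ.pr u0 fs • f) - e =
        u0 - (σ.pr e fs • f + σ.pr u0 fs • f) := by abel
      rw [this]
      exact Submodule.sub_mem _ hu (Submodule.add_mem _ (Submodule.smul_mem _ _ hf)
        (Submodule.smul_mem _ _ hf)))
    exact ⟨g, hg, by rw [hh]; simp [h1]⟩
  · obtain ⟨g, hg, hh⟩ := σ.trans (Ψ := Ψ) he he' (by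
      rw [sub_sub_cancel_left]
      exact Submodule.neg_mem _ (Submodule.smul_mem _ _ hf))
    exact ⟨g, hg, by rw [hh]; simp [h1]⟩

lemma ex_conj (hf : f ∈ σ.P Ψ) (hs : fs ∈ σ.N Φ) (h1 : σ.pr f fs = 1) {p : ℕ} (x : Tup σ.A p)
    (hP : ¬ σ.P Ψ ≤ σ.Spn Φ x) :
    ∃ h ∈ σ.G Φ Ψ, Tup.All (fun e => σ.pr e fs = 0) (h • x) := by
  induction p, x using Tup.ind with
  | nil => exact ⟨1, one_mem _, trivial⟩
  | cons n e x ih =>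
    obtain ⟨h, hh, ha⟩ := ih (fun h => hP (h.trans le_sup_left))
    have hP2 : ¬ σ.P Ψ ≤ σ.Spn Φ (h • (Tup.cons e x)) := fun h' => hP (σ.P_Spn _ hh h')
    rw [Tup.smul_cons, Spn_cons] at hP2
    obtain ⟨k, hk, hk2⟩ := σ.ex_one hf ((σ.mem_N_Spn _).2 ⟨hs, ha⟩) h1 (h • e) hP2
    have hk3 := (σ.mem_G_Spn _).1 hk
    refine ⟨k * h, mul_mem hk3.1 hh, ?_⟩
    rw [mul_smul, Tup.smul_cons, Tup.smul_cons, hk3.2, Tup.all_cons]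
    exact ⟨hk2, ha⟩

lemma pr_of_G {Φ : Submodule F σ.A} {g : 𝔾} (hg : g ∈ σ.G Φ (Ψ ⊔ ln fs)) (a : σ.A) :
    σ.pr (σ.ra g a) fs = σ.pr a fs :=
  (σ.fixB).1 (hg.2 fs (Submodule.mem_sup_right (self_ln fs))) a

lemma All_ra {Φ : Submodule F σ.A} {g : 𝔾} (hg : g ∈ σ.G Φ (Ψ ⊔ ln fs)) {p : ℕ} (x : Tup σ.A p)
    (h : Tup.All (fun e => σ.pr e fs = 0) x) : Tup.All (fun e => σ.pr e fs = 0) (g • x) := by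
  induction p, x using Tup.ind with
  | nil => trivial
  | cons n e x ih =>
    rw [Tup.all_cons] at h
    rw [Tup.smul_cons, Tup.all_cons]
    exact ⟨(σ.pr_of_G hg e).trans h.1, ih h.2⟩

lemma match_orb (hf : f ∈ σ.P Ψ) (hs : fs ∈ σ.N Φ) (h1 : σ.pr f fs = 1) {p : ℕ} (x : Tup σ.A p)
    {h : 𝔾} (hh : h ∈ σ.G Φ Ψ) (hx : Tup.All (fun e => σ.pr e fs = 0) x)
    (hy : Tup.All (fun e => σ.pr e fs = 0) (h • x)) :
    ∃ k ∈ σ.G (Φ ⊔ ln f) (Ψ ⊔ ln fs), h • x = k • x := by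
  induction p generalizing Φ h with
  | zero => exact ⟨1, one_mem _, rfl⟩
  | succ p ih =>
    obtain ⟨e, x, rfl⟩ : ∃ e x', x = Tup.cons e x' := ⟨x.hd, x.tl, rfl⟩
    rw [Tup.all_cons] at hx
    rw [Tup.smul_cons, Tup.all_cons] at hy
    by_cases he : e ∈ Φ
    · obtain ⟨k, hk, ek⟩ := ih hs x hh hx.2 hy.2
      refine ⟨k, hk, ?_⟩
      rw [Tup.smul_cons, Tup.smul_cons, ek, smul_eq, smul_eq, hh.1 e he, hk.1 e (Submodule.mem_sup_left he)]
    · have key : ∀ a, a ∉ Φ → σ.pr a fs = 0 → a ∉ Φ ⊔ ln f := by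
        intro a ha ha0 hm
        obtain ⟨c, hc⟩ := mem_sup_ln.1 hm
        have := hs _ hc
        simp [ha0, h1] at this
        rw [this, zero_smul, sub_zero] at hc
        exact ha hc
      obtain ⟨k1, hk1, e1⟩ := σ.trans (Ψ := Ψ ⊔ ln fs) (key e he hx.1)
        (key (h • e) (σ.notin_of_G hh he) hy.1) ((σ.mem_P_sup).2 ⟨σ.sub_mem_P hh e, by
          rw [map_sub, LinearMap.sub_apply, hy.1, hx.1, sub_zero]⟩)
      have hk1' := σ.G_mono (Φ := Φ) (Ψ := Ψ) le_sup_left le_sup_left hk1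
      have hm : h * k1⁻¹ ∈ σ.G (Φ ⊔ ln (h • e)) Ψ := by
        refine (σ.mem_G_A).2 ⟨mul_mem hh (inv_mem hk1'), ?_⟩
        rw [ra_mul, ← e1, ra_inv_ra, e1]; rfl
      obtain ⟨k2, hk2, e2⟩ := ih (Φ := Φ ⊔ ln (h • e)) (by
        exact (σ.mem_N_sup).2 ⟨hs, hy.1⟩) (k1 • x) hm (σ.All_ra hk1 x hx.2)
          (by rw [← mul_smul, inv_mul_cancel_right]; exact hy.2)
      rw [← mul_smul, inv_mul_cancel_right] at e2
      have hk2' : k2 ∈ σ.G (Φ ⊔ ln f) (Ψ ⊔ ln fs) :=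
        σ.G_mono (sup_le_sup_right le_sup_left _) le_rfl hk2
      have e3 : k2 • (h • e) = h • e := hk2.1 _ (Submodule.mem_sup_left
        (Submodule.mem_sup_right (self_ln _)))
      refine ⟨k2 * k1, mul_mem hk2' hk1, ?_⟩
      rw [mul_smul, Tup.smul_cons, Tup.smul_cons, Tup.smul_cons, ← e2]
      rw [show k1 • e = h • e from e1, e3]
end Stg
end FSH

namespace FSH
open FreeAbelianGroup (of)
open GS

lemma map_inj {E E' : Type} (f : E → E') (hf : Function.Injective f) {n : ℕ} {x y : Tup E n}
    (h : Tup.map f x = Tup.map f y) : x = y := by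
  induction n with
  | zero => rfl
  | succ n ih =>
    have h1 := congrArg Tup.hd h
    have h2 := congrArg Tup.tl h
    exact congrArg₂ Tup.cons (hf h1) (ih h2)

/-- Underlying tuple. -/
abbrev vl {E : Type} {X : Set E} {n : ℕ} (x : Tup X n) : Tup E n := Tup.map Subtype.val x

lemma vl_inj {E : Type} {X : Set E} {n : ℕ} {x y : Tup X n} (h : vl x = vl y) : x = y :=
  map_inj _ Subtype.val_injective h

lemma vl_all {E : Type} {X : Set E} {n : ℕ} (x : Tup X n) : Tup.All (· ∈ X) (vl x) := by
  induction n, x using Tup.ind with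
  | nil => trivial
  | cons n e x ih => exact ⟨e.2, ih⟩

lemma vl_lift {E : Type} {X : Set E} {n : ℕ} (x : Tup E n) (h : Tup.All (· ∈ X) x) :
    ∃ y : Tup X n, vl y = x := by
  induction n, x using Tup.ind with
  | nil => exact ⟨Tup.nil, rfl⟩
  | cons n e x ih =>
    obtain ⟨y, rfl⟩ := ih h.2
    exact ⟨Tup.cons ⟨e, h.1⟩ y, rfl⟩

lemma All.and {E : Type} {p q : E → Prop} {n : ℕ} {x : Tup E n} (h : Tup.All p x)
    (h' : Tup.All q x) : Tup.All (fun e => p e ∧ q e) x := by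
  induction n, x using Tup.ind with
  | nil => trivial
  | cons n e x ih => exact ⟨⟨h.1, h'.1⟩, ih h.2 h'.2⟩

/-- The basic data. -/
structure Dat {F 𝔾 : Type} [Field F] [Group 𝔾] (σ : Stg F 𝔾) where
  Φ : Submodule F σ.A
  Ψ : Submodule F σ.B
  f : σ.A
  fs : σ.B
  hf : f ∈ σ.P Ψ
  hs : fs ∈ σ.N Φ
  h1 : σ.pr f fs = 1

namespace Dat
open Stg
variable {F 𝔾 : Type} [Field F] [Group 𝔾] {σ : Stg F 𝔾} (D : Dat σ)

/-- The large group. -/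
abbrev H' : Subgroup 𝔾 := σ.G D.Φ D.Ψ
/-- The small group. -/
abbrev H : Subgroup 𝔾 := σ.G (D.Φ ⊔ ln D.f) (D.Ψ ⊔ ln D.fs)

lemma hle : D.H ≤ D.H' := σ.G_mono le_sup_left le_sup_left

/-- Enlarging `Φ` by a tuple. -/
abbrev ext {p : ℕ} (x : Tup σ.A p) (hx : Tup.All (fun e => σ.pr e D.fs = 0) x) : Dat σ where
  Φ := σ.Spn D.Φ x
  Ψ := D.Ψ
  f := D.f
  fs := D.fs
  hf := D.hf
  hs := (σ.mem_N_Spn x).2 ⟨D.hs, hx⟩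
  h1 := D.h1

/-- Flipped data. -/
abbrev flip : Dat σ.flip where
  Φ := D.Ψ
  Ψ := D.Φ
  f := D.fs
  fs := D.f
  hf := D.hs
  hs := D.hf
  h1 := D.h1

/-- The set of admissible vectors. -/
abbrev X' (c : σ.A) : Set σ.A := {v | v - c ∈ σ.P D.Ψ ∧ v ∉ D.Φ}
abbrev X (c : σ.A) : Set σ.A := {v | v ∈ D.X' c ∧ σ.pr v D.fs = 0}

lemma X'_stable (c : σ.A) (h : 𝔾) (hh : h ∈ D.H') (x : σ.A) (hx : x ∈ D.X' c) : h • x ∈ D.X' c :=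
  ⟨by rw [← sub_add_sub_cancel (h • x) x c]
      exact Submodule.add_mem _ (σ.sub_mem_P hh x) hx.1, σ.notin_of_G hh hx.2⟩

/-- The double complex data. -/
def T (c : σ.A) : XP 𝔾 where
  H := D.H
  H' := D.H'
  hle := D.hle
  E := σ.A
  act := inferInstance
  X := D.X c
  X' := D.X' c
  hX _ h := h.1
  sX h hh x hx := ⟨D.X'_stable c h (D.hle hh) x hx.1, (σ.pr_of_G hh x).trans hx.2⟩
  sX' h hh x hx := D.X'_stable c h hh x hx

variable (c : σ.A)

/-- Underlying tuples of vectors. -/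
def vx {p : ℕ} (x : Tup (D.T c).X p) : Tup σ.A p := vl (X := D.X c) x
def vx' {p : ℕ} (x : Tup (D.T c).X' p) : Tup σ.A p := vl (X := D.X' c) x

lemma vx_inj {p : ℕ} {x y : Tup (D.T c).X p} (h : D.vx c x = D.vx c y) : x = y :=
  vl_inj (X := D.X c) h
lemma vx'_inj {p : ℕ} {x y : Tup (D.T c).X' p} (h : D.vx' c x = D.vx' c y) : x = y :=
  vl_inj (X := D.X' c) h
lemma vx_all {p : ℕ} (x : Tup (D.T c).X p) : Tup.All (· ∈ D.X c) (D.vx c x) :=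
  vl_all (X := D.X c) x
lemma vx'_all {p : ℕ} (x : Tup (D.T c).X' p) : Tup.All (· ∈ D.X' c) (D.vx' c x) :=
  vl_all (X := D.X' c) x
lemma vx_lift {p : ℕ} (x : Tup σ.A p) (h : Tup.All (· ∈ D.X c) x) :
    ∃ y : Tup (D.T c).X p, D.vx c y = x := vl_lift (X := D.X c) x h
lemma vx'_lift {p : ℕ} (x : Tup σ.A p) (h : Tup.All (· ∈ D.X' c) x) :
    ∃ y : Tup (D.T c).X' p, D.vx' c y = x := vl_lift (X := D.X' c) x h

lemma vx_smul {p : ℕ} (h : (D.T c).H) (x : Tup (D.T c).X p) :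
    D.vx c (h • x) = (h : 𝔾) • D.vx c x :=
  Tup.map_smul (fun e : (D.T c).X => (e.1 : σ.A)) h (h : 𝔾) (fun _ => rfl) p x

lemma vx'_smul {p : ℕ} (h : (D.T c).H') (x : Tup (D.T c).X' p) :
    D.vx' c (h • x) = (h : 𝔾) • D.vx' c x :=
  Tup.map_smul (fun e : (D.T c).X' => (e.1 : σ.A)) h (h : 𝔾) (fun _ => rfl) p x

lemma vx_ι {p : ℕ} (x : Tup (D.T c).X p) : D.vx' c (((D.T c).P p).ι x) = D.vx c x :=
  Tup.map_map _ _ _ _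

lemma ker {p : ℕ} (x : Tup (D.T c).X p) : Tup.All (fun e => σ.pr e D.fs = 0) (D.vx c x) :=
  Tup.All.imp (fun _ h => h.2) (D.vx_all c x)

/-- Stabilizer data of a tuple. -/
abbrev st {p : ℕ} (x : Tup (D.T c).X p) : Dat σ := D.ext (D.vx c x) (D.ker c x)

lemma st_H {p : ℕ} (x : Tup (D.T c).X p) (h : 𝔾) : h ∈ (D.st c x).H ↔
    ∃ hh : h ∈ ((D.T c).P p).S.H, (⟨h, hh⟩ : ((D.T c).P p).S.H) • x = x := by
  have key : h ∈ (D.st c x).H ↔ h ∈ D.H ∧ h • D.vx c x = D.vx c x := by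
    rw [mem_G_A, mem_G_Spn, mem_G_A]
    tauto
  rw [key]
  constructor
  · rintro ⟨h1, h2⟩
    exact ⟨h1, D.vx_inj c ((D.vx_smul c ⟨h, h1⟩ x).trans h2)⟩
  · rintro ⟨h1, h2⟩
    exact ⟨h1, (D.vx_smul c ⟨h, h1⟩ x).symm.trans (congrArg (D.vx c) h2)⟩

lemma st_H' {p : ℕ} (x : Tup (D.T c).X p) (h : 𝔾) : h ∈ (D.st c x).H' ↔
    ∃ hh : h ∈ ((D.T c).P p).T.H, (⟨h, hh⟩ : ((D.T c).P p).T.H) • ((D.T c).P p).ι x =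
      ((D.T c).P p).ι x := by
  rw [mem_G_Spn, ← vx_ι]
  constructor
  · rintro ⟨h1, h2⟩
    exact ⟨h1, D.vx'_inj c ((D.vx'_smul c ⟨h, h1⟩ _).trans h2)⟩
  · rintro ⟨h1, h2⟩
    exact ⟨h1, (D.vx'_smul c ⟨h, h1⟩ _).symm.trans (congrArg (D.vx' c) h2)⟩

/-- The inclusion of the stabilizer pair. -/
abbrev i {p : ℕ} (x : Tup (D.T c).X p) : PMor (ptP (D.st c x).H (D.st c x).H' (D.st c x).hle)
    ((D.T c).P p) :=
  iy ((D.T c).P p) (D.st c x).hle x (fun h => (D.st_H c x h).1) (fun h => (D.st_H' c x h).1)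

lemma ι_lift {p : ℕ} (y : Tup (D.T c).X' p)
    (hy : Tup.All (fun e => σ.pr e D.fs = 0) (D.vx' c y)) :
    ∃ x : Tup (D.T c).X p, ((D.T c).P p).ι x = y := by
  obtain ⟨x, hx⟩ := D.vx_lift c (D.vx' c y) (All.and (D.vx'_all c y) hy)
  exact ⟨x, D.vx'_inj c ((D.vx_ι c x).trans hx)⟩

lemma conj_in {p : ℕ} (y : Tup (D.T c).X' p) (hP : ¬ σ.P D.Ψ ≤ σ.Spn D.Φ (D.vx' c y)) :
    ∃ x : Tup (D.T c).X p, ∃ h : ((D.T c).P p).T.H, y = h • ((D.T c).P p).ι x := by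
  obtain ⟨h, hh, ha⟩ := σ.ex_conj D.hf D.hs D.h1 (D.vx' c y) hP
  obtain ⟨x, hx⟩ := D.ι_lift c ((⟨h, hh⟩ : (D.T c).H') • y)
    (by rw [D.vx'_smul]; exact ha)
  refine ⟨x, (⟨h, hh⟩ : (D.T c).H')⁻¹, ?_⟩
  rw [hx, inv_smul_smul]

lemma dec {p : ℕ} (hP : ∀ y : Tup (D.T c).X' p, ¬ σ.P D.Ψ ≤ σ.Spn D.Φ (D.vx' c y)) (q : ℕ)
    (z : ((D.T c).P p).Rel.X q) (hz : z ∈ ((D.T c).P p).Rel.cyc q) :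
    z ∈ AddSubgroup.closure {x | ∃ y : Tup (D.T c).X p,
      ∃ w ∈ (ptP (D.st c y).H (D.st c y).H' (D.st c y).hle).Rel.cyc q, x = (D.i c y).rel.f q w} := by
  refine decomp ((D.T c).P p) (fun y => (D.st c y).H) (fun y => (D.st c y).H')
    (fun y => (D.st c y).hle) (D.st_H c) (D.st_H' c) (fun y => D.conj_in c y (hP y)) ?_ q z hz
  intro y1 y2 h e
  have e1 : D.vx c y1 = (h : 𝔾) • D.vx c y2 := by
    rw [← D.vx_ι c y2]
    refine Eq.trans ?_ (D.vx'_smul c h _)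
    rw [← e]
    exact (D.vx_ι c y1).symm
  obtain ⟨k, hk, e2⟩ := σ.match_orb D.hf D.hs D.h1 (D.vx c y2) h.2 (D.ker c y2)
    (by rw [← e1]; exact D.ker c y1)
  exact ⟨⟨k, hk⟩, D.vx_inj c ((e1.trans e2).trans (D.vx_smul c ⟨k, hk⟩ y2).symm)⟩

end Dat

section
variable {F 𝔾 : Type} [Field F] [Group 𝔾] (σ : Stg F 𝔾)
open Stg

/-- The vanishing statement. -/
def Van (n : ℕ) : Prop := ∀ D : Dat σ, σ.rk D.Φ D.Ψ (n + 1) → VanP D.H D.H' n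

/-- The surjectivity statement. -/
def Sur (n : ℕ) : Prop := ∀ D : Dat σ, σ.rk D.Φ D.Ψ n → ∀ c, c ∉ D.Φ ⊔ σ.P D.Ψ →
  σ.pr c D.fs = 0 → SurP (σ.G ((D.Φ ⊔ ln c) ⊔ ln D.f) (D.Ψ ⊔ ln D.fs)) (σ.G (D.Φ ⊔ ln c) D.Ψ)
    D.H D.H' n

/-- The dual surjectivity statement. -/
def SurS (n : ℕ) : Prop := ∀ D : Dat σ, σ.rk D.Φ D.Ψ n → ∀ η, η ∉ D.Ψ ⊔ σ.N D.Φ →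
  σ.pr D.f η = 0 → SurP (σ.G (D.Φ ⊔ ln D.f) ((D.Ψ ⊔ ln η) ⊔ ln D.fs)) (σ.G D.Φ (D.Ψ ⊔ ln η))
    D.H D.H' n

lemma Sur.star {n : ℕ} (h : Sur σ.flip n) : SurS σ n := by
  intro D hr η hη h0
  have := h D.flip (σ.rk_flip hr) η hη h0
  change SurP (σ.G (D.Φ ⊔ ln D.f) ((D.Ψ ⊔ ln η) ⊔ ln D.fs)) (σ.G D.Φ (D.Ψ ⊔ ln η))
    (σ.G (D.Φ ⊔ ln D.f) (D.Ψ ⊔ ln D.fs)) (σ.G D.Φ D.Ψ) n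
  rw [← flip_G, ← flip_G, ← flip_G, ← flip_G]
  exact this

end
end FSH

namespace FSH
open FreeAbelianGroup (of)
open GS
section
open Stg
variable {F 𝔾 : Type} [Field F] [Group 𝔾] (σ : Stg F 𝔾)

lemma Stg.Spn_le {Φ Θ : Submodule F σ.A} (h : Φ ≤ Θ) {p : ℕ} (x : Tup σ.A p)
    (hx : Tup.All (· ∈ Θ) x) : σ.Spn Φ x ≤ Θ := by
  induction p, x using Tup.ind with
  | nil => exact h
  | cons n e x ih =>
    rw [Spn_cons]
    refine sup_le (ih hx.2) ?_
    rw [Submodule.span_singleton_le_iff_mem]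
    exact hx.1

lemma Stg.Spn_all {Φ Θ : Submodule F σ.A} {p : ℕ} (x : Tup σ.A p)
    (hx : σ.Spn Φ x ≤ Θ) : Tup.All (· ∈ Θ) x := by
  induction p, x using Tup.ind with
  | nil => trivial
  | cons n e x ih =>
    rw [Spn_cons] at hx
    exact ⟨hx (Submodule.mem_sup_right (self_ln e)), ih (le_sup_left.trans hx)⟩

lemma all_map {E E' : Type} (f : E → E') (p : E' → Prop) {n : ℕ} (x : Tup E n) :
    Tup.All p (Tup.map f x) ↔ Tup.All (fun e => p (f e)) x := by
  induction n, x using Tup.ind with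
  | nil => exact Iff.rfl
  | cons n e x ih => exact and_congr_right fun _ => ih

lemma sup_ln_of_mem {M : Type} [AddCommGroup M] [Module F M] {Φ : Submodule F M} {v : M}
    (h : v ∈ Φ) : Φ ⊔ ln v = Φ :=
  sup_eq_left.2 ((Submodule.span_singleton_le_iff_mem v Φ).2 h)

lemma geo {Φ : Submodule F σ.A} {Ψ : Submodule F σ.B} {t : F} (ht0 : t ≠ 0) (ht1 : t ≠ 1)
    {E : Type} (val : E → σ.A) (hE : ∀ e e', val e - val e' ∈ σ.P Ψ)
    (L : Submodule F σ.A) (hL : ∀ e, val e ∈ L) (Q : Submodule F σ.B)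
    (hcl : ∀ v1 v2 : E, (1 - t) • val v1 + t • val v2 ∉ Φ →
      ∃ vt, val vt = (1 - t) • val v1 + t • val v2)
    {p : ℕ}
    (hsep : ∀ (x : Tup E (p + 1)) e, val e ∉ σ.Spn Φ (Tup.map val x) →
      ∃ η ∈ Q, η ∈ σ.N (σ.Spn Φ (Tup.map val x)) ∧ σ.pr (val e) η = 1)
    (v1 v2 : E) (x : Tup E p) (Φv : Submodule F σ.A)
    (hΦv : Φv = σ.Spn Φ (Tup.map val (Tup.cons v1 (Tup.cons v2 x))))
    (S : AddSubgroup (Z (Tup E (p + 2))))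
    (h0 : ∀ μ : Tup E (p + 3), Tup.All (fun e => val e ∈ Φv) μ → bd (p + 2) (of μ) ∈ S)
    (hr : ∀ η ∈ Q, η ∈ σ.N Φ → ∀ u ∈ σ.P Ψ, u ∈ Φv → u ∈ L → 1 + σ.pr u η ≠ 0 → ∀ u' ∈ σ.P Ψ,
      u' ∈ Φv → σ.pr u' η ≠ 0 → ∀ y w : Tup E (p + 2), Tup.All (fun e => val e ∈ Φv) y →
      Tup.map val w = Tup.map (fun a => a + σ.pr a η • u) (Tup.map val y) → of w - of y ∈ S)
    (h3 : ∀ y : Tup E (p + 2), Tup.All (fun e => val e ∈ Φv) y →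
      (∃ y' : Tup E (p + 1), σ.Spn Φ (Tup.map val y) = σ.Spn Φ (Tup.map val y')) → of y ∈ S) :
    of (Tup.cons v1 (Tup.cons v2 x)) ∈ S := by
  have hall : Tup.All (fun e => val e ∈ Φv) (Tup.cons v1 (Tup.cons v2 x)) :=
    (all_map val (· ∈ Φv) _).1 (σ.Spn_all _ hΦv.ge)
  have a1 : val v1 ∈ Φv := hall.1
  have a2 : val v2 ∈ Φv := hall.2.1
  have ax : Tup.All (fun e => val e ∈ Φv) x := hall.2.2
  by_cases n1 : val v1 ∈ σ.Spn Φ (Tup.map val (Tup.cons v2 x))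
  · exact h3 _ hall ⟨Tup.cons v2 x, by rw [Tup.map_cons, Spn_cons, sup_ln_of_mem n1]⟩
  by_cases n2 : val v2 ∈ σ.Spn Φ (Tup.map val (Tup.cons v1 x))
  · refine h3 _ hall ⟨Tup.cons v1 x, ?_⟩
    rw [Tup.map_cons, Tup.map_cons, Spn_cons, Spn_cons, sup_right_comm, sup_ln_of_mem]
    · rfl
    · exact n2
  have s1 : 1 - t ≠ 0 := sub_ne_zero.2 ht1.symm
  obtain ⟨vt, hvt⟩ := hcl v1 v2 (by
    intro h
    apply n1
    rw [Tup.map_cons, Spn_cons, mem_sup_ln]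
    refine ⟨-(t / (1 - t)), σ.le_Spn _ _ ?_⟩
    convert Submodule.smul_mem _ (1 - t)⁻¹ h using 1
    rw [smul_add, smul_smul, smul_smul, inv_mul_cancel₀ s1, one_smul, neg_smul, sub_neg_eq_add,
      div_eq_inv_mul])
  have at' : val vt ∈ Φv := by
    rw [hvt]; exact Submodule.add_mem _ (Submodule.smul_mem _ _ a1) (Submodule.smul_mem _ _ a2)
  obtain ⟨η1, q1, b1, c1⟩ := hsep _ v1 n1
  obtain ⟨η2, q2, b2, c2⟩ := hsep _ v2 n2
  rw [mem_N_Spn, all_map] at b1 b2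
  obtain ⟨b1, d1, e1⟩ := b1
  obtain ⟨b2, d2, e2⟩ := b2
  change σ.pr (val v2) η1 = 0 at d1
  change σ.pr (val v1) η2 = 0 at d2
  have H2 : of (Tup.cons v1 (Tup.cons vt x)) - of (Tup.cons v1 (Tup.cons v2 x)) ∈ S := by
    refine hr η2 q2 b2 ((1 - t) • (val v1 - val v2)) (Submodule.smul_mem _ _ (hE _ _))
      (Submodule.smul_mem _ _ (Submodule.sub_mem _ a1 a2))
      (Submodule.smul_mem _ _ (Submodule.sub_mem _ (hL _) (hL _))) (by simp [c2, d2, ht0])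
      (val v1 - val v2) (hE _ _) (Submodule.sub_mem _ a1 a2) (by simp [c2, d2]) _ _ hall ?_
    simp only [Tup.map_cons, c2, d2, hvt, Tup.map_map, zero_smul, add_zero, one_smul]
    refine congrArg₂ _ rfl (congrArg₂ _ (by module) (Tup.map_congr _ _ _ _ ?_))
    refine Tup.All.imp (fun e h => ?_) e2
    rw [h, zero_smul, add_zero]
  have H1 : of (Tup.cons v2 (Tup.cons vt x)) - of (Tup.cons v1 (Tup.cons vt x)) ∈ S := by
    have f1 : σ.pr (val v1) (η1 - ((1 - t) / t) • η2) = 1 := by simp [c1, d2]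
    have f2 : σ.pr (val v2) (η1 - ((1 - t) / t) • η2) = - ((1 - t) / t) := by simp [d1, c2]
    have f3 : σ.pr (val v2 - val v1) (η1 - ((1 - t) / t) • η2) = - t⁻¹ := by
      rw [map_sub σ.pr, LinearMap.sub_apply, f1, f2]; field_simp; ring
    have f4 : σ.pr (val vt) (η1 - ((1 - t) / t) • η2) = 0 := by
      rw [hvt, map_add, LinearMap.add_apply, map_smul, map_smul, LinearMap.smul_apply,
        LinearMap.smul_apply, f1, f2, smul_eq_mul, smul_eq_mul]; field_simp; ring
    refine hr (η1 - ((1 - t) / t) • η2) (Submodule.sub_mem _ q1 (Submodule.smul_mem _ _ q2))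
      (Submodule.sub_mem _ b1 (Submodule.smul_mem _ _ b2)) (val v2 - val v1) (hE _ _)
      (Submodule.sub_mem _ a2 a1) (Submodule.sub_mem _ (hL _) (hL _)) ?_ (val v2 - val v1) (hE _ _)
      (Submodule.sub_mem _ a2 a1) (by rw [f3]; simp [ht0]) _ _ ⟨a1, at', ax⟩ ?_
    · rw [f3]
      intro h
      apply ht1
      field_simp at h
      linear_combination h
    simp only [Tup.map_cons, f1, f4, Tup.map_map, zero_smul, add_zero, one_smul]
    refine congrArg₂ _ (by module) (congrArg₂ _ rfl (Tup.map_congr _ _ _ _ ?_))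
    refine Tup.All.imp (fun e h => ?_) (All.and e1 e2)
    rw [map_sub, map_smul, h.1, h.2, smul_zero, sub_zero, zero_smul, add_zero]
  refine mu (fun e => val e ∈ Φv) v1 v2 vt x ax S (h0 _ ⟨a1, a2, at', ax⟩) ?_ H2 ?_
  · have := S.add_mem H1 H2
    rwa [sub_add_sub_cancel] at this
  · intro y hy
    cases p with
    | zero => exact absurd hy id
    | succ p =>
      obtain ⟨g1, g2⟩ := hy
      obtain ⟨y', rfl⟩ : ∃ y', y = Tup.cons vt y' := ⟨y.tl, congrArg₂ Tup.cons g1 rfl⟩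
      refine h3 _ ⟨a1, a2, at', g2⟩ ⟨Tup.cons v1 (Tup.cons v2 y'), ?_⟩
      simp only [Tup.map_cons, Spn_cons]
      rw [sup_right_comm _ (ln (val vt)), sup_right_comm _ (ln (val vt)), sup_ln_of_mem]
      rw [hvt]
      exact Submodule.add_mem _ (Submodule.smul_mem _ _ (Submodule.mem_sup_right (self_ln _)))
        (Submodule.smul_mem _ _ (Submodule.mem_sup_left (Submodule.mem_sup_right (self_ln _))))
end
end FSH

namespace FSH
open FreeAbelianGroup (of)
open GS
section
variable {G : Type} [Group G]

/-- A decoration fixed by a pair of groups. -/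
structure Fx (P : Pr G) (K K' : Subgroup G) (y : P.S.Y) : Prop where
  h : ∀ h ∈ K, ∃ hh : h ∈ P.S.H, (⟨h, hh⟩ : P.S.H) • y = y
  h' : ∀ h ∈ K', ∃ hh : h ∈ P.T.H, (⟨h, hh⟩ : P.T.H) • P.ι y = P.ι y

lemma Fx.inv {P : Pr G} {K K' : Subgroup G} {y : P.S.Y} (f : Fx P K K' y)
    (lK : K ≤ P.S.H) (lK' : K' ≤ P.T.H) : Inv P lK lK' (of y) :=
  ⟨fun h hh => by rw [push_of]; congr 1; exact (f.h h hh).2,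
    fun h hh => by rw [push_of, push_of]; congr 1; exact (f.h' h hh).2⟩

lemma IB_sub (P : Pr G) {K K' : Subgroup G} (k : K ≤ K') (lK : K ≤ P.S.H) (lK' : K' ≤ P.T.H)
    {n : ℕ} (z : (ptP K K' k).Rel.X n) (R : AddSubgroup (P.Rel.X n)) (y1 y2 : P.S.Y)
    (f1 : Fx P K K' y1) (f2 : Fx P K K' y2)
    (h : (iy P k y1 f1.h f1.h').rel.f n z - (iy P k y2 f2.h f2.h').rel.f n z ∈ R) :
    of y1 - of y2 ∈ IB P k lK lK' z R := by
  have h3 : Inv P lK lK' (of y1 - of y2) :=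
    ⟨fun h hh => by rw [map_sub, (f1.inv lK lK').1 h hh, (f2.inv lK lK').1 h hh],
      fun h hh => by rw [map_sub, map_sub, (f1.inv lK lK').2 h hh, (f2.inv lK lK').2 h hh]⟩
  refine (mem_IB _ _ _ _ _ _ _).2 ⟨h3, ?_⟩
  rw [← PMor.rel_sub (iy P k y1 f1.h f1.h') (iy P k y2 f2.h f2.h') (iw P k h3) rfl rfl
    (fun y => by simp [iw]) (fun y => by simp [iw]) n z]
  exact h

lemma IB_fac (P : Pr G) {K K' L L' : Subgroup G} (k : K ≤ K') (l : L ≤ L') (m : K ≤ L)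
    (m' : K' ≤ L') (lK : K ≤ P.S.H) (lK' : K' ≤ P.T.H)
    {n : ℕ} (z : (ptP K K' k).Rel.X n) (hz : z ∈ (ptP K K' k).Rel.cyc n)
    (R : AddSubgroup (P.Rel.X n)) (hR : P.Rel.bdy n ≤ R) (y : P.S.Y)
    (f : Fx P L L' y) (hv : VanP L L' n) :
    of y ∈ IB P k lK lK' z R := by
  have f' : Fx P K K' y := ⟨fun h hh => f.h h (m hh), fun h hh => f.h' h (m' hh)⟩
  rw [IB_of P k lK lK' z R y f'.h f'.h']
  apply hR
  rw [← PMor.comp_eq (ptI k l m m') (iy P l y f.h f.h') (iy P k y f'.h f'.h') (by simp)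
    (fun y => by simp) (fun y => by simp)]
  exact (PMor.rel _).bdy (hv l _ ((PMor.rel _).cyc hz))

lemma IB_repl (P : Pr G) {K K' K0 K0' : Subgroup G} (k : K ≤ K') (k0 : K0 ≤ K0') (m : K0 ≤ K)
    (m' : K0' ≤ K') (lK : K ≤ P.S.H) (lK' : K' ≤ P.T.H)
    {n : ℕ} (z : (ptP K K' k).Rel.X n) (z0 : (ptP K0 K0' k0).Rel.X n)
    (hz0 : z0 ∈ (ptP K0 K0' k0).Rel.cyc n)
    (hzz : z - (ptI k0 k m m').rel.f n z0 ∈ (ptP K K' k).Rel.bdy n)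
    (R : AddSubgroup (P.Rel.X n)) (hR : P.Rel.bdy n ≤ R) (y : P.S.Y) (g : P.S.H)
    (f1 : Fx P K K' (g • y)) (f2 : Fx P K K' y)
    (hg : ∀ h ∈ K0', (g : G) * h * (g : G)⁻¹ = h) :
    of (g • y) - of y ∈ IB P k lK lK' z R := by
  apply IB_sub P k lK lK' z R _ _ f1 f2
  apply hR
  have cg : ∀ h ∈ K0, (g : G) * h * (g : G)⁻¹ ∈ K := fun h hh => by
    rw [hg h (k0 hh)]; exact m hh
  have cg' : ∀ h ∈ K0', (g : G) * h * (g : G)⁻¹ ∈ K' := fun h hh => by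
    rw [hg h hh]; exact m' hh
  have e1 := (iy P k _ f1.h f1.h').rel.bdy hzz
  have e2 := (iy P k _ f2.h f2.h').rel.bdy hzz
  have e3 := (iy P k _ f1.h f1.h').rel.bdy (PMor.prism (ptI k0 k m m') (ptPM k0 k (g : G) cg cg')
    (fun h hh => by
      change 1 * h * 1⁻¹ = (g : G) * h * (g : G)⁻¹
      rw [hg h hh]; simp) (fun y => rfl) (fun y => rfl) hz0)
  have e4 := PMor.sqk (ptI k0 k m m') (iy P k _ f2.h f2.h') (ptPM k0 k (g : G) cg cg')
    (iy P k _ f1.h f1.h') g (by simp) (fun y => by simp) (fun y => by simp [P.hι]) n z0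
  rw [map_sub] at e1 e2 e3
  rw [e4] at e3
  convert AddSubgroup.sub_mem _ (AddSubgroup.sub_mem _ e1 e3) e2 using 1
  abel

lemma IB_bd (T : XP G) (p : ℕ) {K K' : Subgroup G} (k : K ≤ K') (lK : K ≤ (T.P p).S.H)
    (lK' : K' ≤ (T.P p).T.H)
    {n : ℕ} (z : (ptP K K' k).Rel.X n) (hz : z ∈ (ptP K K' k).Rel.cyc n) (μ : Tup T.X (p + 1))
    (f : Fx (T.P (p + 1)) K K' μ) :
    bd p (of μ) ∈ IB (T.P p) k lK lK' z (T.R p n) := by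
  have hi : Inv (T.P p) lK lK' (bd p (of μ)) := by
    constructor
    · intro h hh
      rw [← bd_smul, (f.inv lK lK').1 h hh]
    · intro h hh
      have e : push (T.P p).ι (bd p (of μ)) = bd p (push (T.P (p + 1)).ι (of μ)) :=
        (bd_map _ _ _).symm
      rw [e, ← bd_smul, (f.inv lK lK').2 h hh]
  refine (mem_IB _ _ _ _ _ _ _).2 ⟨hi, ?_⟩
  rw [← PMor.comp_eq (iy (T.P (p + 1)) k μ f.h f.h') (T.fP p) (iw (T.P p) k hi)
    (by simp [XP.fP, iw, face]) ?_ ?_]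
  · exact AddSubgroup.mem_sup_right ⟨_, (PMor.rel _).cyc hz, rfl⟩
  · intro y
    simp [XP.fP, iw, face]
  · intro y
    simp only [XP.fP, iw, face, push_of, lin_of]
    exact (bd_map _ _ _).symm.trans (by rw [push_of]) |>.symm
end
end FSH

namespace FSH
open FreeAbelianGroup (of)
open GS
section
open Stg
variable {F 𝔾 : Type} [Field F] [Group 𝔾] {σ : Stg F 𝔾} (D : Dat σ) (c : σ.A)

lemma Dat.fx {p r : ℕ} (v : Tup (D.T c).X p) (y : Tup (D.T c).X r)
    (h : σ.Spn D.Φ (D.vx c y) ≤ σ.Spn D.Φ (D.vx c v)) :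
    Fx ((D.T c).P r) (D.st c v).H (D.st c v).H' y :=
  ⟨fun _ hh => (D.st_H c y _).1 (σ.G_mono (sup_le_sup_right h _) le_rfl hh),
    fun _ hh => (D.st_H' c y _).1 (σ.G_mono h le_rfl hh)⟩

lemma Dat.fxa {p r : ℕ} (v : Tup (D.T c).X p) (y : Tup (D.T c).X r)
    (h : Tup.All (fun e : (D.T c).X => (e.1 : σ.A) ∈ σ.Spn D.Φ (D.vx c v)) y) :
    σ.Spn D.Φ (D.vx c y) ≤ σ.Spn D.Φ (D.vx c v) :=
  σ.Spn_le (σ.le_Spn _ _) _ ((all_map (fun e : (D.T c).X => (e.1 : σ.A)) _ y).2 h)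

lemma Dat.stH_le {p : ℕ} (v : Tup (D.T c).X p) (r : ℕ) : (D.st c v).H ≤ ((D.T c).P r).S.H :=
  σ.G_mono (sup_le_sup_right (σ.le_Spn _ _) _) le_rfl
lemma Dat.stH'_le {p : ℕ} (v : Tup (D.T c).X p) (r : ℕ) : (D.st c v).H' ≤ ((D.T c).P r).T.H :=
  σ.G_mono (σ.le_Spn _ _) le_rfl

lemma Stg.eq_of {g h : 𝔾} (e : ∀ a, σ.ra g a = σ.ra h a) : g = h := by
  rw [← inv_mul_eq_one]
  apply σ.inj
  intro a
  rw [ra_mul, ← e, ra_inv_ra]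

lemma Stg.comm_g {u : σ.A} {η : σ.B} {Φ : Submodule F σ.A} {Ψ : Submodule F σ.B} {g h : 𝔾}
    (hg : ∀ a, σ.ra g a = a + σ.pr a η • u) (hh : h ∈ σ.G Φ Ψ) (hu : u ∈ Φ) (hη : η ∈ Ψ) :
    g * h * g⁻¹ = h := by
  rw [mul_inv_eq_iff_eq_mul]
  apply eq_of (σ := σ)
  intro a
  rw [ra_mul, ra_mul, hg, hg, map_add, map_smul, hh.1 u hu, (σ.fixB).1 (hh.2 η hη)]

lemma hZ_pos {t : F} (ht0 : t ≠ 0) (ht1 : t ≠ 1) (n : ℕ)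
    (RK : ∀ l (y : Tup σ.A (l + 1)), Tup.All (· ∈ D.X' c) y → σ.rk (σ.Spn D.Φ y) D.Ψ (n - l))
    (hV : ∀ q < n, Van σ q) (hS : ∀ q < n, SurS σ q) (p q : ℕ) (hpq : p + (q + 1) + 1 = n)
    (a : ((D.T c).P (p + 2)).Rel.X (q + 1)) (ha : a ∈ ((D.T c).P (p + 2)).Rel.cyc (q + 1)) :
    a ∈ (D.T c).R (p + 2) (q + 1) := by
  have hd := D.dec c (p := p + 2) (fun y => σ.rk_one (σ.rk_le (n := n - (p + 1)) (by omega)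
    (RK (p + 1) _ (D.vx'_all c y)))) (q + 1) a ha
  refine (AddSubgroup.closure_le _).2 ?_ hd
  rintro _ ⟨v, z, hz, rfl⟩
  have rkv : σ.rk (σ.Spn D.Φ (D.vx c v)) D.Ψ (q + 1) := by
    have := RK (p + 1) (D.vx c v) (Tup.All.imp (fun _ h => h.1) (D.vx_all c v))
    rwa [show n - (p + 1) = q + 1 by omega] at this
  have key : of v ∈ IB ((D.T c).P (p + 2)) (D.st c v).hle (D.stH_le c v _) (D.stH'_le c v _) z
      ((D.T c).R (p + 2) (q + 1)) := by
    let val : (D.T c).X → σ.A := fun e => e.1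
    have hmem : ∀ e : (D.T c).X, val e ∈ D.X c := fun e => e.2
    refine geo σ (Φ := D.Φ) (Ψ := D.Ψ) ht0 ht1 val ?_ (σ.P (ln D.fs)) ?_ (σ.N (ln D.f)) ?_ ?_
      v.hd v.tl.hd v.tl.tl (σ.Spn D.Φ (D.vx c v)) rfl _ ?_ ?_ ?_
    · intro e e'
      rw [← sub_sub_sub_cancel_right _ _ c]
      exact Submodule.sub_mem _ (hmem e).1.1 (hmem e').1.1
    · intro e b hb
      obtain ⟨s, rfl⟩ := Submodule.mem_span_singleton.1 hb
      rw [map_smul, (hmem e).2, smul_zero]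
    · intro v1 v2 h
      refine ⟨⟨_, ⟨⟨?_, h⟩, ?_⟩⟩, rfl⟩
      · have e : (1 - t) • val v1 + t • val v2 - c = (1 - t) • (val v1 - c) + t • (val v2 - c) := by
          module
        rw [e]
        exact Submodule.add_mem _ (Submodule.smul_mem _ _ (hmem v1).1.1)
          (Submodule.smul_mem _ _ (hmem v2).1.1)
      · rw [map_add, map_smul, map_smul, LinearMap.add_apply, LinearMap.smul_apply,
          LinearMap.smul_apply, (hmem v1).2, (hmem v2).2]
        simp
    · intro x e he
      have : val e ∉ σ.Spn D.Φ (Tup.map val x) ⊔ ln D.f := by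
        rw [mem_sup_ln]
        rintro ⟨s, hs⟩
        have h2 : σ.pr (val e - s • D.f) D.fs = 0 :=
          ((σ.mem_N_Spn (D.vx c x)).2 ⟨D.hs, D.ker c x⟩) _ hs
        rw [map_sub, LinearMap.sub_apply, map_smul, LinearMap.smul_apply, (hmem e).2, D.h1] at h2
        have h3 : s = 0 := by simpa using h2
        rw [h3, zero_smul, sub_zero] at hs
        exact he hs
      obtain ⟨η, h1, h2⟩ := σ.sep1 this
      exact ⟨η, fun b hb => h1 b (Submodule.mem_sup_right hb),
        fun b hb => h1 b (Submodule.mem_sup_left hb), h2⟩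
    · intro μ hμ
      exact IB_bd (D.T c) (p + 2) _ _ _ z hz μ (D.fx c v μ (D.fxa c v μ hμ))
    · intro η hη hηN u hu huv huL hne u' hu' huv' hne' y w hy hw
      have h0 : σ.pr D.f η = 0 := hη _ (self_ln _)
      obtain ⟨g, hg, hga⟩ := σ.exists_g (Φ := D.Φ ⊔ ln D.f) (Ψ := D.Ψ ⊔ ln D.fs) (u := u) (ξ := η)
        ((σ.mem_P_sup).2 ⟨hu, huL _ (self_ln _)⟩) ((σ.mem_N_sup).2 ⟨hηN, h0⟩) hne
      obtain rfl : w = (⟨g, hg⟩ : ((D.T c).P (p + 2)).S.H) • y := by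
        apply D.vx_inj c
        refine hw.trans (Eq.trans ?_ (D.vx_smul c ⟨g, hg⟩ y).symm)
        change _ = Tup.map (g • ·) (D.vx c y)
        congr 1
        funext a
        exact (hga a).symm
      have hnot : η ∉ D.Ψ ⊔ σ.N (σ.Spn D.Φ (D.vx c v)) := by
        intro h
        obtain ⟨b1, hb1, b2, hb2, rfl⟩ := Submodule.mem_sup.1 h
        exact hne' (by rw [map_add, hu' _ hb1, hb2 _ huv', add_zero])
      have m : σ.G (σ.Spn D.Φ (D.vx c v) ⊔ ln D.f) ((D.Ψ ⊔ ln η) ⊔ ln D.fs) ≤ (D.st c v).H :=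
        σ.G_mono le_rfl (sup_le_sup_right le_sup_left _)
      have m' : σ.G (σ.Spn D.Φ (D.vx c v)) (D.Ψ ⊔ ln η) ≤ (D.st c v).H' :=
        σ.G_mono le_rfl le_sup_left
      have k0 : σ.G (σ.Spn D.Φ (D.vx c v) ⊔ ln D.f) ((D.Ψ ⊔ ln η) ⊔ ln D.fs) ≤
        σ.G (σ.Spn D.Φ (D.vx c v)) (D.Ψ ⊔ ln η) := σ.G_mono le_sup_left le_sup_left
      obtain ⟨z0, hz0, hzz⟩ := hS (q + 1) (by omega) (D.st c v) rkv η hnot h0 k0 (D.st c v).hle m m'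
        z hz
      refine IB_repl ((D.T c).P (p + 2)) (D.st c v).hle k0 m m' _ _ z z0 hz0 hzz _
        le_sup_left y ⟨g, hg⟩ ?_ (D.fx c v y (D.fxa c v y hy)) ?_
      · apply D.fx
        refine σ.Spn_le (σ.le_Spn _ _) _ ?_
        change Tup.All _ (Tup.map val _)
        rw [hw, all_map, all_map]
        exact Tup.All.imp (fun e h => Submodule.add_mem _ h (Submodule.smul_mem _ _ huv)) hy
      · intro h hh
        exact comm_g hga hh huv (Submodule.mem_sup_right (self_ln _))
    · rintro y hy ⟨y', hy'⟩
      have hle := D.fxa c v y hy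
      have m : (D.st c v).H ≤ (D.st c y).H := σ.G_mono (sup_le_sup_right hle _) le_rfl
      have m' : (D.st c v).H' ≤ (D.st c y).H' := σ.G_mono hle le_rfl
      refine IB_fac ((D.T c).P (p + 2)) (D.st c v).hle (D.st c y).hle m m' (D.stH_le c v _)
        (D.stH'_le c v _) z hz ((D.T c).R (p + 2) (q + 1)) le_sup_left y (D.fx c y y le_rfl)
        (hV (q + 1) (by omega) (D.st c y) ?_)
      have := RK p (D.vx c y') (Tup.All.imp (fun _ h => h.1) (D.vx_all c y'))
      rw [show n - p = q + 1 + 1 by omega] at this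
      change σ.rk (σ.Spn D.Φ (Tup.map val y)) D.Ψ _
      rw [hy']
      exact this
  exact (IB_of ((D.T c).P (p + 2)) (D.st c v).hle (D.stH_le c v _) (D.stH'_le c v _) z
    ((D.T c).R (p + 2) (q + 1)) v (fun h => (D.st_H c v h).1) (fun h => (D.st_H' c v h).1)).1 key
end
end FSH

namespace FSH
open FreeAbelianGroup (of)
open GS
section
variable {G : Type} [Group G]

/-- Zero chains of the decorated complex that lie in a subgroup. -/
def S0 (P : Pr G) (R : AddSubgroup (P.Rel.X 0)) (t : Tup G 1) : AddSubgroup (Z P.T.Y) :=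
  (show AddSubgroup (Z (P.T.Q 1)) from R).comap (P.T.B (of t))

lemma mem_S0 (P : Pr G) (R : AddSubgroup (P.Rel.X 0)) (t : Tup G 1) (w : Z P.T.Y) :
    w ∈ S0 P R t ↔ P.z0 (P.T.B (of t) w) ∈ R := Iff.rfl

lemma S0_sub (P : Pr G) (R : AddSubgroup (P.Rel.X 0)) (hR : P.Rel.bdy 0 ≤ R) (t : Tup G 1)
    (h : P.T.H) (y : P.T.Y) : of (h • y) - of y ∈ S0 P R t := by
  rw [mem_S0]
  apply hR
  refine ⟨P.mk2 (P.T.B (of (Tup.cons t.hd (Tup.cons ((h : G)⁻¹ * t.hd) Tup.nil))) (of y)) 0, ?_⟩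
  refine (cone_d_zero P.φ.ch _ _).trans ?_
  have : P.T.B (of t) (of (h • y)) = P.T.B (of (h⁻¹ • t)) (of y) := by
    conv_rhs => rw [← P.T.B_smul h]
    rw [push_of, push_of, smul_inv_smul]
  change P.T.dS 1 _ - _ = P.T.B (of t) (of (h • y) - of y)
  rw [dS_B, map_sub, this, map_zero, sub_zero, bd_succ, bd_zero]
  simp
  rfl

lemma S0_ι (P : Pr G) (R : AddSubgroup (P.Rel.X 0)) (hR : P.Rel.bdy 0 ≤ R) (t : Tup G 1)
    (y : P.S.Y) : of (P.ι y) ∈ S0 P R t := by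
  rw [mem_S0]
  apply hR
  refine ⟨P.mk2 0 (- P.S.B (of t) (of y)), ?_⟩
  refine (cone_d_zero P.φ.ch _ _).trans ?_
  rw [map_zero, map_neg, zero_sub, neg_neg]
  change P.φ.op 1 _ = P.T.B (of t) (of (P.ι y))
  rw [Mor.op_B]
  simp

lemma S0_bd (T : XP G) (p : ℕ) (t : Tup G 1) (w : Z (Tup T.X' (p + 1))) :
    bd p w ∈ S0 (T.P p) (T.R p 0) t := by
  rw [mem_S0]
  refine AddSubgroup.mem_sup_right ⟨(T.P (p + 1)).z0 ((T.P (p + 1)).T.B (of t) w), trivial, ?_⟩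
  rw [PMor.rel_z0]
  congr 1
  change (T.fP p).b.op 1 _ = _
  rw [Mor.op_B]
  simp [XP.fP, face]
end

section
open Stg
variable {F 𝔾 : Type} [Field F] [Group 𝔾] {σ : Stg F 𝔾} (D : Dat σ) (c : σ.A)

lemma hZ_zero {t : F} (ht0 : t ≠ 0) (ht1 : t ≠ 1) (n : ℕ)
    (RK : ∀ l (y : Tup σ.A (l + 1)), Tup.All (· ∈ D.X' c) y → σ.rk (σ.Spn D.Φ y) D.Ψ (n - l))
    (p : ℕ) (hpq : p + 0 + 1 = n) (a : ((D.T c).P (p + 2)).Rel.X 0) :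
    a ∈ (D.T c).R (p + 2) 0 := by
  change Z (((D.T c).P (p + 2)).T.Q 1) at a
  induction a using Z.ind with
  | zero => exact AddSubgroup.zero_mem _
  | sub a b ha hb => exact AddSubgroup.sub_mem _ ha hb
  | of s =>
    obtain ⟨tt, v, rfl⟩ := ((D.T c).P (p + 2)).T.q_surj s
    rw [← B_of]
    have key : of v ∈ S0 ((D.T c).P (p + 2)) ((D.T c).R (p + 2) 0) tt := by
      let val : (D.T c).X' → σ.A := fun e => e.1
      have hmem : ∀ e : (D.T c).X', val e ∈ D.X' c := fun e => e.2
      have hR : ((D.T c).P (p + 2)).Rel.bdy 0 ≤ (D.T c).R (p + 2) 0 := le_sup_left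
      refine geo σ (Φ := D.Φ) (Ψ := D.Ψ) ht0 ht1 val ?_ ⊤ ?_ ⊤ ?_ ?_
        v.hd v.tl.hd v.tl.tl (σ.Spn D.Φ (D.vx' c v)) rfl _ ?_ ?_ ?_
      · intro e e'
        rw [← sub_sub_sub_cancel_right _ _ c]
        exact Submodule.sub_mem _ (hmem e).1 (hmem e').1
      · intro e
        trivial
      · intro v1 v2 h
        refine ⟨⟨_, ⟨?_, h⟩⟩, rfl⟩
        have e : (1 - t) • val v1 + t • val v2 - c = (1 - t) • (val v1 - c) + t • (val v2 - c) := by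
          module
        rw [e]
        exact Submodule.add_mem _ (Submodule.smul_mem _ _ (hmem v1).1)
          (Submodule.smul_mem _ _ (hmem v2).1)
      · intro x e he
        obtain ⟨η, h1, h2⟩ := σ.sep1 he
        exact ⟨η, trivial, h1, h2⟩
      · intro μ hμ
        exact S0_bd (D.T c) (p + 2) tt (of μ)
      · intro η hη hηN u hu huv huL hne u' hu' huv' hne' y w hy hw
        obtain ⟨g, hg, hga⟩ := σ.exists_g (Φ := D.Φ) (Ψ := D.Ψ) (u := u) (ξ := η) hu hηN hne
        obtain rfl : w = (⟨g, hg⟩ : ((D.T c).P (p + 2)).T.H) • y := by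
          apply D.vx'_inj c
          refine hw.trans (Eq.trans ?_ (D.vx'_smul c ⟨g, hg⟩ y).symm)
          change _ = Tup.map (g • ·) (D.vx' c y)
          congr 1
          funext a
          exact (hga a).symm
        exact S0_sub ((D.T c).P (p + 2)) _ hR tt _ y
      · rintro y hy ⟨y', hy'⟩
        have := RK p (D.vx' c y') (D.vx'_all c y')
        rw [show n - p = 1 by omega] at this
        have hP := σ.rk_one this
        change ¬ σ.P D.Ψ ≤ σ.Spn D.Φ (Tup.map val y') at hP
        rw [← hy'] at hP
        obtain ⟨x, h, rfl⟩ := D.conj_in c y hP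
        have h1 := S0_sub ((D.T c).P (p + 2)) _ hR tt h (((D.T c).P (p + 2)).ι x)
        have h2 := S0_ι ((D.T c).P (p + 2)) _ hR tt x
        simpa only [sub_add_cancel] using AddSubgroup.add_mem _ h1 h2
    exact (mem_S0 _ _ _ _).1 key

lemma hZ {t : F} (ht0 : t ≠ 0) (ht1 : t ≠ 1) (n : ℕ)
    (RK : ∀ l (y : Tup σ.A (l + 1)), Tup.All (· ∈ D.X' c) y → σ.rk (σ.Spn D.Φ y) D.Ψ (n - l))
    (hV : ∀ q < n, Van σ q) (hS : ∀ q < n, SurS σ q) (p q : ℕ) (hpq : p + q + 1 = n)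
    (a : ((D.T c).P (p + 2)).Rel.X q) (ha : a ∈ ((D.T c).P (p + 2)).Rel.cyc q) :
    a ∈ (D.T c).R (p + 2) q := by
  cases q with
  | zero => exact hZ_zero D c ht0 ht1 n RK p hpq a
  | succ q => exact hZ_pos D c ht0 ht1 n RK hV hS p q hpq a ha
end
end FSH

namespace FSH
open FreeAbelianGroup (of)
open GS
section
open Stg
variable {F 𝔾 : Type} [Field F] [Group 𝔾] {σ : Stg F 𝔾} (D : Dat σ) (c : σ.A)

lemma Stg.rk_zero (Φ : Submodule F σ.A) (Ψ : Submodule F σ.B) : σ.rk Φ Ψ 0 :=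
  ⟨fun i => i.elim0, fun i => i.elim0, fun i => i.elim0, fun i => i.elim0, fun i => i.elim0⟩

lemma RK_of (n : ℕ) (h : ∀ e ∈ D.X' c, σ.rk (D.Φ ⊔ ln e) D.Ψ n) (l : ℕ) (y : Tup σ.A (l + 1))
    (hy : Tup.All (· ∈ D.X' c) y) : σ.rk (σ.Spn D.Φ y) D.Ψ (n - l) := by
  induction l with
  | zero => exact h _ hy.1
  | succ l ih =>
    have h1 := ih y.tl hy.2
    change σ.rk (σ.Spn D.Φ y.tl ⊔ ln y.hd) D.Ψ _
    by_cases hl : n - (l + 1) = 0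
    · rw [hl]; exact rk_zero _ _
    · rw [show n - l = n - (l + 1) + 1 by omega] at h1
      exact σ.rk_add h1 _

lemma Stg.conj_G {Φ Φ' : Submodule F σ.A} {Ψ Ψ' : Submodule F σ.B} (g : 𝔾)
    (hΦ : ∀ a ∈ Φ', σ.ra g⁻¹ a ∈ Φ) (hΨ : ∀ b ∈ Ψ', σ.rb g⁻¹ b ∈ Ψ) (h : 𝔾) (hh : h ∈ σ.G Φ Ψ) :
    g * h * g⁻¹ ∈ σ.G Φ' Ψ' := by
  refine (σ.mem_G).2 ⟨fun a ha => ?_, fun b hb => ?_⟩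
  · rw [ra_mul, ra_mul, hh.1 _ (hΦ a ha), ra_ra_inv]
  · rw [rb_mul, rb_mul, hh.2 _ (hΨ b hb), rb_rb_inv]

lemma VanP_zero (H H' : Subgroup 𝔾) : VanP H H' 0 := by
  intro h z _
  obtain ⟨u, hu⟩ := B_unit_surj (S := pt H') PUnit.unit (fun _ => rfl) z
  refine ⟨(ptP H H' h).mk2 0 (- (pt H).B u (of PUnit.unit)), ?_⟩
  refine (cone_d_zero (ptP H H' h).φ.ch _ _).trans ?_
  rw [map_zero, map_neg, zero_sub, neg_neg]
  refine Eq.trans ?_ hu.symm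
  change (ptP H H' h).φ.op 1 _ = _
  rw [Mor.op_B]
  simp only [push_of, id]
  congr 1
  rw [push_one]

lemma SurP_zero (K K' H H' : Subgroup 𝔾) : SurP K K' H H' 0 := by
  intro k h l l' z hz
  refine ⟨0, AddSubgroup.zero_mem _, ?_⟩
  rw [map_zero, sub_zero]
  exact VanP_zero H H' h z hz

lemma inv_fix {Φ : Submodule F σ.A} {Ψ : Submodule F σ.B} {g : 𝔾} (hg : g ∈ σ.G Φ Ψ) {a : σ.A}
    (ha : a ∈ Φ) : σ.ra g⁻¹ a = a := (inv_mem hg).1 a ha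

lemma sur_step {t : F} (ht0 : t ≠ 0) (ht1 : t ≠ 1) (n : ℕ)
    (hV : ∀ q < n, Van σ q) (hS : ∀ q < n, SurS σ q) : Sur σ n := by
  intro D hr c hc hcs
  rcases Nat.eq_zero_or_pos n with rfl | hn
  · exact SurP_zero _ _ _ _
  intro k h l l' z hz
  have hX : ∀ e ∈ D.X' c, e ∉ D.Φ ⊔ σ.P D.Ψ := by
    intro e he hm
    apply hc
    rw [← sub_sub_cancel e c]
    exact Submodule.sub_mem _ hm (Submodule.mem_sup_right he.1)
  have RK := RK_of D c n (fun e he => σ.rk_addc hr (hX e he))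
  have hcX : c ∈ D.X c := ⟨⟨by rw [sub_self]; exact Submodule.zero_mem _,
    fun h => hc (Submodule.mem_sup_left h)⟩, hcs⟩
  obtain ⟨e, he, hez⟩ := (D.T c).devis1 ⟨c, hcX⟩ n (hZ D c ht0 ht1 n RK hV hS) z hz
  have hd := D.dec c (p := 1) (fun y => σ.rk_one (σ.rk_le (n := n - 0) (by omega)
    (RK 0 _ (D.vx'_all c y)))) n e he
  let RR : AddSubgroup ((ptP D.H D.H' h).Rel.X n) := (ptP D.H D.H' h).Rel.bdy n ⊔
    ((ptP _ _ k).Rel.cyc n).map ((ptI k h l l').rel.f n)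
  have hRR : z ∈ RR := by
    rw [← hez]
    have hle : AddSubgroup.closure {x | ∃ y : Tup (D.T c).X 1,
      ∃ w ∈ (ptP (D.st c y).H (D.st c y).H' (D.st c y).hle).Rel.cyc n, x = (D.i c y).rel.f n w} ≤
      RR.comap (((D.T c).toPt 1).rel.f n) := by
      rw [AddSubgroup.closure_le]
      rintro _ ⟨y, w, hw, rfl⟩
      have hy := D.vx_all c y
      set v := (D.vx c y).hd with hv
      have hy1 : v ∈ D.X c := hy.1
      have hSp : σ.Spn D.Φ (D.vx c y) = D.Φ ⊔ ln v := rfl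
      have hfle : D.Φ ⊔ ln D.f ≤ D.Φ ⊔ σ.P D.Ψ := sup_le_sup_left
        ((Submodule.span_singleton_le_iff_mem _ _).2 D.hf) _
      obtain ⟨g, hg, hgv⟩ := σ.trans (Φ := D.Φ ⊔ ln D.f) (Ψ := D.Ψ ⊔ ln D.fs) (v := v) (v' := c)
        (fun h => hX v hy1.1 (hfle h)) (fun h => hc (hfle h)) (by
          rw [← neg_sub]
          refine Submodule.neg_mem _ ?_
          refine (σ.mem_P_sup).2 ⟨hy1.1.1, ?_⟩
          rw [map_sub, LinearMap.sub_apply, hy1.2, hcs, sub_zero])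
      have hgc : σ.ra g⁻¹ c = v := by rw [← hgv, ra_inv_ra]
      have cΦ : ∀ a ∈ D.Φ ⊔ ln c, σ.ra g⁻¹ a ∈ D.Φ ⊔ ln v := by
        intro a ha
        obtain ⟨s, hs⟩ := (mem_sup_ln).1 ha
        rw [← sub_add_cancel a (s • c), map_add, map_smul, hgc,
          inv_fix hg (Submodule.mem_sup_left hs)]
        exact Submodule.add_mem _ (Submodule.mem_sup_left hs)
          (Submodule.smul_mem _ _ (Submodule.mem_sup_right (self_ln _)))
      have cΦ2 : ∀ a ∈ (D.Φ ⊔ ln c) ⊔ ln D.f, σ.ra g⁻¹ a ∈ (D.Φ ⊔ ln v) ⊔ ln D.f := by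
        intro a ha
        obtain ⟨s, hs⟩ := (mem_sup_ln).1 ha
        rw [← sub_add_cancel a (s • D.f), map_add, map_smul,
          inv_fix hg (Submodule.mem_sup_right (self_ln _))]
        exact Submodule.add_mem _ (Submodule.mem_sup_left (cΦ _ hs))
          (Submodule.smul_mem _ _ (Submodule.mem_sup_right (self_ln _)))
      have cΨ2 : ∀ b ∈ D.Ψ ⊔ ln D.fs, σ.rb g⁻¹ b ∈ D.Ψ ⊔ ln D.fs := fun b hb => by
        rw [(inv_mem hg).2 b hb]; exact hb
      have cΨ : ∀ b ∈ D.Ψ, σ.rb g⁻¹ b ∈ D.Ψ := fun b hb => by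
        rw [(inv_mem hg).2 b (Submodule.mem_sup_left hb)]; exact hb
      have e4 := PMor.sqk (D.i c y) ((D.T c).toPt 1)
        (ptPM (D.st c y).hle k g (conj_G g cΦ2 cΨ2) (conj_G g cΦ cΨ)) (ptI k h l l')
        ⟨g, hg⟩ (by simp [XP.toPt]) (fun y => rfl) (fun y => rfl) n w
      change _ ∈ RR
      rw [← e4]
      exact AddSubgroup.mem_sup_right ⟨_, (PMor.rel _).cyc hw, rfl⟩
    exact hle hd
  obtain ⟨b, hb, _, ⟨w, hw, rfl⟩, e⟩ := AddSubgroup.mem_sup.1 hRR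
  exact ⟨w, hw, by rw [← e, add_sub_cancel_right]; exact hb⟩
end
end FSH

namespace FSH
open FreeAbelianGroup (of)
open GS

lemma pr_comp {E E' E'' : Type} (f g : E → E') (k : E' → E'') (n : ℕ) (x : Tup E n) :
    pr (fun e => k (f e)) (fun e => k (g e)) n (of x) = push (Tup.map k) (pr f g n (of x)) := by
  induction n, x using Tup.ind with
  | nil => simp
  | cons n e x ih =>
    simp only [pr_succ, map_sub, push_of, ih, Tup.map_cons, push_push, Tup.map_map]

section
variable {G : Type} [Group G] {K K' H H' : Subgroup G}

/-- Elements of `H'` commuting with `K`. -/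
def Cen (K H' : Subgroup G) : Subgroup G := H' ⊓ Subgroup.centralizer (K : Set G)

lemma Cen_conj {w : G} (hw : w ∈ Cen K H') {k : G} (hk : k ∈ K) : w * k * w⁻¹ = k := by
  have := (Subgroup.mem_centralizer_iff.1 hw.2) k hk
  rw [← this, mul_inv_cancel_right]

lemma mem_Cen {w : G} (h : w ∈ H') (hc : ∀ k ∈ K, w * k * w⁻¹ = k) : w ∈ Cen K H' :=
  ⟨h, Subgroup.mem_centralizer_iff.2 fun k hk => by
    conv_lhs => rw [← hc k hk]
    simp⟩

/-- Conjugation by a centralizing element. -/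
abbrev cM (l : K ≤ H) (w : Cen K H') : Mor (pt K) (pt H) :=
  ptM K H w (fun k hk => by rw [Cen_conj w.2 hk]; exact l hk)

lemma cM_hc (l : K ≤ H) (u w : Cen K H') : ∀ k ∈ (pt K).H,
    (cM l u).g * k * (cM l u).g⁻¹ = (cM l w).g * k * (cM l w).g⁻¹ := fun k hk => by
  change (u : G) * k * (u : G)⁻¹ = w * k * (w : G)⁻¹
  rw [Cen_conj u.2 hk, Cen_conj w.2 hk]

lemma cM_pr (l : K ≤ H) (h : H ≤ H') (u w : Cen K H') (n : ℕ) (x : (pt K).Ch.X n) :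
    (ptP H H' h).φ.ch.f (n + 1) (Mor.prOp (cM l u) (cM l (u * w)) (cM_hc l _ _) (n + 1) x) =
    (ptP H H' h).φ.ch.f (n + 1) (Mor.prOp (cM l 1) (cM l w) (cM_hc l _ _) (n + 1) x) := by
  refine Qeq (((ptP H H' h).φ.op (n + 2)).comp
      (Mor.prOp (cM l u) (cM l (u * w)) (cM_hc l _ _) (n + 1)))
    (((ptP H H' h).φ.op (n + 2)).comp (Mor.prOp (cM l 1) (cM l w) (cM_hc l _ _) (n + 1)))
    (fun t y => ?_) x
  rw [AddMonoidHom.comp_apply, AddMonoidHom.comp_apply, Mor.prOp_B, Mor.prOp_B, Mor.op_B,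
    Mor.op_B]
  have e := pr_comp (fun x : G => (1 : G) * x) (fun x => (w : G) * x) (fun x => (u : G) * x) (n + 1) t
  have e2 : pr (fun x => (cM l u).g * x) (fun x => (cM l (u * w)).g * x) (n + 1) (of t) =
      push ((u : G) • ·) (pr (fun x => (cM l (1 : Cen K H')).g * x) (fun x => (cM l w).g * x) (n + 1) (of t)) := by
    refine Eq.trans ?_ e
    congr 2
    · funext x; simp
    · funext x; simp [mul_assoc]
  rw [e2, push_one, push_one]
  exact (pt H').B_smul ⟨u, u.2.1⟩ _ _

/-- The swapping argument: a relative cycle dies if a perfect-like element moves it away. -/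
lemma tau_kill (k : K ≤ K') (h : H ≤ H') (l : K ≤ H) (l' : K' ≤ H') (τ : G)
    (hτ : τ ∈ ⁅Cen K H', Cen K H'⁆) (hc : ∀ x ∈ K', τ * x * τ⁻¹ ∈ H) (m : ℕ)
    (z : (ptP K K' k).Rel.X (m + 1)) (hz : z ∈ (ptP K K' k).Rel.cyc (m + 1)) :
    (ptI k h l l').rel.f (m + 1) z ∈ (ptP H H' h).Rel.bdy (m + 1) := by
  obtain ⟨b0, c0, rfl⟩ := cp_surj _ z
  obtain ⟨hb, hcy⟩ := (cone_cyc _ _ _).1 hz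
  set φ := (ptP H H' h).φ.ch with hφ
  let R := cone φ
  let bb := (ptI k h l l').b.ch.f (m + 1) b0
  let X : Cen K H' → R.X (m + 1) := fun w => cp φ bb ((cM l w).ch.f m c0)
  let Pm : Cen K H' → Cen K H' → (pt H).Ch.X (m + 1) := fun u w =>
    Mor.prOp (cM l u) (cM l w) (cM_hc l _ _) (m + 1) c0
  have hP : ∀ u w, (cM l w).ch.f m c0 - (cM l u).ch.f m c0 = (pt H).Ch.d m (Pm u w) := fun u w =>
    (Mor.prism (cM l u) (cM l w) (cM_hc l _ _) (fun y => rfl)).cyc hcy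
  have h1 : ∀ u w, X w - X u + cp φ (φ.f (m + 1) (Pm u w)) 0 ∈ R.bdy (m + 1) := by
    intro u w
    refine ⟨cp φ 0 (- Pm u w), ?_⟩
    refine (cone_d_succ φ _ _).trans ?_
    refine (cp_inj φ).2 ⟨?_, ?_⟩
    · rw [map_zero]; change (0 : (pt H').Ch.X (m + 1)) - _ = (bb - bb) + _
      rw [map_neg, sub_neg_eq_add, sub_self]; rfl
    · change - (pt H).Ch.d m (- Pm u w) = ((cM l w).ch.f m c0 - (cM l u).ch.f m c0) + 0
      rw [map_neg, neg_neg, add_zero, hP]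
  have h2 : ∀ u w, (X (u * w) - X u) - (X w - X 1) ∈ R.bdy (m + 1) := by
    intro u w
    have := AddSubgroup.sub_mem _ (h1 u (u * w)) (h1 1 w)
    rw [show φ.f (m + 1) (Pm u (u * w)) = φ.f (m + 1) (Pm 1 w) from cM_pr l h u w m c0,
      add_sub_add_right_eq_sub] at this
    exact this
  let Q := R.X (m + 1) ⧸ R.bdy (m + 1)
  let δ : Cen K H' →* Multiplicative Q := MonoidHom.mk' (fun w =>
    Multiplicative.ofAdd (QuotientAddGroup.mk (X w - X 1))) (by
      intro u w
      rw [← ofAdd_add]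
      congr 1
      rw [← QuotientAddGroup.mk_add, QuotientAddGroup.eq]
      have := (R.bdy (m + 1)).neg_mem (h2 u w)
      convert this using 1
      abel)
  rw [← Subgroup.map_subtype_commutator] at hτ
  obtain ⟨τ', hτ', rfl⟩ := hτ
  have h3 : δ τ' = 1 := Abelianization.commutator_subset_ker δ hτ'
  have h4 : X τ' - X 1 ∈ R.bdy (m + 1) := (QuotientAddGroup.eq_zero_iff _).1 h3
  have h5 : X τ' ∈ R.bdy (m + 1) := by
    refine ⟨cp φ 0 (- (ptM K' H τ' hc).ch.f (m + 1) b0), ?_⟩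
    refine (cone_d_succ φ _ _).trans ?_
    refine (cp_inj φ).2 ⟨?_, ?_⟩
    · rw [map_zero, zero_sub, map_neg, neg_neg]
      have e1 := Mor.comp_eq (ptM K' H τ' hc) (ptP H H' h).φ
        (ptM K' H' τ' (fun x hx => h (hc x hx))) (by simp) (fun y => rfl) (m + 1) b0
      refine e1.trans ?_
      exact Mor.conj_eq (ptI k h l l').b (ptM K' H' τ' (fun x hx => h (hc x hx))) ⟨τ', τ'.2.1⟩
        (by simp) (fun y => rfl) (m + 1) b0
    · change - (pt H).Ch.d m (- (ptM K' H τ' hc).ch.f (m + 1) b0) = _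
      rw [map_neg, neg_neg]
      have e0 := (ptM K' H τ' hc).ch.comm m b0
      refine e0.trans ?_
      rw [hb]
      exact Mor.comp_eq (ptP K K' k).φ (ptM K' H τ' hc) (cM l τ') (by simp) (fun y => rfl) m c0
  have h6 := AddSubgroup.sub_mem _ h5 h4
  rw [sub_sub_cancel] at h6
  exact h6
end
end FSH

namespace FSH
open FreeAbelianGroup (of)
open GS
section
open Stg
variable {F 𝔾 : Type} [Field F] [Group 𝔾] {σ : Stg F 𝔾}

lemma mem_of_sub {M : Type} [AddCommGroup M] (S : AddSubgroup M) {a b : M} (h : a - b ∈ S)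
    (hb : b ∈ S) : a ∈ S := by
  have := S.add_mem h hb
  rwa [sub_add_cancel] at this

/-- Transvections are commutators. -/
lemma transv_comm {t : F} (ht0 : t ≠ 0) (ht1 : t ≠ 1) {Φ Φ' : Submodule F σ.A}
    {Ψ Ψ' : Submodule F σ.B} {u : σ.A} {ξ ξ0 : σ.B} (hu : u ∈ σ.P Ψ) (hu' : u ∈ Φ')
    (hξ : ξ ∈ σ.N Φ) (hξ' : ξ ∈ Ψ') (hξ0 : ξ0 ∈ σ.N Φ) (hξ0' : ξ0 ∈ Ψ') (h0 : σ.pr u ξ = 0)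
    (h1 : σ.pr u ξ0 = 1) :
    ∃ g ∈ ⁅Cen (σ.G Φ' Ψ') (σ.G Φ Ψ), Cen (σ.G Φ' Ψ') (σ.G Φ Ψ)⁆,
      ∀ a, σ.ra g a = a + σ.pr a ξ • u := by
  have ht : t - 1 ≠ 0 := sub_ne_zero.2 ht1
  obtain ⟨d, hd, hda⟩ := σ.exists_g (Φ := Φ) (Ψ := Ψ) (u := (t - 1) • u) (ξ := ξ0)
    (Submodule.smul_mem _ _ hu) hξ0 (by
      rw [map_smul, LinearMap.smul_apply, h1]; simpa using ht0)
  obtain ⟨x, hx, hxa⟩ := σ.exists_g (Φ := Φ) (Ψ := Ψ) (u := (t - 1)⁻¹ • u) (ξ := ξ)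
    (Submodule.smul_mem _ _ hu) hξ (by
      rw [map_smul, LinearMap.smul_apply, h0]; simp)
  have cd : d ∈ Cen (σ.G Φ' Ψ') (σ.G Φ Ψ) := mem_Cen hd fun k hk =>
    comm_g hda hk (Submodule.smul_mem _ _ hu') hξ0'
  have cx : x ∈ Cen (σ.G Φ' Ψ') (σ.G Φ Ψ) := mem_Cen hx fun k hk =>
    comm_g hxa hk (Submodule.smul_mem _ _ hu') hξ'
  refine ⟨d * x * d⁻¹ * x⁻¹, Subgroup.commutator_mem_commutator cd cx, ?_⟩
  have key : ∀ a, σ.ra d (σ.ra x a) = σ.ra x (σ.ra d a) + σ.pr a ξ • u := by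
    intro a
    rw [hxa, hda, hda, hxa]
    simp only [map_add, map_smul, LinearMap.add_apply, LinearMap.smul_apply, h0, h1, smul_eq_mul,
      mul_zero, add_zero, mul_one]
    have e : (t - 1)⁻¹ * (t - 1) = 1 := inv_mul_cancel₀ ht
    set s := (t - 1)⁻¹
    simp only [smul_smul, add_mul, add_smul]
    have e2 : σ.pr a ξ * s * (t - 1) = σ.pr a ξ := by rw [mul_assoc, e, mul_one]
    rw [e2]
    abel
  have fd : ∀ a, σ.pr (σ.ra d a) ξ = σ.pr a ξ := by
    intro a
    rw [hda]
    simp [h0]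
  have fx : ∀ a, σ.pr (σ.ra x a) ξ = σ.pr a ξ := by
    intro a
    rw [hxa]
    simp [h0]
  intro a
  rw [ra_mul, ra_mul, ra_mul, key, ra_ra_inv, ra_ra_inv, ← fd, ra_ra_inv,
    ← fx, ra_ra_inv]

/-- The swap. -/
lemma exists_tau {t : F} (ht0 : t ≠ 0) (ht1 : t ≠ 1) (D : Dat σ) {v : σ.A} {η : σ.B}
    (hv : v ∈ σ.P D.Ψ) (hη : η ∈ σ.N D.Φ) (h1 : σ.pr v D.fs = 0) (h2 : σ.pr D.f η = 0)
    (h3 : σ.pr v η = 1) :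
    ∃ τ ∈ ⁅Cen (σ.G ((D.Φ ⊔ ln v) ⊔ ln D.f) ((D.Ψ ⊔ ln η) ⊔ ln D.fs)) D.H',
      Cen (σ.G ((D.Φ ⊔ ln v) ⊔ ln D.f) ((D.Ψ ⊔ ln η) ⊔ ln D.fs)) D.H'⁆,
      ∀ x ∈ σ.G (D.Φ ⊔ ln v) (D.Ψ ⊔ ln η), τ * x * τ⁻¹ ∈ D.H := by
  obtain ⟨x, hx, hxa⟩ := transv_comm ht0 ht1 (Φ := D.Φ) (Φ' := (D.Φ ⊔ ln v) ⊔ ln D.f)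
    (Ψ := D.Ψ) (Ψ' := (D.Ψ ⊔ ln η) ⊔ ln D.fs) (u := v) (ξ := D.fs) (ξ0 := η)
    hv (Submodule.mem_sup_left (Submodule.mem_sup_right (self_ln _))) D.hs
    (Submodule.mem_sup_right (self_ln _)) hη
    (Submodule.mem_sup_left (Submodule.mem_sup_right (self_ln _))) h1 h3
  obtain ⟨y, hy, hya⟩ := transv_comm ht0 ht1 (Φ := D.Φ) (Φ' := (D.Φ ⊔ ln v) ⊔ ln D.f)
    (Ψ := D.Ψ) (Ψ' := (D.Ψ ⊔ ln η) ⊔ ln D.fs) (u := D.f) (ξ := η) (ξ0 := D.fs)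
    D.hf (Submodule.mem_sup_right (self_ln _)) hη
    (Submodule.mem_sup_left (Submodule.mem_sup_right (self_ln _))) D.hs
    (Submodule.mem_sup_right (self_ln _)) h2 D.h1
  have hyi : ∀ a, σ.ra y⁻¹ a = a - σ.pr a η • D.f := by
    intro a
    have : a = σ.ra y (a - σ.pr a η • D.f) := by
      rw [hya]
      simp [h2]
    conv_lhs => rw [this, ra_inv_ra]
  have hτm := mul_mem (mul_mem hx (inv_mem hy)) hx
  refine ⟨x * y⁻¹ * x, hτm, ?_⟩
  have hH' : x * y⁻¹ * x ∈ D.H' := (Subgroup.commutator_le_self _ hτm).1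
  have hτ : ∀ a, σ.ra (x * y⁻¹ * x) a = a + (σ.pr a D.fs - σ.pr a η) • v
      - (σ.pr a η + σ.pr a D.fs) • D.f := by
    intro a
    rw [ra_mul, ra_mul, hxa, hyi, hxa]
    simp only [map_add, map_sub, map_smul, LinearMap.add_apply, LinearMap.sub_apply,
      LinearMap.smul_apply, h1, h3, D.h1, smul_eq_mul, mul_zero, add_zero, mul_one]
    module
  set τ := x * y⁻¹ * x
  have hf : σ.ra τ⁻¹ D.f = - v := by
    have : D.f = σ.ra τ (- v) := by
      rw [hτ]
      simp [h1, h3]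
    conv_lhs => rw [this, ra_inv_ra]
  have hfs : σ.rb τ⁻¹ D.fs = - η := by
    rw [← sub_eq_zero]
    apply σ.ndB
    intro a
    rw [map_sub, ← pr_ra, hτ]
    simp [h1, D.h1]
  refine conj_G τ (fun a ha => ?_) (fun b hb => ?_)
  · obtain ⟨s, hs⟩ := (mem_sup_ln).1 ha
    rw [← sub_add_cancel a (s • D.f), map_add, map_smul, hf, inv_fix hH' hs]
    exact Submodule.add_mem _ (Submodule.mem_sup_left hs)
      (Submodule.smul_mem _ _ (Submodule.neg_mem _ (Submodule.mem_sup_right (self_ln _))))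
  · obtain ⟨s, hs⟩ := (mem_sup_ln).1 hb
    rw [← sub_add_cancel b (s • D.fs), map_add, map_smul, hfs, (inv_mem hH').2 _ hs]
    exact Submodule.add_mem _ (Submodule.mem_sup_left hs)
      (Submodule.smul_mem _ _ (Submodule.neg_mem _ (Submodule.mem_sup_right (self_ln _))))

lemma van_step {t : F} (ht0 : t ≠ 0) (ht1 : t ≠ 1) (n : ℕ)
    (hV : ∀ q < n, Van σ q) (hS : ∀ q ≤ n, SurS σ q) : Van σ n := by
  intro D hr
  rcases Nat.eq_zero_or_pos n with rfl | hn
  · exact VanP_zero _ _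
  obtain ⟨m, rfl⟩ : ∃ m, n = m + 1 := ⟨n - 1, by omega⟩
  intro h z hz
  have rke := fun e : σ.A => σ.rk_add hr e
  have RK := RK_of D 0 (m + 1) (fun e _ => rke e)
  obtain ⟨v0, hv0, hv1, hv2⟩ := σ.rk_two (σ.rk_le (m := 2) (by omega) hr) D.fs
  have hcX : v0 ∈ D.X 0 := ⟨⟨by rw [sub_zero]; exact hv0, hv2⟩, hv1⟩
  obtain ⟨e, he, hez⟩ := (D.T 0).devis1 ⟨v0, hcX⟩ (m + 1)
    (hZ D 0 ht0 ht1 (m + 1) RK hV (fun q hq => hS q hq.le)) z hz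
  have hd := D.dec 0 (p := 1) (fun y => σ.rk_one (σ.rk_le (n := m + 1 - 0) (by omega)
    (RK 0 _ (D.vx'_all 0 y)))) (m + 1) e he
  have hRR : z ∈ (ptP D.H D.H' h).Rel.bdy (m + 1) := by
    rw [← hez]
    have hle : AddSubgroup.closure {x | ∃ y : Tup (D.T 0).X 1,
      ∃ w ∈ (ptP (D.st 0 y).H (D.st 0 y).H' (D.st 0 y).hle).Rel.cyc (m + 1),
        x = (D.i 0 y).rel.f (m + 1) w} ≤
      ((ptP D.H D.H' h).Rel.bdy (m + 1)).comap (((D.T 0).toPt 1).rel.f (m + 1)) := by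
      rw [AddSubgroup.closure_le]
      rintro _ ⟨y, w, hw, rfl⟩
      have hy := D.vx_all 0 y
      have hk := D.ker 0 y
      set v := (D.vx 0 y).hd with hv
      have hy1 : v ∈ D.X 0 := hy.1
      have hvP : v ∈ σ.P D.Ψ := by have := hy1.1.1; rwa [sub_zero] at this
      have hSp : σ.Spn D.Φ (D.vx 0 y) = D.Φ ⊔ ln v := rfl
      have hvn : v ∉ D.Φ ⊔ ln D.f := by
        rw [mem_sup_ln]
        rintro ⟨s, hs⟩
        have h2 : σ.pr (v - s • D.f) D.fs = 0 := D.hs _ hs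
        rw [map_sub, LinearMap.sub_apply, map_smul, LinearMap.smul_apply, hy1.2, D.h1] at h2
        have h3 : s = 0 := by simpa using h2
        rw [h3, zero_smul, sub_zero] at hs
        exact hy1.1.2 hs
      obtain ⟨η, hη, hvη⟩ := σ.sep1 hvn
      obtain ⟨hη1, hη2⟩ := (σ.mem_N_sup).1 hη
      have hnot : η ∉ D.Ψ ⊔ σ.N (D.Φ ⊔ ln v) := by
        intro h
        obtain ⟨b1, hb1, b2, hb2, e⟩ := Submodule.mem_sup.1 h
        rw [← e, map_add, hvP _ hb1, hb2 _ (Submodule.mem_sup_right (self_ln _)), add_zero] at hvη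
        exact zero_ne_one hvη
      obtain ⟨τ, hτ, hτc⟩ := exists_tau ht0 ht1 D hvP hη1 hy1.2 hη2 hvη
      have m1 : σ.G ((D.Φ ⊔ ln v) ⊔ ln D.f) ((D.Ψ ⊔ ln η) ⊔ ln D.fs) ≤ (D.st 0 y).H :=
        σ.G_mono le_rfl (sup_le_sup_right le_sup_left _)
      have m1' : σ.G (D.Φ ⊔ ln v) (D.Ψ ⊔ ln η) ≤ (D.st 0 y).H' :=
        σ.G_mono le_rfl le_sup_left
      have k0 : σ.G ((D.Φ ⊔ ln v) ⊔ ln D.f) ((D.Ψ ⊔ ln η) ⊔ ln D.fs) ≤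
        σ.G (D.Φ ⊔ ln v) (D.Ψ ⊔ ln η) := σ.G_mono le_sup_left le_sup_left
      have m2 : (D.st 0 y).H ≤ D.H := σ.G_mono (sup_le_sup_right le_sup_left _) le_rfl
      have m2' : (D.st 0 y).H' ≤ D.H' := σ.G_mono le_sup_left le_rfl
      obtain ⟨z0, hz0, hzz⟩ := hS (m + 1) le_rfl (D.st 0 y) (rke v) η hnot hη2 k0 (D.st 0 y).hle
        m1 m1' w hw
      have e1 := PMor.comp_eq (D.i 0 y) ((D.T 0).toPt 1) (ptI (D.st 0 y).hle h m2 m2')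
        (by simp [XP.toPt]) (fun y => rfl) (fun y => rfl) (m + 1) w
      change ((D.T 0).toPt 1).rel.f (m + 1) ((D.i 0 y).rel.f (m + 1) w) ∈ (ptP D.H D.H' h).Rel.bdy (m + 1)
      rw [e1]
      have e2 := PMor.comp_eq (ptI k0 (D.st 0 y).hle m1 m1') (ptI (D.st 0 y).hle h m2 m2')
        (ptI k0 h (m1.trans m2) (m1'.trans m2')) (by simp) (fun y => rfl) (fun y => rfl) (m + 1) z0
      have e3 := tau_kill k0 h (m1.trans m2) (m1'.trans m2') τ hτ hτc m z0 hz0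
      rw [← e2] at e3
      have e4 := (ptI (D.st 0 y).hle h m2 m2').rel.bdy hzz
      rw [map_sub] at e4
      exact mem_of_sub _ e4 e3
    exact hle hd
  exact hRR

/-- The main stability theorem in abstract form. -/
theorem main {t : F} (ht0 : t ≠ 0) (ht1 : t ≠ 1) (n : ℕ) :
    ∀ σ : Stg F 𝔾, Van σ n ∧ Sur σ n := by
  induction n using Nat.strong_induction_on with
  | _ n ih =>
    have hS : ∀ σ : Stg F 𝔾, Sur σ n := fun σ => sur_step ht0 ht1 n (fun q hq => (ih q hq σ).1)
      (fun q hq => Sur.star σ (ih q hq σ.flip).2)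
    intro σ
    refine ⟨van_step ht0 ht1 n (fun q hq => (ih q hq σ).1) (fun q hq => ?_), hS σ⟩
    rcases Nat.lt_or_eq_of_le hq with h | rfl
    · exact Sur.star σ (ih q h σ.flip).2
    · exact Sur.star σ (hS σ.flip)
end
end FSH

namespace FSH
open FreeAbelianGroup (of)
open GS
section
variable {Γ Γ' : Type} [Group Γ] [Group Γ']

/-- Homogeneous tuple with given starting point and increments. -/
def path : ∀ (n : ℕ), Γ → (Fin n → Γ) → Tup Γ (n + 1)
  | 0, x, _ => Tup.cons x Tup.nil
  | n + 1, x, g => Tup.cons x (path n (x * g 0) (Fin.tail g))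

/-- Increments of a tuple. -/
def diff : ∀ (n : ℕ), Tup Γ (n + 1) → (Fin n → Γ)
  | 0, _ => Fin.elim0
  | n + 1, t => Fin.cons (t.hd⁻¹ * t.tl.hd) (diff n t.tl)

lemma path_hd (n : ℕ) (x : Γ) (g : Fin n → Γ) : (path n x g).hd = x := by
  cases n <;> rfl

lemma diff_path (n : ℕ) (x : Γ) (g : Fin n → Γ) : diff n (path n x g) = g := by
  induction n generalizing x with
  | zero => exact Subsingleton.elim _ _
  | succ n ih =>
    change Fin.cons (x⁻¹ * (path n (x * g 0) (Fin.tail g)).hd)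
      (diff n (path n (x * g 0) (Fin.tail g))) = g
    rw [path_hd, ih, inv_mul_cancel_left]
    exact Fin.cons_self_tail g

lemma path_diff (n : ℕ) (t : Tup Γ (n + 1)) : path n t.hd (diff n t) = t := by
  induction n with
  | zero => rfl
  | succ n ih =>
    change Tup.cons t.hd (path n (t.hd * (t.hd⁻¹ * t.tl.hd)) (Fin.tail (Fin.cons (t.hd⁻¹ * t.tl.hd) (diff n t.tl) : Fin (n + 1) → Γ))) = t
    rw [mul_inv_cancel_left, Fin.tail_cons, ih]
    rfl

lemma smul_path (n : ℕ) (γ x : Γ) (g : Fin n → Γ) : γ • path n x g = path n (γ * x) g := by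
  induction n generalizing x with
  | zero => rfl
  | succ n ih =>
    change γ • Tup.cons x (path n (x * g 0) (Fin.tail g)) = Tup.cons (γ * x) _
    rw [Tup.smul_cons, ih, mul_assoc]
    rfl

lemma map_path (f : Γ →* Γ') (n : ℕ) (x : Γ) (g : Fin n → Γ) :
    Tup.map f (path n x g) = path n (f x) (f ∘ g) := by
  induction n generalizing x with
  | zero => rfl
  | succ n ih =>
    change Tup.map f (Tup.cons x (path n (x * g 0) (Fin.tail g))) =
      Tup.cons (f x) (path n (f x * f (g 0)) (Fin.tail (f ∘ g)))
    rw [Tup.map_cons, ih, map_mul]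
    rfl

lemma contract_zero {n : ℕ} (g : Fin (n + 2) → Γ) :
    Fin.contractNth 0 (· * ·) g = Fin.cons (g 0 * g 1) (Fin.tail (Fin.tail g)) := by
  funext k
  refine Fin.cases ?_ (fun k => ?_) k
  · simp [Fin.contractNth]
  · simp [Fin.contractNth, Fin.tail]

lemma contract_succ {n : ℕ} (j : Fin (n + 1)) (g : Fin (n + 2) → Γ) :
    Fin.contractNth j.succ (· * ·) g = Fin.cons (g 0) (Fin.contractNth j (· * ·) (Fin.tail g)) := by
  funext k
  refine Fin.cases ?_ (fun k => ?_) k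
  · simp [Fin.contractNth]
  · simp [Fin.contractNth, Fin.tail]

lemma bd_path (n : ℕ) (x : Γ) (g : Fin (n + 1) → Γ) :
    bd (n + 1) (of (path (n + 1) x g)) = of (path n (x * g 0) (Fin.tail g)) +
      ∑ j : Fin (n + 1), ((-1 : ℤ) ^ ((j : ℕ) + 1)) • of (path n x (Fin.contractNth j (· * ·) g)) := by
  induction n generalizing x with
  | zero =>
    change bd 1 (of (Tup.cons x (path 0 (x * g 0) (Fin.tail g)))) = _
    rw [bd_succ]
    change _ - cn x (bd 0 (of (Tup.cons (x * g 0) Tup.nil))) = _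
    rw [bd_zero]
    simp [cn, path]
    abel
  | succ n ih =>
    change bd (n + 2) (of (Tup.cons x (path (n + 1) (x * g 0) (Fin.tail g)))) = _
    rw [bd_succ, ih]
    conv_rhs => rw [Fin.sum_univ_succ, contract_zero]
    simp only [contract_succ]
    have e0 : ∀ (a : Γ) (b : Fin n → Γ), of (path (n + 1) x (Fin.cons a b : Fin (n + 1) → Γ)) =
        cn x (of (path n (x * a) b)) := fun a b => by
      rw [cn, push_of]; rfl
    simp only [e0, map_add, map_sum, map_zsmul]
    simp only [Fin.val_zero, zero_add, pow_one, Fin.val_succ, neg_smul, one_smul]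
    rw [sub_eq_add_neg, neg_add, ← Finset.sum_neg_distrib]
    congr 2
    · rw [← mul_assoc]; rfl
    · refine Finset.sum_congr rfl fun j _ => ?_
      rw [pow_succ, ← neg_smul]
      congr 1
      ring
end
end FSH

namespace FSH
open FreeAbelianGroup (of)
open GS
open GroupHomologyBar (chains chainsMap cycles boundaries Homology inducedMap cyclesMap d_single
  chainsMap_single)
section
variable {Γ Γ' G : Type} [Group Γ] [Group Γ'] [Group G]

lemma ceq {n : ℕ} {M : Type} [AddCommGroup M] (f g : chains Γ ℤ n →+ M)
    (h : ∀ t, f (Finsupp.single t 1) = g (Finsupp.single t 1)) (x : chains Γ ℤ n) : f x = g x := by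
  have : f = g := by
    apply Finsupp.addHom_ext
    intro t a
    have e : Finsupp.single t a = a • (Finsupp.single t 1 : chains Γ ℤ n) := by simp
    rw [e, map_zsmul, map_zsmul, h]
  rw [this]

/-- From the inhomogeneous to the homogeneous complex. -/
noncomputable def kap (φ : Γ →* G) (H : Subgroup G) (n : ℕ) :
    chains Γ ℤ n →+ Z ((pt H).Q (n + 1)) :=
  Finsupp.liftAddHom fun g => zmultiplesHom _ ((pt H).B (of (path n 1 (φ ∘ g))) (of PUnit.unit))

lemma kap_single (φ : Γ →* G) (H : Subgroup G) (n : ℕ) (g : Fin n → Γ) :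
    kap φ H n (Finsupp.single g 1) = (pt H).B (of (path n 1 (φ ∘ g))) (of PUnit.unit) := by
  simp [kap]

lemma B_pt_smul {H : Subgroup G} {n : ℕ} (h : G) (hh : h ∈ H) (t : Tup G n) :
    (pt H).B (of (h • t)) (of PUnit.unit) = (pt H).B (of t) (of PUnit.unit) := by
  rw [B_of, B_of]
  exact congrArg of ((pt H).q_smul ⟨h, hh⟩ t PUnit.unit)

lemma kap_path {φ : Γ →* G} {H : Subgroup G} (n : ℕ) (x : G) (hx : x ∈ H) (g : Fin n → Γ) :
    (pt H).B (of (path n x (φ ∘ g))) (of PUnit.unit) = kap φ H n (Finsupp.single g 1) := by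
  rw [kap_single, ← B_pt_smul x hx (path n 1 (φ ∘ g)), smul_path, mul_one]

lemma comp_contract (φ : Γ →* G) {n : ℕ} (j : Fin (n + 1)) (g : Fin (n + 1) → Γ) :
    φ ∘ Fin.contractNth j (· * ·) g = Fin.contractNth j (· * ·) (φ ∘ g) := by
  funext k
  simp only [Function.comp_apply, Fin.contractNth]
  split_ifs <;> simp

lemma kap_d {φ : Γ →* G} {H : Subgroup G} (hφ : ∀ γ, φ γ ∈ H) (n : ℕ) (x : chains Γ ℤ (n + 1)) :
    kap φ H n (GroupHomologyBar.d Γ ℤ n x) = (pt H).dS (n + 1) (kap φ H (n + 1) x) := by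
  refine ceq ((kap φ H n).comp (GroupHomologyBar.d Γ ℤ n).toAddMonoidHom)
    (((pt H).dS (n + 1)).comp (kap φ H (n + 1))) (fun g => ?_) x
  change kap φ H n (GroupHomologyBar.d Γ ℤ n _) = (pt H).dS (n + 1) (kap φ H (n + 1) _)
  rw [d_single, kap_single, dS_B, bd_path]
  simp only [map_add, map_sum, map_zsmul, AddMonoidHom.add_apply, AddMonoidHom.finsetSum_apply,
    AddMonoidHom.zsmul_apply, ← comp_contract]
  congr 1
  · rw [← kap_path n (φ (g 0)) (hφ _), one_mul]
    rfl
  · refine Finset.sum_congr rfl fun j _ => ?_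
    rw [kap_single]

lemma kap_sq {φ : Γ →* G} {φ' : Γ' →* G} {ψ : Γ →* Γ'} (hc : ∀ γ, φ' (ψ γ) = φ γ)
    {H H' : Subgroup G} (h : H ≤ H') (n : ℕ) (x : chains Γ ℤ n) :
    (ptP H H' h).φ.ch.f n (kap φ H n x) = kap φ' H' n (chainsMap ℤ ψ n x) := by
  refine ceq (((ptP H H' h).φ.ch.f n).comp (kap φ H n))
    ((kap φ' H' n).comp (chainsMap ℤ ψ n).toAddMonoidHom) (fun g => ?_) x
  change (ptP H H' h).φ.op (n + 1) (kap φ H n _) = kap φ' H' n (chainsMap ℤ ψ n _)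
  rw [chainsMap_single, kap_single, kap_single, Mor.op_B]
  have : φ' ∘ (ψ ∘ g) = φ ∘ g := by funext i; exact hc _
  rw [this]
  simp

/-- An equivariant retraction onto the image. -/
structure Ret (φ : Γ →* G) (H : Subgroup G) where
  ρ : G → Γ
  mul : ∀ γ s, ρ (φ γ * s) = γ * ρ s
  one : ∀ γ, ρ (φ γ) = γ
  mem : ∀ γ, φ γ ∈ H
  ex : ∀ h ∈ H, ∃ γ, φ γ = h

lemma exists_ret (φ : Γ →* G) (hφ : Function.Injective φ) : Nonempty (Ret φ φ.range) := by
  obtain ⟨ρ, h1, h2⟩ := exists_rho φ.range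
  let e := MonoidHom.ofInjective hφ
  have he : ∀ γ, (e γ : G) = φ γ := fun γ => rfl
  refine ⟨⟨fun s => e.symm (ρ s), fun γ s => ?_, fun γ => ?_, fun γ => ⟨γ, rfl⟩, fun h hh => hh⟩⟩
  · rw [← he, h1, map_mul, MulEquiv.symm_apply_apply]
  · rw [← he, h2, MulEquiv.symm_apply_apply]

variable {φ : Γ →* G} {H : Subgroup G}

lemma diff_smul (n : ℕ) (γ : Γ) (t : Tup Γ (n + 1)) : diff n (γ • t) = diff n t := by
  conv_lhs => rw [← path_diff n t, smul_path, diff_path]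

/-- From the homogeneous to the inhomogeneous complex. -/
noncomputable def Ret.r (R : Ret φ H) (n : ℕ) : Z ((pt H).Q (n + 1)) →+ chains Γ ℤ n :=
  (pt H).out (fun t _ => Finsupp.single (diff n (Tup.map R.ρ t)) 1) (by
    intro h t _
    obtain ⟨γ, hγ⟩ := R.ex h.1 h.2
    rw [Tup.map_smul R.ρ h γ (fun e => by
      change R.ρ (h.1 * e) = γ * _
      rw [← hγ, R.mul]), diff_smul])

lemma Ret.r_B (R : Ret φ H) (n : ℕ) (t : Tup G (n + 1)) :
    R.r n ((pt H).B (of t) (of PUnit.unit)) = Finsupp.single (diff n (Tup.map R.ρ t)) 1 := by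
  rw [B_of]
  exact out_of _ _ _ _ _

/-- Auxiliary linear form of `Ret.r`. -/
noncomputable def dl (n : ℕ) : Z (Tup Γ (n + 1)) →+ chains Γ ℤ n :=
  lin fun t => Finsupp.single (diff n t) 1

lemma Ret.r_B2 (R : Ret φ H) (n : ℕ) (u : Z (Tup G (n + 1))) :
    R.r n ((pt H).B u (of PUnit.unit)) = dl n (push (Tup.map R.ρ) u) := by
  refine heq ((R.r n).comp ((pt H).B.flip (of PUnit.unit))) ((dl n).comp (push (Tup.map R.ρ)))
    (fun t => ?_) u
  rw [AddMonoidHom.comp_apply, AddMonoidHom.comp_apply, AddMonoidHom.flip_apply,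
    R.r_B, push_of, dl, lin_of]

lemma dl_bd (n : ℕ) (t : Tup Γ (n + 2)) :
    dl n (bd (n + 1) (of t)) = GroupHomologyBar.d Γ ℤ n (dl (n + 1) (of t)) := by
  rw [← path_diff (n + 1) t, bd_path]
  simp only [dl, map_add, map_sum, map_zsmul, lin_of, diff_path, d_single]

lemma Ret.r_d (R : Ret φ H) (n : ℕ) (x : Z ((pt H).Q (n + 2))) :
    R.r n ((pt H).dS (n + 1) x) = GroupHomologyBar.d Γ ℤ n (R.r (n + 1) x) := by
  refine Qeq ((R.r n).comp ((pt H).dS (n + 1)))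
    ((GroupHomologyBar.d Γ ℤ n).toAddMonoidHom.comp (R.r (n + 1))) (fun t y => ?_) x
  change R.r n ((pt H).dS (n + 1) _) = GroupHomologyBar.d Γ ℤ n (R.r (n + 1) _)
  cases y
  rw [dS_B, R.r_B2, R.r_B2, push_of, ← dl_bd, ← bd_map, push_of]

lemma Ret.r_kap (R : Ret φ H) (n : ℕ) (x : chains Γ ℤ n) : R.r n (kap φ H n x) = x := by
  refine ceq ((R.r n).comp (kap φ H n)) (AddMonoidHom.id _) (fun g => ?_) x
  change R.r n (kap φ H n _) = _
  rw [kap_single, R.r_B]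
  have : Tup.map R.ρ (path n 1 (φ ∘ g)) = path n 1 g := by
    rw [← map_one φ, ← map_path, Tup.map_map, Tup.map_id _ (fun e => R.one e)]
  rw [this, diff_path]
  rfl

lemma Ret.kap_r (R : Ret φ H) (n : ℕ) (t : Tup G (n + 1)) :
    kap φ H n (R.r n ((pt H).B (of t) (of PUnit.unit))) =
      (pt H).B (of (Tup.map (fun s => φ (R.ρ s)) t)) (of PUnit.unit) := by
  rw [R.r_B, ← kap_path n (φ (Tup.map R.ρ t).hd) (R.mem _), ← map_path, path_diff, Tup.map_map]

lemma Ret.smul (R : Ret φ H) (h : H) (e : G) : φ (R.ρ (h • e)) = h • φ (R.ρ e) := by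
  obtain ⟨γ, hγ⟩ := R.ex h.1 h.2
  rw [Subgroup.smul_def, Subgroup.smul_def, smul_eq_mul, smul_eq_mul, ← hγ, R.mul, map_mul]

/-- The homotopy. -/
noncomputable def Ret.h (R : Ret φ H) (n : ℕ) : Z ((pt H).Q n) →+ Z ((pt H).Q (n + 1)) :=
  op (pt H) (pt H) id (pr id (fun s => φ (R.ρ s)) n) (AddMonoidHom.id _)
    (fun h t => pr_smul id (fun s => φ (R.ρ s)) h h (fun _ => rfl) (R.smul h) n t)
    (fun h y => by simp)

lemma Ret.hty (R : Ret φ H) (n : ℕ) (x : Z ((pt H).Q (n + 1))) :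
    (pt H).dS (n + 1) (R.h (n + 1) x) + R.h n ((pt H).dS n x) = kap φ H n (R.r n x) - x := by
  refine Qeq (((pt H).dS (n + 1)).comp (R.h (n + 1)) + (R.h n).comp ((pt H).dS n))
    ((kap φ H n).comp (R.r n) - AddMonoidHom.id _) (fun t y => ?_) x
  cases y
  change (pt H).dS (n + 1) (R.h (n + 1) _) + R.h n ((pt H).dS n _) = kap φ H n (R.r n _) - _
  rw [R.kap_r, dS_B, Ret.h, Ret.h, op_B, op_B, dS_B]
  change (pt H).B _ (of PUnit.unit) + (pt H).B _ (of PUnit.unit) = _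
  rw [← AddMonoidHom.add_apply, ← map_add, bd_pr, push_of, push_of, Tup.map_id id (fun _ => rfl)]
  simp

lemma Ret.kr_bdy (R : Ret φ H) (n : ℕ) (x : (pt H).Ch.X n) (hx : x ∈ (pt H).Ch.cyc n) :
    kap φ H n (R.r n x) - x ∈ (pt H).Ch.bdy n := by
  refine ⟨R.h (n + 1) x, ?_⟩
  rw [← R.hty]
  have : R.h n ((pt H).dS n x) = 0 := by
    cases n with
    | zero =>
      refine Qeq ((R.h 0).comp ((pt H).dS 0)) 0 (fun t y => ?_) x
      change R.h 0 ((pt H).dS 0 _) = 0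
      rw [dS_B, Ret.h, op_B, pr_zero]
      simp
    | succ n =>
      have : (pt H).dS (n + 1) x = 0 := hx
      rw [this, map_zero]
  rw [this, add_zero]
end
end FSH

namespace FSH
open FreeAbelianGroup (of)
open GS
open GroupHomologyBar (chains chainsMap cycles boundaries Homology inducedMap cyclesMap d_single
  chainsMap_single)
section
variable {Γ Γ' G : Type} [Group Γ] [Group Γ'] [Group G]

lemma cone_surj {A B : Cx} (φ : CHom A B) (n : ℕ)
    (hv : ∀ z ∈ (cone φ).cyc n, z ∈ (cone φ).bdy n) (b : B.X n) (hb : b ∈ B.cyc n) :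
    ∃ a ∈ A.cyc n, b - φ.f n a ∈ B.bdy n := by
  cases n with
  | zero =>
    obtain ⟨y, hy⟩ := hv (cz φ b) trivial
    obtain ⟨b', a, rfl⟩ := cp_surj φ y
    have : B.d 0 b' - φ.f 0 a = b := hy
    refine ⟨-a, trivial, b', ?_⟩
    rw [← this, map_neg]
    abel
  | succ n =>
    obtain ⟨y, hy⟩ := hv (cp φ b 0) ((cone_cyc φ b 0).2 ⟨by rw [map_zero]; exact hb, zero_mem _⟩)
    obtain ⟨b', a, rfl⟩ := cp_surj φ y
    rw [cone_d_succ, cp_inj] at hy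
    refine ⟨-a, ?_, b', ?_⟩
    · rw [Cx.mem_cyc_succ, map_neg]; exact hy.2
    · rw [← hy.1, map_neg]
      abel

lemma cone_inj {A B : Cx} (φ : CHom A B) (n : ℕ)
    (hv : ∀ z ∈ (cone φ).cyc (n + 1), z ∈ (cone φ).bdy (n + 1)) (a : A.X n) (ha : a ∈ A.cyc n)
    (hb : φ.f n a ∈ B.bdy n) : a ∈ A.bdy n := by
  obtain ⟨b, hb⟩ := hb
  obtain ⟨y, hy⟩ := hv (cp φ b a) ((cone_cyc φ b a).2 ⟨hb, ha⟩)
  obtain ⟨b', a', rfl⟩ := cp_surj φ y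
  rw [cone_d_succ, cp_inj] at hy
  exact ⟨-a', by rw [map_neg]; exact hy.2⟩

lemma Ret.kap_cyc {φ : Γ →* G} {H : Subgroup G} (R : Ret φ H) {n : ℕ} {x : chains Γ ℤ n}
    (hx : x ∈ cycles Γ ℤ n) : kap φ H n x ∈ (pt H).Ch.cyc n := by
  cases n with
  | zero => trivial
  | succ n =>
    have h : GroupHomologyBar.d Γ ℤ n x = 0 := hx
    have := kap_d R.mem n x
    rw [h, map_zero] at this
    exact this.symm

lemma Ret.r_cyc {φ : Γ →* G} {H : Subgroup G} (R : Ret φ H) {n : ℕ} {x : (pt H).Ch.X n}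
    (hx : x ∈ (pt H).Ch.cyc n) : R.r n x ∈ cycles Γ ℤ n := by
  cases n with
  | zero => trivial
  | succ n =>
    have h : (pt H).dS (n + 1) x = 0 := hx
    have := R.r_d n x
    rw [h, map_zero] at this
    exact this.symm

lemma Ret.r_bdy {φ : Γ →* G} {H : Subgroup G} (R : Ret φ H) {n : ℕ} {x : (pt H).Ch.X n}
    (hx : x ∈ (pt H).Ch.bdy n) : R.r n x ∈ LinearMap.range (GroupHomologyBar.d Γ ℤ n) := by
  obtain ⟨y, rfl⟩ := hx
  exact ⟨R.r (n + 1) y, (R.r_d n y).symm⟩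

lemma Ret.kap_bdy {φ : Γ →* G} {H : Subgroup G} (R : Ret φ H) {n : ℕ} {x : chains Γ ℤ n}
    (hx : x ∈ LinearMap.range (GroupHomologyBar.d Γ ℤ n)) : kap φ H n x ∈ (pt H).Ch.bdy n := by
  obtain ⟨y, rfl⟩ := hx
  exact ⟨kap φ H (n + 1) y, (kap_d R.mem n y).symm⟩

variable {φ : Γ →* G} {φ' : Γ' →* G} {ψ : Γ →* Γ'} {H H' : Subgroup G}

lemma induced_surj (R : Ret φ H) (R' : Ret φ' H') (hc : ∀ γ, φ' (ψ γ) = φ γ)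
    (h : H ≤ H') (n : ℕ) (hv : VanP H H' n) : Function.Surjective (inducedMap ℤ ψ n) := by
  intro c
  obtain ⟨⟨z, hz⟩, rfl⟩ := Submodule.Quotient.mk_surjective _ c
  obtain ⟨a, ha, hab⟩ := cone_surj (ptP H H' h).φ.ch n (hv h) (kap φ' H' n z) (R'.kap_cyc hz)
  refine ⟨Submodule.Quotient.mk ⟨R.r n a, R.r_cyc ha⟩, ?_⟩
  change Submodule.Quotient.mk (cyclesMap ℤ ψ n ⟨R.r n a, R.r_cyc ha⟩) = _
  rw [Submodule.Quotient.eq]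
  change chainsMap ℤ ψ n (R.r n a) - z ∈ LinearMap.range (GroupHomologyBar.d Γ' ℤ n)
  have h1 := (ptP H H' h).φ.ch.bdy (R.kr_bdy n a ha)
  have e : chainsMap ℤ ψ n (R.r n a) - z =
      R'.r n ((ptP H H' h).φ.ch.f n (kap φ H n (R.r n a) - a)
        - (kap φ' H' n z - (ptP H H' h).φ.ch.f n a)) := by
    simp only [map_sub]
    rw [kap_sq hc h, R'.r_kap, R'.r_kap]
    abel
  rw [e]
  exact R'.r_bdy (sub_mem h1 hab)

lemma induced_inj (R : Ret φ H) (R' : Ret φ' H') (hc : ∀ γ, φ' (ψ γ) = φ γ)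
    (h : H ≤ H') (n : ℕ) (hv : VanP H H' (n + 1)) : Function.Injective (inducedMap ℤ ψ n) := by
  rw [← LinearMap.ker_eq_bot, LinearMap.ker_eq_bot']
  intro c hc0
  obtain ⟨⟨z, hz⟩, rfl⟩ := Submodule.Quotient.mk_surjective _ c
  have h0 : (Submodule.Quotient.mk (cyclesMap ℤ ψ n ⟨z, hz⟩) : Homology Γ' ℤ n) = 0 := hc0
  rw [Submodule.Quotient.mk_eq_zero] at h0
  have h1 : chainsMap ℤ ψ n z ∈ LinearMap.range (GroupHomologyBar.d Γ' ℤ n) := h0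
  have h2 := R'.kap_bdy h1
  rw [← kap_sq hc h] at h2
  have h3 := R.r_bdy (cone_inj (ptP H H' h).φ.ch n (hv h) _ (R.kap_cyc hz) h2)
  rw [R.r_kap] at h3
  rw [Submodule.Quotient.mk_eq_zero]
  exact h3
end
end FSH

namespace FSH
open FreeAbelianGroup (of)
open GS Stg
section
variable {F W : Type} [Field F] [AddCommGroup W] [Module F W] [FiniteDimensional F W]

/-- The standard pairing of a vector space with its dual. -/
noncomputable def stdS : Stg F (W ≃ₗ[F] W) where
  A := W
  B := Module.Dual F W
  iA := inferInstance
  mA := inferInstance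
  iB := inferInstance
  mB := inferInstance
  pr := Module.Dual.eval F W
  ra := MonoidHom.id _
  rb :=
    { toFun := fun g => g.symm.dualMap
      map_one' := LinearEquiv.ext fun x => rfl
      map_mul' := fun g h => LinearEquiv.ext fun x => rfl }
  inv g a b := by
    change b (g.symm (g a)) = b a
    rw [LinearEquiv.symm_apply_apply]
  sepA Φ v hv := by
    obtain ⟨b, hb, hb2⟩ := Submodule.exists_le_ker_of_notMem hv
    exact ⟨b, fun a ha => hb2 ha, hb⟩
  sepB Ψ v hv := by
    obtain ⟨b, hb, hb2⟩ := Submodule.exists_le_ker_of_notMem hv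
    obtain ⟨a, rfl⟩ := (Module.evalEquiv F W).surjective b
    exact ⟨a, fun b hb => hb2 hb, hb⟩
  surj u ξ h := by
    have h' : 1 + ξ u ≠ 0 := h
    let T : W →ₗ[F] W := LinearMap.id + LinearMap.smulRight ξ u
    have hT : ∀ a, T a = a + ξ a • u := fun a => rfl
    have hi : Function.Injective T := by
      rw [← LinearMap.ker_eq_bot, LinearMap.ker_eq_bot']
      intro a ha
      rw [hT] at ha
      have h2 : ξ a * (1 + ξ u) = 0 := by
        have := congrArg ξ ha
        rw [map_add, map_smul, map_zero, smul_eq_mul] at this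
        rw [← this]; ring
      have h3 : ξ a = 0 := (mul_eq_zero.1 h2).resolve_right h'
      rwa [h3, zero_smul, add_zero] at ha
    exact ⟨LinearEquiv.ofInjectiveEndo T hi, fun a => rfl⟩
  inj g h := LinearEquiv.ext h

lemma std_rk (Φ : Submodule F W) (n : ℕ) (hn : Module.finrank F (W ⧸ Φ) = n) :
    (stdS (F := F) (W := W)).rk Φ ⊥ n := by
  let b := Module.finBasisOfFinrankEq F (W ⧸ Φ) hn
  choose f hf using fun i => Φ.mkQ_surjective (b i)
  refine ⟨f, fun i => (b.coord i).comp Φ.mkQ, fun i c hc => ?_, fun i a ha => ?_, fun i j => ?_⟩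
  · have : c = 0 := hc
    rw [this, map_zero]
  · change b.coord i (Φ.mkQ a) = 0
    have h0 : Φ.mkQ a = 0 := (Submodule.Quotient.mk_eq_zero Φ).2 ha
    exact (congrArg (b.coord i) h0).trans (map_zero _)
  · change b.coord j (Φ.mkQ (f i)) = _
    rw [hf, Module.Basis.coord_apply, Module.Basis.repr_self, Finsupp.single_apply]
end

section
variable {F V : Type} [Field F] [AddCommGroup V] [Module F V] [FiniteDimensional F V]
  (V₀ : Submodule F V)

/-- The data of the stabilisation map. -/
noncomputable def stdD : Dat (stdS (F := F) (W := V × F)) where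
  Φ := V₀.map (LinearMap.inl F V F)
  Ψ := ⊥
  f := ((0, 1) : V × F)
  fs := LinearMap.snd F V F
  hf := fun c hc => by
    have : c = 0 := hc
    rw [this, map_zero]
  hs := by
    rintro _ ⟨v, hv, rfl⟩
    rfl
  h1 := rfl

lemma std_finrank : Module.finrank F ((V × F) ⧸ (V₀.map (LinearMap.inl F V F))) =
    Module.finrank F V - Module.finrank F V₀ + 1 := by
  have h1 := Submodule.finrank_quotient_add_finrank (V₀.map (LinearMap.inl F V F))
  have h2 : Module.finrank F (V₀.map (LinearMap.inl F V F)) = Module.finrank F V₀ :=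
    (Submodule.equivMapOfInjective (LinearMap.inl F V F) LinearMap.inl_injective V₀).symm.finrank_eq
  have h3 := Submodule.finrank_le V₀
  rw [h2, Module.finrank_prod, Module.finrank_self] at h1
  omega

lemma mem_stdH' (g : (V × F) ≃ₗ[F] (V × F)) :
    g ∈ (stdD V₀).H' ↔ g ∈ fixSubgroupProd F V V₀ := by
  change g ∈ (stdS (F := F) (W := V × F)).G _ ⊥ ↔ _
  rw [Stg.mem_G]
  constructor
  · rintro ⟨h, -⟩ v hv
    exact h _ ⟨v, hv, rfl⟩
  · intro h
    refine ⟨?_, fun b hb => ?_⟩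
    · rintro _ ⟨v, hv, rfl⟩
      exact h v hv
    · have : b = 0 := hb
      rw [this, map_zero]

lemma stdH'_eq : (stdD V₀).H' = (fixSubgroupProd F V V₀).subtype.range := by
  ext g
  rw [mem_stdH', Subgroup.range_subtype]

lemma stdH_eq : (stdD V₀).H = ((fixSubgroupProd F V V₀).subtype.comp (fixStab F V V₀)).range := by
  ext g
  change g ∈ (stdS (F := F) (W := V × F)).G (_ ⊔ ln _) (_ ⊔ ln _) ↔ _
  rw [Stg.mem_G_A, Stg.mem_G_B]
  change (g ∈ (stdD V₀).H' ∧ _) ∧ _ ↔ _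
  rw [mem_stdH', Stg.fixB]
  constructor
  · rintro ⟨⟨h1, h2⟩, h3⟩
    have h2 : ∀ x : V × F, (g x).2 = x.2 := h2
    have h3 : g (0, 1) = (0, 1) := h3
    have hs : ∀ x : V × F, (g.symm x).2 = x.2 := fun x => by
      rw [← h2, LinearEquiv.apply_symm_apply]
    let k : V ≃ₗ[F] V := LinearEquiv.ofLinearMap
      ((LinearMap.fst F V F).comp (g.toLinearMap.comp (LinearMap.inl F V F)))
      ((LinearMap.fst F V F).comp (g.symm.toLinearMap.comp (LinearMap.inl F V F)))
      (by
        ext v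
        change (g ((g.symm (v, 0)).1, 0)).1 = v
        have : ((g.symm (v, 0)).1, (0 : F)) = g.symm (v, 0) := Prod.ext rfl (hs (v, 0)).symm
        rw [this, LinearEquiv.apply_symm_apply])
      (by
        ext v
        change (g.symm ((g (v, 0)).1, 0)).1 = v
        have : ((g (v, 0)).1, (0 : F)) = g (v, 0) := Prod.ext rfl (h2 (v, 0)).symm
        rw [this, LinearEquiv.symm_apply_apply])
    have hk : ∀ v, k v = (g (v, 0)).1 := fun v => rfl
    refine ⟨⟨k, fun v hv => by rw [hk, h1 v hv]⟩, ?_⟩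
    refine LinearEquiv.ext ?_
    rintro ⟨v, c⟩
    change (k v, c) = g (v, c)
    have e : ((v, c) : V × F) = (v, 0) + c • (0, 1) := by simp
    refine Prod.ext ?_ (h2 (v, c)).symm
    rw [e, map_add, map_smul, h3, hk]
    simp
  · rintro ⟨γ, rfl⟩
    refine ⟨⟨(fixStab F V V₀ γ).2, fun a => rfl⟩, ?_⟩
    change ((γ : V ≃ₗ[F] V) 0, (1 : F)) = (0, 1)
    rw [map_zero]

lemma fixStab_inj : Function.Injective (fixStab F V V₀) := by
  intro a b h
  apply Subtype.ext
  apply LinearEquiv.ext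
  intro v
  have := congrArg (fun g : fixSubgroupProd F V V₀ => (g.1 (v, 0)).1) h
  exact this

lemma std_van {t : F} (ht0 : t ≠ 0) (ht1 : t ≠ 1) (n : ℕ)
    (hn : n ≤ Module.finrank F V - Module.finrank F V₀) :
    VanP ((fixSubgroupProd F V V₀).subtype.comp (fixStab F V V₀)).range
      (fixSubgroupProd F V V₀).subtype.range n := by
  rw [← stdH_eq, ← stdH'_eq]
  refine (main ht0 ht1 n stdS).1 (stdD V₀) ?_
  exact stdS.rk_le (Nat.succ_le_succ hn) (std_rk _ _ (std_finrank V₀))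

lemma std_le : ((fixSubgroupProd F V V₀).subtype.comp (fixStab F V V₀)).range ≤
    (fixSubgroupProd F V V₀).subtype.range := by
  rintro _ ⟨γ, rfl⟩
  exact ⟨_, rfl⟩

lemma std_surj {t : F} (ht0 : t ≠ 0) (ht1 : t ≠ 1) (n : ℕ)
    (hn : n ≤ Module.finrank F V - Module.finrank F V₀) :
    Function.Surjective (GroupHomologyBar.inducedMap ℤ (fixStab F V V₀) n) := by
  obtain ⟨R⟩ := exists_ret ((fixSubgroupProd F V V₀).subtype.comp (fixStab F V V₀))
    (Subtype.val_injective.comp (fixStab_inj V₀))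
  obtain ⟨R'⟩ := exists_ret (fixSubgroupProd F V V₀).subtype Subtype.val_injective
  exact induced_surj R R' (fun _ => rfl) (std_le V₀) n (std_van V₀ ht0 ht1 n hn)

lemma std_inj {t : F} (ht0 : t ≠ 0) (ht1 : t ≠ 1) (n : ℕ)
    (hn : n + 1 ≤ Module.finrank F V - Module.finrank F V₀) :
    Function.Injective (GroupHomologyBar.inducedMap ℤ (fixStab F V V₀) n) := by
  obtain ⟨R⟩ := exists_ret ((fixSubgroupProd F V V₀).subtype.comp (fixStab F V V₀))
    (Subtype.val_injective.comp (fixStab_inj V₀))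
  obtain ⟨R'⟩ := exists_ret (fixSubgroupProd F V V₀).subtype Subtype.val_injective
  exact induced_inj R R' (fun _ => rfl) (std_le V₀) n (std_van V₀ ht0 ht1 (n + 1) hn)
end
end FSH

open GroupHomologyBar in
/-- Homological stability for the groups `A(V, V₀)` of automorphisms fixing a subspace
`V₀ ≤ V` pointwise, over a field other than `𝔽₂`: the stabilization map
`A(V, V₀) → A(V ⊕ F, V₀)` induces an isomorphism on integral group homology `H_d` for
`d ≤ dim V - dim V₀ - 1` and a surjection for `d = dim V - dim V₀`. -/
theorem fix_subgroup_homology_stability (F : Type) [Field F] (hF : ∃ x : F, x ≠ 0 ∧ x ≠ 1)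
    (V : Type) [AddCommGroup V] [Module F V] [FiniteDimensional F V] (V₀ : Submodule F V) :
    (∀ d : ℕ, d + 1 + Module.finrank F V₀ ≤ Module.finrank F V →
      Function.Bijective (inducedMap ℤ (fixStab F V V₀) d)) ∧
    Function.Surjective
      (inducedMap ℤ (fixStab F V V₀) (Module.finrank F V - Module.finrank F V₀)) := by
  obtain ⟨t, ht0, ht1⟩ := hF
  refine ⟨fun d hd => ⟨FSH.std_inj V₀ ht0 ht1 d (by omega), FSH.std_surj V₀ ht0 ht1 d (by omega)⟩,
    FSH.std_surj V₀ ht0 ht1 _ le_rfl⟩
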